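/- Let G be a bipartite simple graph on an odd number v ≥ 5 of vertices that is almost planar. Then G has at most 3v − 9 edges. -/

import Mathlib

open Set

/-!
The proof is by induction on the number `n` of vertices, with the bound `3n - 8` for all `n ≥ 4` and
`3n - 9` for odd `n ≥ 5` (`BAP.edge_bound`). For `n ≤ 7` both follow from counting the pairs of
vertices of different colours.

*From topology to combinatorics.* In a given drawing, each pair of crossing edges is turned into a
new vertex, represented by the part of the second edge around the crossings. What is
needed of the resulting plane drawing is that functions on its faces with values in `ZMod 2` have
as coboundaries exactly the cycles of the graph, only constants having coboundary zero
(`BAP.BlobDrawing.exists_faces`). This is the Jordan curve theorem for graphs; it is proved by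
Eilenberg's criterion, which decides whether a compact plane set separates two points `p`, `q` by
the existence of a continuous logarithm of `(z - p) / (z - q)`. From there on only
`BAP.GenRep`, a finite list of vertices, edges and faces with these duality properties, is used.

*Normalisation.* A crossing is removed if both halves of one of its edges lie on a common face, or
if its edges have a common end (`BAP.GenRep.exists_normal`). The four corners at any
other crossing are two monochromatic and two bichromatic ones. Every bichromatic corner is cut off
by an uncrossed edge parallel to its half-edges, unless it is bounded by one already
(`BAP.Rep.exists_tri`); this may create parallel uncrossed edges, but no digons.

*Charges.* Let `u` be the number of uncrossed edges and `c` that of crossings. Give a face with `e`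
edge sides, `b` bichromatic and `k` monochromatic corners the (doubled) charge
`2e + 4b + 3k - 6`. It is nonnegative, and zero only for the triangles and for faces with two
monochromatic corners and nothing else (`BAP.Rep.face_cases`). By Euler's formula the total is at
most `6n - 12 - 2u - 4c`, where the number of edges is at most `u + 2c`. Faces that meet in a
half-edge are put in one class; the charge of a class is even. If `N` classes are charged then the
total is at least `2N`, and `u ≤ n - 2 + N` (`BAP.Rep.card_U_le`), because every chargeless class
gives rise to a cut that avoids the uncrossed edges. So a graph with at least `3n - 8` edges has
`N ≤ 2` and `u ≤ n`, and one with at least `3n - 7` edges has `u ≤ n - 1`.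

*Degrees.* Since bichromatic corners are triangles, a vertex with `d` uncrossed edges has at
most `2d` half-edges, so its degree is at most `3d`. If `n` is even and there are at least `3n - 7`
edges, then by induction all degrees are at least four, hence `d ≥ 2` everywhere and `u ≥ n`, a
contradiction. If `n` is odd and there are at least `3n - 8` edges, then all degrees are at least
three, with at most one of them equal to three. If `d ≥ 2` everywhere then `u = n`, all
`d = 2`, and the colour classes have the same size, so `n` is even. Otherwise there is a single
vertex with `d = 1`, with two half-edges; its outer face has charge at least three
(`BAP.Rep.exists_charged`), which improves the bound to `N ≤ 1` and `u ≤ n - 1`, a contradiction.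
-/

/-- A drawing of a simple graph `G` in the plane: an injective placement of vertices
together with, for each edge, a continuous injective curve between the points of its
endpoints, whose interior avoids all vertex points; any two distinct edge curves meet in
finitely many points, and no point lies in the interiors of three distinct edge curves. -/
structure Drawing {V : Type*} (G : SimpleGraph V) where
  pos : V → ℝ × ℝ
  pos_inj : Function.Injective pos
  curve : G.edgeSet → ℝ → ℝ × ℝ
  curve_cont : ∀ e, ContinuousOn (curve e) (Icc 0 1)
  curve_inj : ∀ e, InjOn (curve e) (Icc 0 1)
  curve_ends : ∀ e : G.edgeSet, ∃ a b : V, (e : Sym2 V) = s(a, b) ∧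
      curve e 0 = pos a ∧ curve e 1 = pos b
  interior_no_vertex : ∀ e, ∀ t ∈ Ioo (0 : ℝ) 1, ∀ v, curve e t ≠ pos v
  finite_meet : ∀ e f, e ≠ f → (curve e '' Icc 0 1 ∩ curve f '' Icc 0 1).Finite
  no_triple_point : ∀ p : ℝ × ℝ, ∀ e f g, e ≠ f → e ≠ g → f ≠ g →
      p ∈ curve e '' Ioo 0 1 → p ∈ curve f '' Ioo 0 1 → p ∈ curve g '' Ioo 0 1 → False

/-- Two edges cross in a drawing if some point lies in the interiors of both curves. -/
def Drawing.Crosses {V : Type*} {G : SimpleGraph V} (D : Drawing G) (e f : G.edgeSet) : Prop :=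
  e ≠ f ∧ ∃ p : ℝ × ℝ, p ∈ D.curve e '' Ioo 0 1 ∧ p ∈ D.curve f '' Ioo 0 1

/-- A drawing is almost planar (1-planar) if every edge crosses at most one other edge. -/
def Drawing.IsAlmostPlanar {V : Type*} {G : SimpleGraph V} (D : Drawing G) : Prop :=
  ∀ e f g, D.Crosses e f → D.Crosses e g → f = g

/-- A graph is almost planar if it admits a drawing in which every edge crosses at most
one other edge. -/
def SimpleGraph.AlmostPlanar {V : Type*} (G : SimpleGraph V) : Prop :=
  ∃ D : Drawing G, D.IsAlmostPlanar

/-! ### Continuous logarithms on plane sets -/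

namespace BAP

/-- `f` admits a continuous logarithm on `K`. -/
def HasLog (f : ℂ → ℂ) (K : Set ℂ) : Prop :=
  ∃ g : ℂ → ℂ, ContinuousOn g K ∧ ∀ z ∈ K, Complex.exp (g z) = f z

theorem HasLog.mono {f : ℂ → ℂ} {K L : Set ℂ} (h : HasLog f K) (hL : L ⊆ K) : HasLog f L := by
  obtain ⟨g, hg, hgf⟩ := h
  exact ⟨g, hg.mono hL, fun z hz => hgf z (hL hz)⟩

theorem HasLog.congr {f f' : ℂ → ℂ} {K : Set ℂ} (h : HasLog f K) (hf : ∀ z ∈ K, f z = f' z) :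
    HasLog f' K := by
  obtain ⟨g, hg, hgf⟩ := h
  exact ⟨g, hg, fun z hz => (hgf z hz).trans (hf z hz)⟩

theorem HasLog.mul {f f' : ℂ → ℂ} {K : Set ℂ} (h : HasLog f K) (h' : HasLog f' K) :
    HasLog (fun z => f z * f' z) K := by
  obtain ⟨g, hg, hgf⟩ := h
  obtain ⟨g', hg', hgf'⟩ := h'
  refine ⟨fun z => g z + g' z, hg.add hg', fun z hz => ?_⟩
  rw [Complex.exp_add, hgf z hz, hgf' z hz]

theorem HasLog.zpow {f : ℂ → ℂ} {K : Set ℂ} (h : HasLog f K) (n : ℤ) :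
    HasLog (fun z => f z ^ n) K := by
  obtain ⟨g, hg, hgf⟩ := h
  refine ⟨fun z => n * g z, continuousOn_const.mul hg, fun z hz => ?_⟩
  rw [Complex.exp_int_mul, hgf z hz]

theorem HasLog.inv {f : ℂ → ℂ} {K : Set ℂ} (h : HasLog f K) :
    HasLog (fun z => (f z)⁻¹) K :=
  (h.zpow (-1)).congr fun z _ => by simp

/-- The logarithm of a quotient with numerator and denominator exchanged. -/
theorem HasLog.div_swap {p q : ℂ} {K : Set ℂ} (h : HasLog (fun z => (z - p) / (z - q)) K) :
    HasLog (fun z => (z - q) / (z - p)) K :=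
  h.inv.congr fun z _ => by simp

/-- Nonvanishing continuous functions on simply connected spaces lift through `exp`. -/
theorem exists_lift {X : Type*} [TopologicalSpace X] [SimplyConnectedSpace X]
    [LocallyPathConnectedSpace X] (f : X → ℂ) (hf : Continuous f) (h0 : ∀ x, f x ≠ 0) :
    ∃ g : X → ℂ, Continuous g ∧ ∀ x, Complex.exp (g x) = f x := by
  let F : C(X, {z : ℂ // z ≠ 0}) := ⟨fun x => ⟨f x, h0 x⟩, by fun_prop⟩
  let x₀ : X := Classical.arbitrary X
  obtain ⟨g, ⟨-, hg⟩, -⟩ := Complex.isCoveringMap_exp.existsUnique_continuousMap_lifts F x₀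
    (Complex.log (f x₀)) (by simp [F, Complex.exp_log (h0 x₀)])
  exact ⟨g, g.continuous, fun x => congrArg Subtype.val (congrFun hg x)⟩

theorem hasLog_univ (f : ℂ → ℂ) (hf : Continuous f) (h0 : ∀ x, f x ≠ 0) : HasLog f univ := by
  obtain ⟨g, hg, hgf⟩ := exists_lift f hf h0
  exact ⟨g, hg.continuousOn, fun z _ => hgf z⟩

/-- Two logarithms of the same function on a connected set differ by a constant of `2πiℤ`. -/
theorem exists_int_of_exp_eq {X : Type*} [TopologicalSpace X] {S : Set X} (hS : IsPreconnected S)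
    {g h : X → ℂ} (hg : ContinuousOn g S) (hh : ContinuousOn h S)
    (he : ∀ z ∈ S, Complex.exp (g z) = Complex.exp (h z)) :
    ∃ n : ℤ, ∀ z ∈ S, g z = h z + n * (2 * Real.pi * Complex.I) := by
  have hpi : (2 * Real.pi * Complex.I : ℂ) ≠ 0 := Complex.two_pi_I_ne_zero
  rcases S.eq_empty_or_nonempty with rfl | ⟨x, hx⟩
  · exact ⟨0, by simp⟩
  have key : ∀ z ∈ S, ∃ n : ℤ, g z = h z + n * (2 * Real.pi * Complex.I) :=
    fun z hz => Complex.exp_eq_exp_iff_exists_int.1 (he z hz)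
  obtain ⟨n, hn⟩ := key x hx
  refine ⟨n, fun z hz => ?_⟩
  have hdisc : IsDiscrete (range (fun n : ℤ => (n : ℝ))) :=
    Int.isClosedEmbedding_coe_real.isEmbedding.isDiscrete_range
  have hre : ∀ z (m : ℤ), g z = h z + m * (2 * Real.pi * Complex.I) →
      ((g z - h z) / (2 * Real.pi * Complex.I)).re = m := fun z m hm => by
    rw [hm, add_sub_cancel_left, mul_div_assoc, div_self hpi, mul_one, Complex.intCast_re]
  obtain ⟨y, -, hy⟩ := hS.eqOn_const_of_mapsTo hdisc
    (f := fun z => ((g z - h z) / (2 * Real.pi * Complex.I)).re)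
    (Complex.continuous_re.comp_continuousOn ((hg.sub hh).div_const _)) (fun z hz => by
      obtain ⟨m, hm⟩ := key z hz
      exact ⟨m, (hre z m hm).symm⟩) ⟨_, 0, rfl⟩
  obtain ⟨m, hm⟩ := key z hz
  have h1 := hy hx
  have h2 := hy hz
  simp only [Function.const] at h1 h2
  rw [hre _ _ hn] at h1
  rw [hre _ _ hm, ← h1] at h2
  rw [hm, Int.cast_injective h2]

/-- Gluing logarithms on two closed sets whose given logarithms agree on the overlap. -/
theorem hasLog_union {f : ℂ → ℂ} {K L : Set ℂ} (hK : IsClosed K) (hL : IsClosed L)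
    {g h : ℂ → ℂ} (hg : ContinuousOn g K) (hh : ContinuousOn h L)
    (hgf : ∀ z ∈ K, Complex.exp (g z) = f z) (hhf : ∀ z ∈ L, Complex.exp (h z) = f z)
    (hgh : ∀ z ∈ K ∩ L, g z = h z) : HasLog f (K ∪ L) := by
  classical
  have e1 : ∀ z ∈ K, K.piecewise g h z = g z := fun z hz => piecewise_eq_of_mem _ _ _ hz
  have e2 : ∀ z ∈ L, K.piecewise g h z = h z := fun z hz => by
    by_cases hzK : z ∈ K
    · rw [e1 z hzK, hgh z ⟨hzK, hz⟩]
    · exact piecewise_eq_of_notMem _ _ _ hzK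
  refine ⟨K.piecewise g h, (hg.congr e1).union_of_isClosed (hh.congr e2) hK hL, ?_⟩
  rintro z (hz | hz)
  · rw [e1 z hz, hgf z hz]
  · rw [e2 z hz, hhf z hz]

theorem hasLog_union_disjoint {f : ℂ → ℂ} {K L : Set ℂ} (hK : IsClosed K) (hL : IsClosed L)
    (hd : Disjoint K L) (h1 : HasLog f K) (h2 : HasLog f L) : HasLog f (K ∪ L) := by
  obtain ⟨g, hg, hgf⟩ := h1
  obtain ⟨h, hh, hhf⟩ := h2
  exact hasLog_union hK hL hg hh hgf hhf fun z hz => (hd.le_bot hz).elim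

/-- A power of `z - p` with nonzero exponent has no logarithm on a circle about `p`. -/
theorem not_hasLog_sphere {p : ℂ} {R : ℝ} (hR : 0 < R) {k : ℤ} (hk : k ≠ 0) :
    ¬ HasLog (fun z => (z - p) ^ k) (Metric.sphere p R) := by
  rintro ⟨g, hg, hgf⟩
  have hpi : (2 * Real.pi * Complex.I : ℂ) ≠ 0 := Complex.two_pi_I_ne_zero
  have hc : Continuous (fun θ : ℝ => g (circleMap p R θ)) :=
    hg.comp_continuous (continuous_circleMap p R) fun θ => circleMap_mem_sphere p hR.le θ
  have hR' : (R : ℂ) ≠ 0 := by exact_mod_cast hR.ne'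
  obtain ⟨n, hn⟩ := exists_int_of_exp_eq (isPreconnected_univ (α := ℝ))
    (g := fun θ : ℝ => g (circleMap p R θ))
    (h := fun θ : ℝ => k * (Complex.log R + θ * Complex.I)) hc.continuousOn
    (by fun_prop) (fun θ _ => by
      rw [hgf _ (circleMap_mem_sphere p hR.le θ), Complex.exp_int_mul, Complex.exp_add,
        Complex.exp_log hR']
      simp [circleMap])
  have h0 := hn 0 trivial
  have h1 := hn (2 * Real.pi) trivial
  have : circleMap p R (2 * Real.pi) = circleMap p R 0 := by simp [circleMap]
  simp only [this] at h1
  rw [h0] at h1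
  have h2 : (k : ℂ) * (2 * Real.pi * Complex.I) = 0 := by
    push_cast at h1
    linear_combination -h1
  rcases mul_eq_zero.1 h2 with h | h
  · exact hk (by exact_mod_cast h)
  · exact hpi h

/-- Moving the zero of `z - p` to `q` along a path does not change the homotopy class of
the function off the path. -/
theorem hasLog_path {p q : ℂ} (γ : Path p q) {L : Set ℂ} (hL : ∀ t, γ t ∉ L) :
    HasLog (fun z => (z - q) / (z - p)) L := by
  classical
  have hne : ∀ (t) (z : L), (z : ℂ) - γ t ≠ 0 := fun t z h =>
    hL t (by rw [← sub_eq_zero.1 h]; exact z.2)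
  have hne0 : ∀ (z : L), (z : ℂ) - p ≠ 0 := fun z => by simpa using hne 0 z
  let H : C(unitInterval × L, {z : ℂ // z ≠ 0}) :=
    ⟨fun x => ⟨((x.2 : ℂ) - γ x.1) / ((x.2 : ℂ) - p), div_ne_zero (hne _ _) (hne0 _)⟩, by
      refine Continuous.subtype_mk ?_ _
      exact Continuous.div (by fun_prop) (by fun_prop) (fun x => hne0 _)⟩
  have H0 : ∀ a : L, H (0, a) = ⟨_, Complex.exp_ne_zero ((0 : C(L, ℂ)) a)⟩ := fun a => by
    apply Subtype.ext
    simp [H, hne0 a]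
  let F := Complex.isCoveringMap_exp.liftHomotopy H 0 H0
  have hF := Complex.isCoveringMap_exp.liftHomotopy_lifts H 0 H0
  refine ⟨fun z => if hz : z ∈ L then F (1, ⟨z, hz⟩) else 0, ?_, fun z hz => ?_⟩
  · rw [continuousOn_iff_continuous_domRestrict]
    have : L.domRestrict (fun z => if hz : z ∈ L then F (1, ⟨z, hz⟩) else 0) =
        fun z : L => F (1, z) := by
      ext z
      simp
    rw [this]
    fun_prop
  · have := congrArg Subtype.val (congrFun hF (1, ⟨z, hz⟩))
    simp only [Function.comp] at this
    simp only [hz, dif_pos]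
    rw [this]
    simp [H]

/-- Every continuous nonvanishing function on `K` has a logarithm. -/
def AllLogs (K : Set ℂ) : Prop :=
  ∀ f : ℂ → ℂ, ContinuousOn f K → (∀ z ∈ K, f z ≠ 0) → HasLog f K

theorem continuousOn_invFunOn {γ : ℝ → ℂ} {l r : ℝ} (hγ : ContinuousOn γ (Icc l r))
    (hi : InjOn γ (Icc l r)) :
    ContinuousOn (Function.invFunOn γ (Icc l r)) (γ '' Icc l r) := by
  rw [continuousOn_iff_isClosed]
  intro t ht
  refine ⟨γ '' (Icc l r ∩ t), ?_, ?_⟩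
  · exact ((isCompact_Icc.inter_right ht).image_of_continuousOn
      (hγ.mono inter_subset_left)).isClosed
  · ext z
    constructor
    · rintro ⟨hz, ⟨x, hx, rfl⟩⟩
      refine ⟨⟨x, ⟨hx, ?_⟩, rfl⟩, ⟨x, hx, rfl⟩⟩
      have := hi.leftInvOn_invFunOn hx
      simpa [this] using hz
    · rintro ⟨⟨x, ⟨hx, hxt⟩, rfl⟩, -⟩
      refine ⟨?_, ⟨x, hx, rfl⟩⟩
      have := hi.leftInvOn_invFunOn hx
      simpa [this] using hxt

theorem allLogs_arc {γ : ℝ → ℂ} {l r : ℝ} (hlr : l ≤ r) (hγ : ContinuousOn γ (Icc l r))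
    (hi : InjOn γ (Icc l r)) : AllLogs (γ '' Icc l r) := by
  intro f hf h0
  have hc : Continuous (IccExtend hlr ((Icc l r).domRestrict (fun t => f (γ t)))) := by
    refine Continuous.Icc_extend' ?_
    rw [← continuousOn_iff_continuous_domRestrict]
    exact hf.comp hγ (mapsTo_image _ _)
  obtain ⟨g, hg, hgf⟩ := exists_lift _ hc (fun x => h0 _ ⟨_, (projIcc l r hlr x).2, rfl⟩)
  refine ⟨fun z => g (Function.invFunOn γ (Icc l r) z),
    hg.comp_continuousOn (continuousOn_invFunOn hγ hi), ?_⟩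
  rintro _ ⟨x, hx, rfl⟩
  simp only []
  rw [hi.leftInvOn_invFunOn hx, hgf, IccExtend_of_mem _ _ hx]
  rfl

end BAP

/-! ### Separation of the plane by compact sets -/

namespace BAP

theorem isPreconnected_norm_gt {R : ℝ} (hR : 0 ≤ R) : IsPreconnected {z : ℂ | R < ‖z‖} := by
  have h : IsPreconnected ((fun x : ℝ × ℝ => (x.1 : ℂ) * Complex.exp (x.2 * Complex.I)) ''
      (Ioi R ×ˢ univ)) :=
    (isPreconnected_Ioi.prod isPreconnected_univ).image _ (by fun_prop)
  convert h using 1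
  ext z
  constructor
  · intro hz
    exact ⟨(‖z‖, z.arg), ⟨hz, trivial⟩, Complex.norm_mul_exp_arg_mul_I z⟩
  · rintro ⟨⟨r, θ⟩, ⟨hr, -⟩, rfl⟩
    have hr' : R < r := hr
    simp only [mem_ofPred_eq, norm_mul, Complex.norm_real, Complex.norm_exp_ofReal_mul_I, mul_one,
      Real.norm_eq_abs]
    rwa [abs_of_pos (hR.trans_lt hr')]

theorem closure_component_subset {K : Set ℂ} (hK : IsClosed K) (p : ℂ) :
    closure (connectedComponentIn Kᶜ p) ⊆ connectedComponentIn Kᶜ p ∪ K := by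
  intro z hz
  by_contra hcon
  simp only [mem_union, not_or] at hcon
  have ho : IsOpen (connectedComponentIn Kᶜ z) := hK.isOpen_compl.connectedComponentIn
  obtain ⟨w, hw1, hw2⟩ := mem_closure_iff.1 hz _ ho (mem_connectedComponentIn hcon.2)
  apply hcon.1
  rw [connectedComponentIn_eq hw2, ← connectedComponentIn_eq hw1]
  exact mem_connectedComponentIn hcon.2

/-- Eilenberg's criterion: a function with a zero of nonzero order at a point `p` of a bounded
complementary component of `K`, and no further zeros or poles there, has no logarithm
on `K`. -/
theorem no_log_of_bounded {K : Set ℂ} (hK : IsClosed K) {p : ℂ} (hp : p ∉ K)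
    (hb : Bornology.IsBounded (connectedComponentIn Kᶜ p)) {k : ℤ} (hk : k ≠ 0) {w : ℂ → ℂ}
    (hw : ContinuousOn w (closure (connectedComponentIn Kᶜ p)))
    (hw0 : ∀ z ∈ closure (connectedComponentIn Kᶜ p), w z ≠ 0)
    (hlog : HasLog (fun z => (z - p) ^ k * w z) K) : False := by
  classical
  set U := connectedComponentIn Kᶜ p with hU
  have hUo : IsOpen U := hK.isOpen_compl.connectedComponentIn
  have hpU : p ∈ U := mem_connectedComponentIn hp
  obtain ⟨g, hg, hgf⟩ := hlog
  obtain ⟨G, hG⟩ := ContinuousMap.exists_restrict_eq hK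
    (⟨K.domRestrict g, continuousOn_iff_continuous_domRestrict.1 hg⟩ : C(K, ℂ))
  have hGg : ∀ z ∈ K, G z = g z := fun z hz => by
    have := congrArg (fun F : C(K, ℂ) => F ⟨z, hz⟩) hG
    simpa using this
  let F : ℂ → ℂ := fun z => if z ∈ U then Complex.exp (G z) / w z else (z - p) ^ k
  have hne : ∀ z ∉ U, z - p ≠ 0 := fun z hz h => hz (by rw [sub_eq_zero.1 h]; exact hpU)
  have F1 : ∀ z ∈ closure U, F z = Complex.exp (G z) / w z := fun z hz => by
    by_cases hzU : z ∈ U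
    · simp [F, hzU]
    · have hzK : z ∈ K := (closure_component_subset hK p hz).resolve_left hzU
      simp only [F, hzU, if_false]
      rw [hGg z hzK, hgf z hzK, mul_div_assoc, div_self (hw0 z hz), mul_one]
  have F2 : ∀ z ∈ Uᶜ, F z = (z - p) ^ k := fun z hz => by
    simp only [F, if_neg hz]
  have hFc : Continuous F := by
    rw [← continuousOn_univ]
    have : (univ : Set ℂ) = closure U ∪ Uᶜ := by
      rw [eq_comm, eq_univ_iff_forall]
      intro z
      by_cases hz : z ∈ U
      · exact Or.inl (subset_closure hz)
      · exact Or.inr hz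
    rw [this]
    refine ContinuousOn.union_of_isClosed ?_ ?_ isClosed_closure hUo.isClosed_compl
    · refine ContinuousOn.congr ?_ F1
      exact (Complex.continuous_exp.comp G.continuous).continuousOn.div hw hw0
    · refine ContinuousOn.congr ?_ F2
      exact (by fun_prop : ContinuousOn (fun z : ℂ => z - p) Uᶜ).zpow₀ k
        fun z hz => Or.inl (hne z hz)
  have hF0 : ∀ z, F z ≠ 0 := fun z => by
    by_cases hz : z ∈ U
    · rw [F1 z (subset_closure hz)]
      exact div_ne_zero (Complex.exp_ne_zero _) (hw0 z (subset_closure hz))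
    · rw [F2 z hz]
      exact zpow_ne_zero _ (hne z hz)
  obtain ⟨R, hR0, hR⟩ := hb.subset_ball_lt 0 p
  refine not_hasLog_sphere (p := p) hR0 hk (((hasLog_univ F hFc hF0).mono (subset_univ _)).congr ?_)
  intro z hz
  refine F2 z fun hzU => ?_
  have := hR hzU
  rw [Metric.mem_sphere] at hz
  rw [Metric.mem_ball] at this
  exact this.ne hz

/-- At most one complementary component of a compact set is unbounded. -/
theorem bounded_or_bounded {K : Set ℂ} (hK : IsCompact K) {p q : ℂ}
    (hq : q ∉ connectedComponentIn Kᶜ p) :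
    Bornology.IsBounded (connectedComponentIn Kᶜ p) ∨
      Bornology.IsBounded (connectedComponentIn Kᶜ q) := by
  by_contra hcon
  push Not at hcon
  obtain ⟨R, hR0, hR⟩ := hK.isBounded.subset_ball_lt 0 0
  have hsub : {z : ℂ | R < ‖z‖} ⊆ Kᶜ := fun z hz hzK => by
    have := hR hzK
    rw [mem_ball_zero_iff] at this
    exact lt_asymm this hz
  have key : ∀ x, ¬ Bornology.IsBounded (connectedComponentIn Kᶜ x) →
      {z : ℂ | R < ‖z‖} ⊆ connectedComponentIn Kᶜ x := by
    intro x hx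
    obtain ⟨y, hy, hyR⟩ : ∃ y ∈ connectedComponentIn Kᶜ x, R < ‖y‖ := by
      by_contra hc
      push Not at hc
      exact hx (Metric.isBounded_closedBall (x := (0 : ℂ)) (r := R) |>.subset
        fun y hy => mem_closedBall_zero_iff.2 (hc y hy))
    rw [connectedComponentIn_eq hy]
    exact (isPreconnected_norm_gt hR0.le).subset_connectedComponentIn hyR hsub
  have hz : ((R + 1 : ℝ) : ℂ) ∈ {z : ℂ | R < ‖z‖} := by
    simp only [mem_ofPred_eq, Complex.norm_real, Real.norm_eq_abs]
    rw [abs_of_pos (by linarith)]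
    linarith
  have e1 := connectedComponentIn_eq (key p hcon.1 hz)
  have e2 := connectedComponentIn_eq (key q hcon.2 hz)
  apply hq
  rw [e1, ← e2]
  apply mem_connectedComponentIn
  by_contra h
  exact hcon.2 (by rw [connectedComponentIn_eq_empty h]; exact Bornology.isBounded_empty)

/-- If `(z - p) / (z - q)` has a logarithm on a compact set `K`, then `K` does not separate
`p` from `q`. -/
theorem mem_component_of_hasLog {K : Set ℂ} (hK : IsCompact K) {p q : ℂ} (hp : p ∉ K)
    (hq : q ∉ K) (h : HasLog (fun z => (z - p) / (z - q)) K) :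
    q ∈ connectedComponentIn Kᶜ p := by
  by_contra hqp
  have key : ∀ {p q : ℂ}, p ∉ K → q ∉ K → q ∉ connectedComponentIn Kᶜ p →
      Bornology.IsBounded (connectedComponentIn Kᶜ p) →
      ¬ HasLog (fun z => (z - p) / (z - q)) K := by
    intro p q hp hq hqp hb h
    have hne : ∀ z ∈ closure (connectedComponentIn Kᶜ p), z - q ≠ 0 := by
      intro z hz hzq
      rw [sub_eq_zero.1 hzq] at hz
      exact (closure_component_subset hK.isClosed p hz).elim hqp hq
    refine no_log_of_bounded hK.isClosed hp hb one_ne_zero (w := fun z => (z - q)⁻¹) ?_ ?_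
      (h.congr fun z _ => by simp [div_eq_mul_inv])
    · exact ContinuousOn.inv₀ (by fun_prop) hne
    · exact fun z hz => inv_ne_zero (hne z hz)
  rcases bounded_or_bounded hK hqp with hb | hb
  · exact key hp hq hqp hb h
  · refine key hq hp (fun hpq => hqp ?_) hb h.div_swap
    rw [← connectedComponentIn_eq hpq]
    exact mem_connectedComponentIn hq

/-- Points of the same complementary component of `L` give quotients with a logarithm
on `L`. -/
theorem hasLog_of_mem_component {L : Set ℂ} (hL : IsClosed L) {p q : ℂ}
    (h : q ∈ connectedComponentIn Lᶜ p) : HasLog (fun z => (z - p) / (z - q)) L := by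
  have hp : p ∈ Lᶜ := by
    by_contra hp
    rw [connectedComponentIn_eq_empty hp] at h
    exact h
  have ho : IsOpen (connectedComponentIn Lᶜ p) := hL.isOpen_compl.connectedComponentIn
  have hpc : IsPathConnected (connectedComponentIn Lᶜ p) :=
    (ho.isConnected_iff_isPathConnected).1 (isConnected_connectedComponentIn_iff.2 hp)
  have hj := hpc.joinedIn _ h _ (mem_connectedComponentIn hp)
  exact hasLog_path hj.somePath fun t ht => connectedComponentIn_subset _ _ (hj.somePath_mem t) ht

theorem AllLogs.isPreconnected_compl {K : Set ℂ} (hK : IsCompact K) (h : AllLogs K) :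
    IsPreconnected Kᶜ := by
  rcases (Kᶜ).eq_empty_or_nonempty with h0 | ⟨p, hp⟩
  · rw [h0]; exact isPreconnected_empty
  have : Kᶜ = connectedComponentIn Kᶜ p := by
    refine Subset.antisymm (fun q hq => ?_) (connectedComponentIn_subset _ _)
    have hpz : ∀ z ∈ K, z - p ≠ 0 := fun z hz h => hp (by rw [← sub_eq_zero.1 h]; exact hz)
    have hqz : ∀ z ∈ K, z - q ≠ 0 := fun z hz h => hq (by rw [← sub_eq_zero.1 h]; exact hz)
    refine mem_component_of_hasLog hK hp hq (h _ ?_ ?_)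
    · exact ContinuousOn.div (by fun_prop) (by fun_prop) hqz
    · exact fun z hz => div_ne_zero (hpz z hz) (hqz z hz)
  rw [this]
  exact isPreconnected_connectedComponentIn

theorem interior_arc {γ : ℝ → ℂ} {l r : ℝ} (hγ : ContinuousOn γ (Icc l r))
    (hi : InjOn γ (Icc l r)) : interior (γ '' Icc l r) = ∅ := by
  by_contra hne
  obtain ⟨c, hc⟩ := nonempty_iff_ne_empty.2 hne
  obtain ⟨ε, hε, hball⟩ := Metric.isOpen_iff.1 isOpen_interior c hc
  have hS : Metric.sphere c (ε / 2) ⊆ γ '' Icc l r := fun z hz =>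
    interior_subset (hball (by
      rw [Metric.mem_sphere] at hz
      rw [Metric.mem_ball, hz]
      linarith))
  obtain ⟨s, hs, hsc⟩ := interior_subset hc
  set φ := Function.invFunOn γ (Icc l r) with hφ
  have hφc : ContinuousOn φ (Metric.sphere c (ε / 2)) := (continuousOn_invFunOn hγ hi).mono hS
  have hφγ : ∀ z ∈ Metric.sphere c (ε / 2), φ z ∈ Icc l r ∧ γ (φ z) = z := fun z hz =>
    ⟨Function.invFunOn_mem (hS hz), Function.invFunOn_eq (hS hz)⟩
  have hcomp := isCompact_sphere c (ε / 2)
  have hconn : IsPreconnected (Metric.sphere c (ε / 2)) :=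
    isPreconnected_sphere (by rw [Complex.rank_real_complex]; norm_num) c _
  have hnon : (Metric.sphere c (ε / 2)).Nonempty :=
    ⟨c + (ε / 2 : ℝ), by simp [abs_of_pos hε]⟩
  have hns : ∀ z ∈ Metric.sphere c (ε / 2), φ z ≠ s := fun z hz h => by
    have h1 := (hφγ z hz).2
    rw [h, hsc] at h1
    rw [← h1, Metric.mem_sphere, dist_self] at hz
    linarith
  have hI : (φ '' Metric.sphere c (ε / 2)).OrdConnected :=
    isPreconnected_iff_ordConnected.1 (hconn.image _ hφc)
  have fin : ∀ l' r', l ≤ l' → r' ≤ r → l' ≤ r' → (∀ x ∈ Icc l' r', x ≠ s) →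
      (∀ z ∈ Metric.sphere c (ε / 2), φ z ∈ Icc l' r') → False := by
    intro l' r' h1 h2 h12 hx hz
    have hsub : Icc l' r' ⊆ Icc l r := Icc_subset_Icc h1 h2
    have hal := allLogs_arc h12 (hγ.mono hsub) (hi.mono hsub)
    refine not_hasLog_sphere (p := c) (k := 1) (half_pos hε) one_ne_zero ?_
    refine ((hal (fun z => z - c) (by fun_prop) ?_).mono ?_).congr fun z _ => by simp
    · rintro _ ⟨x, hxI, rfl⟩ h0
      rw [sub_eq_zero, ← hsc] at h0
      exact hx x hxI (hi (hsub hxI) hs h0)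
    · intro z hz'
      exact ⟨φ z, hz z hz', (hφγ z hz').2⟩
  obtain ⟨zM, hzM, hM⟩ := hcomp.exists_isMaxOn hnon hφc
  obtain ⟨zm, hzm, hm⟩ := hcomp.exists_isMinOn hnon hφc
  have hMl := (hφγ zM hzM).1
  have hml := (hφγ zm hzm).1
  by_cases h1 : φ zM < s
  · refine fin l (φ zM) le_rfl hMl.2 hMl.1 (fun x hx => (hx.2.trans_lt h1).ne) fun z hz => ?_
    exact ⟨(hφγ z hz).1.1, hM hz⟩
  · by_cases h2 : s < φ zm
    · refine fin (φ zm) r hml.1 le_rfl hml.2 (fun x hx => (h2.trans_le hx.1).ne') fun z hz => ?_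
      exact ⟨hm hz, (hφγ z hz).1.2⟩
    · push Not at h1 h2
      obtain ⟨z, hz, hzs⟩ := hI.out ⟨zm, hzm, rfl⟩ ⟨zM, hzM, rfl⟩ ⟨h2, h1⟩
      exact hns z hz hzs

/-- A compact path-connected set carrying only null-homotopic maps to `ℂ \ {0}`; such sets
play the role of (fattened) vertices. -/
structure IsBlob (B : Set ℂ) : Prop where
  compact : IsCompact B
  path : IsPathConnected B
  logs : AllLogs B

/-- The properties of a simple arc `A` with distinct endpoints `a`, `b` that are used below. -/
structure IsArc (A : Set ℂ) (a b : ℂ) : Prop extends IsBlob A where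
  ne : a ≠ b
  left_mem : a ∈ A
  right_mem : b ∈ A
  int_empty : interior A = ∅
  conn : IsPreconnected (A \ {a, b})
  nonempty : (A \ {a, b}).Nonempty
  left_closure : a ∈ closure (A \ {a, b})
  right_closure : b ∈ closure (A \ {a, b})

theorem isBlob_image {γ : ℝ → ℂ} {l r : ℝ} (hlr : l ≤ r) (hγ : ContinuousOn γ (Icc l r))
    (hi : InjOn γ (Icc l r)) : IsBlob (γ '' Icc l r) where
  compact := isCompact_Icc.image_of_continuousOn hγ
  path := by
    have : IsPathConnected (Icc l r) := (convex_Icc l r).isPathConnected (nonempty_Icc.2 hlr)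
    exact this.image' hγ
  logs := allLogs_arc hlr hγ hi

theorem image_Icc_diff {γ : ℝ → ℂ} {l r : ℝ} (hlr : l < r) (hi : InjOn γ (Icc l r)) :
    γ '' Icc l r \ {γ l, γ r} = γ '' Ioo l r := by
  have h1 : ({γ l, γ r} : Set ℂ) = γ '' {l, r} := by rw [image_pair]
  rw [h1, ← hi.image_sdiff_subset, Icc_sdiff_both]
  rintro x (rfl | rfl)
  · exact left_mem_Icc.2 hlr.le
  · exact right_mem_Icc.2 hlr.le

theorem isArc_image {γ : ℝ → ℂ} {l r : ℝ} (hlr : l < r) (hγ : ContinuousOn γ (Icc l r))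
    (hi : InjOn γ (Icc l r)) : IsArc (γ '' Icc l r) (γ l) (γ r) where
  toIsBlob := isBlob_image hlr.le hγ hi
  ne := fun h => hlr.ne (hi (left_mem_Icc.2 hlr.le) (right_mem_Icc.2 hlr.le) h)
  left_mem := ⟨l, left_mem_Icc.2 hlr.le, rfl⟩
  right_mem := ⟨r, right_mem_Icc.2 hlr.le, rfl⟩
  int_empty := interior_arc hγ hi
  conn := by
    rw [image_Icc_diff hlr hi]
    exact isPreconnected_Ioo.image _ (hγ.mono Ioo_subset_Icc_self)
  nonempty := by
    rw [image_Icc_diff hlr hi]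
    exact (nonempty_Ioo.2 hlr).image _
  left_closure := by
    rw [image_Icc_diff hlr hi]
    rw [← closure_Ioo hlr.ne] at hγ
    exact hγ.image_closure ⟨l, by rw [closure_Ioo hlr.ne]; exact left_mem_Icc.2 hlr.le, rfl⟩
  right_closure := by
    rw [image_Icc_diff hlr hi]
    rw [← closure_Ioo hlr.ne] at hγ
    exact hγ.image_closure ⟨r, by rw [closure_Ioo hlr.ne]; exact right_mem_Icc.2 hlr.le, rfl⟩

end BAP

/-! ### Drawings with fattened vertices; forests -/

namespace BAP

/-- The Fredholm alternative over the field with two elements. -/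
theorem fredholm {M J : Type*} [AddCommGroup M] [Module (ZMod 2) M] [Fintype J]
    (D : M →ₗ[ZMod 2] (J → ZMod 2)) (b : J → ZMod 2)
    (h : ∀ z : J → ZMod 2, (∀ y, ∑ j, z j * D y j = 0) → ∑ j, z j * b j = 0) :
    ∃ y, D y = b := by
  classical
  by_contra hcon
  have hb : b ∉ LinearMap.range D := by simpa using hcon
  obtain ⟨f, hfb, hf⟩ := Submodule.exists_le_ker_of_notMem hb
  have hrep : ∀ x : J → ZMod 2, f x = ∑ j, f (Pi.single j 1) * x j := fun x => by
    conv_lhs => rw [LinearMap.pi_apply_eq_sum_univ f x]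
    refine Finset.sum_congr rfl fun j _ => ?_
    rw [smul_eq_mul, mul_comm]
    congr 2
    ext i
    simp [Pi.single_apply, eq_comm]
  apply hfb
  rw [hrep]
  exact h _ fun y => by rw [← hrep]; exact hf ⟨y, rfl⟩

theorem zmod2_cases (a : ZMod 2) : a = 0 ∨ a = 1 := by
  revert a; decide

theorem zmod2_add_self (a : ZMod 2) : a + a = 0 := by
  revert a; decide

theorem zmod2_add_eq_zero {a b : ZMod 2} : a + b = 0 ↔ a = b := by
  revert a b; decide

/-- A drawing whose vertices are pairwise disjoint blobs `B v` and whose edges are arcs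
`A e` with disjoint interiors; `c e i` is the `i`-th endpoint of `A e`, lying in the blob of the
vertex `t e i`. -/
structure BlobDrawing (V E : Type) where
  B : V → Set ℂ
  A : E → Set ℂ
  c : E → Bool → ℂ
  t : E → Bool → V
  blob : ∀ v, IsBlob (B v)
  arc : ∀ e, IsArc (A e) (c e false) (c e true)
  c_mem : ∀ e i, c e i ∈ B (t e i)
  t_ne : ∀ e, t e false ≠ t e true
  disjB : ∀ v w, v ≠ w → Disjoint (B v) (B w)
  disjAB : ∀ e v, Disjoint (A e \ {c e false, c e true}) (B v)
  disjAA : ∀ e f, e ≠ f →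
    Disjoint (A e \ {c e false, c e true}) (A f \ {c f false, c f true})

namespace BlobDrawing

variable {V E : Type} (D : BlobDrawing V E)

/-- The open arc of an edge. -/
def o (e : E) : Set ℂ := D.A e \ {D.c e false, D.c e true}

/-- The union of all blobs and of the arcs of the edges in `S`. -/
def K (S : Set E) : Set ℂ := (⋃ v, D.B v) ∪ ⋃ e ∈ S, D.A e

/-- The coboundary of a function on the vertices. -/
def δ (y : V → ZMod 2) (e : E) : ZMod 2 := y (D.t e false) + y (D.t e true)

/-- Cycles over the field with two elements, described by duality. -/
def IsCyc [Fintype E] (z : E → ZMod 2) : Prop := ∀ y : V → ZMod 2, ∑ e, z e * D.δ y e = 0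

/-- No nonzero cycle is supported on `S`. -/
def Forest [Fintype E] (S : Set E) : Prop := ∀ z, D.IsCyc z → (∀ e ∉ S, z e = 0) → z = 0

theorem Forest.mono [Fintype E] {S T : Set E} (h : D.Forest T) (hST : S ⊆ T) : D.Forest S :=
  fun z hz h0 => h z hz fun e he => h0 e fun hS => he (hST hS)

theorem c_mem_A (e : E) (i : Bool) : D.c e i ∈ D.A e := by
  cases i
  · exact (D.arc e).left_mem
  · exact (D.arc e).right_mem

theorem mem_A {e : E} {z : ℂ} (hz : z ∈ D.A e) : z ∈ D.o e ∨ ∃ i, z = D.c e i := by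
  by_cases h : z ∈ D.o e
  · exact Or.inl h
  · right
    simp only [o, mem_sdiff, not_and, not_not, mem_insert_iff, mem_singleton_iff] at h
    rcases h hz with h | h
    · exact ⟨_, h⟩
    · exact ⟨_, h⟩

theorem o_sub (e : E) : D.o e ⊆ D.A e := sdiff_subset

theorem B_sub_K (S : Set E) (v : V) : D.B v ⊆ D.K S :=
  fun _ hz => Or.inl (mem_iUnion.2 ⟨v, hz⟩)

theorem A_sub_K {S : Set E} {e : E} (he : e ∈ S) : D.A e ⊆ D.K S :=
  fun _ hz => Or.inr (mem_iUnion₂.2 ⟨e, he, hz⟩)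

theorem K_mono {S T : Set E} (h : S ⊆ T) : D.K S ⊆ D.K T :=
  union_subset_union_right _ (biUnion_subset_biUnion_left h)

theorem c_mem_K (S : Set E) (e : E) (i : Bool) : D.c e i ∈ D.K S :=
  D.B_sub_K S _ (D.c_mem e i)

theorem not_mem_B {e : E} {z : ℂ} (hz : z ∈ D.o e) (v : V) : z ∉ D.B v :=
  fun h => (D.disjAB e v).le_bot ⟨hz, h⟩

theorem not_mem_A {e f : E} (hef : e ≠ f) {z : ℂ} (hz : z ∈ D.o e) : z ∉ D.A f := by
  intro h
  rcases D.mem_A h with h | ⟨i, rfl⟩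
  · exact (D.disjAA e f hef).le_bot ⟨hz, h⟩
  · exact D.not_mem_B hz _ (D.c_mem f i)

theorem not_mem_K {S : Set E} {e : E} (he : e ∉ S) {z : ℂ} (hz : z ∈ D.o e) : z ∉ D.K S := by
  rintro (h | h)
  · obtain ⟨v, hv⟩ := mem_iUnion.1 h
    exact D.not_mem_B hz v hv
  · obtain ⟨f, hf, hzf⟩ := mem_iUnion₂.1 h
    exact D.not_mem_A (by rintro rfl; exact he hf) hz hzf

theorem mem_B_eq {v w : V} {z : ℂ} (h1 : z ∈ D.B v) (h2 : z ∈ D.B w) : v = w := by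
  by_contra h
  exact (D.disjB v w h).le_bot ⟨h1, h2⟩

theorem A_inter_B {e : E} {v : V} {z : ℂ} (h1 : z ∈ D.A e) (h2 : z ∈ D.B v) :
    ∃ i, z = D.c e i ∧ v = D.t e i := by
  rcases D.mem_A h1 with h | ⟨i, rfl⟩
  · exact (D.not_mem_B h v h2).elim
  · exact ⟨i, rfl, D.mem_B_eq h2 (D.c_mem e i)⟩

theorem K_compact [Finite V] [Finite E] (S : Set E) : IsCompact (D.K S) := by
  refine IsCompact.union ?_ ?_
  · exact isCompact_iUnion fun v => (D.blob v).compact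
  · exact (Set.toFinite S).isCompact_biUnion fun e _ => (D.arc e).compact

theorem K_insert (S : Set E) (e : E) : D.K (insert e S) = D.A e ∪ D.K S := by
  simp only [K, biUnion_insert]
  ext z
  simp only [mem_union]
  tauto

section J1
variable [Fintype E]

/-- Integral coboundaries on a forest are arbitrary. -/
theorem forest_coboundary [DecidableEq E] (S : Finset E) :
    D.Forest S → ∀ d : E → ℤ, ∃ N : V → ℤ, ∀ e ∈ S, N (D.t e true) - N (D.t e false) = d e := by
  classical
  induction S using Finset.induction_on with
  | empty => exact fun _ d => ⟨0, by simp⟩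
  | insert e₀ S he₀ ih =>
    intro hF d
    obtain ⟨N, hN⟩ := ih (hF.mono D (by simp)) d
    obtain ⟨y, hy⟩ : ∃ y : V → ZMod 2, (fun e => if e ∈ insert e₀ S then D.δ y e else 0) =
        Pi.single e₀ 1 := by
      let L : (V → ZMod 2) →ₗ[ZMod 2] (E → ZMod 2) :=
        { toFun := fun y e => if e ∈ insert e₀ S then D.δ y e else 0
          map_add' := fun y y' => by
            ext e
            simp only [δ, Pi.add_apply]
            split_ifs
            · ring
            · simp
          map_smul' := fun a y => by
            ext e
            simp only [δ, Pi.smul_apply, smul_eq_mul, RingHom.id_apply]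
            split_ifs
            · ring
            · simp }
      refine fredholm L _ fun z hz => ?_
      have hz0 := hF (fun e => if e ∈ insert e₀ S then z e else 0) (fun y => by
        refine Eq.trans ?_ (hz y)
        refine Finset.sum_congr rfl fun e _ => ?_
        simp only [L, LinearMap.coe_mk, AddHom.coe_mk]
        split_ifs <;> simp) (fun e he => by
          have : e ∉ insert e₀ S := by simpa using he
          simp only [this, if_false])
      have := congrFun hz0 e₀
      simp only [Finset.mem_insert_self, if_true, Pi.zero_apply] at this
      simp [Pi.single_apply, this]
    have hy0 : D.δ y e₀ = 1 := by simpa using congrFun hy e₀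
    have hyS : ∀ e ∈ S, D.δ y e = 0 := fun e he => by
      have := congrFun hy e
      have hne : e ≠ e₀ := fun h => he₀ (h ▸ he)
      simpa [he, hne] using this
    let Y : V → ℤ := fun v => if y v = 1 then 1 else 0
    obtain ⟨ε, hε⟩ : ∃ ε : ℤ, ε * (Y (D.t e₀ true) - Y (D.t e₀ false)) = 1 := by
      simp only [δ] at hy0
      rcases zmod2_cases (y (D.t e₀ true)) with h1 | h1 <;>
        rcases zmod2_cases (y (D.t e₀ false)) with h2 | h2 <;>
        simp only [Y, h1, h2] at hy0 ⊢ <;> revert hy0 <;> simp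
      exact ⟨-1, by norm_num⟩
    refine ⟨fun v => N v + ε * (d e₀ - (N (D.t e₀ true) - N (D.t e₀ false))) * Y v, ?_⟩
    intro e he
    rcases Finset.mem_insert.1 he with rfl | he
    · linear_combination (d e - (N (D.t e true) - N (D.t e false))) * hε
    · have h1 := hN e he
      have h2 := zmod2_add_eq_zero.1 (hyS e he)
      have h3 : Y (D.t e true) = Y (D.t e false) := by simp only [Y, h2]
      simp only [h3]
      linear_combination h1

/-- A forest carries only null-homotopic maps to `ℂ \ {0}`. -/
theorem forest_allLogs [Finite V] {S : Set E} (hF : D.Forest S) : AllLogs (D.K S) := by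
  classical
  intro f hf h0
  have hB : ∀ v, ∃ g : ℂ → ℂ, ContinuousOn g (D.B v) ∧ ∀ z ∈ D.B v, Complex.exp (g z) = f z :=
    fun v => (D.blob v).logs f (hf.mono (D.B_sub_K S v)) fun z hz => h0 z (D.B_sub_K S v hz)
  choose g hg hgf using hB
  have hA : ∀ e, ∃ g : ℂ → ℂ, e ∈ S → ContinuousOn g (D.A e) ∧
      ∀ z ∈ D.A e, Complex.exp (g z) = f z := fun e => by
    by_cases he : e ∈ S
    · obtain ⟨g, hg⟩ := (D.arc e).logs f (hf.mono (D.A_sub_K he))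
        fun z hz => h0 z (D.A_sub_K he hz)
      exact ⟨g, fun _ => hg⟩
    · exact ⟨0, fun h => (he h).elim⟩
  choose h hh using hA
  have hn : ∀ e i, ∃ n : ℤ, e ∈ S →
      h e (D.c e i) = g (D.t e i) (D.c e i) + n * (2 * Real.pi * Complex.I) := fun e i => by
    by_cases he : e ∈ S
    · obtain ⟨n, hn⟩ := Complex.exp_eq_exp_iff_exists_int.1
        (((hh e he).2 _ (D.c_mem_A e i)).trans (hgf _ _ (D.c_mem e i)).symm)
      exact ⟨n, fun _ => hn⟩
    · exact ⟨0, fun h => (he h).elim⟩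
  choose n hn using hn
  obtain ⟨N, hN⟩ := D.forest_coboundary (Set.toFinite S).toFinset (by simpa using hF)
    (fun e => n e true - n e false)
  have hN' : ∀ e ∈ S, N (D.t e true) - N (D.t e false) = n e true - n e false :=
    fun e he => hN e (by simpa using he)
  let G : ℂ → ℂ := fun z =>
    if hz : ∃ v, z ∈ D.B v then g hz.choose z + N hz.choose * (2 * Real.pi * Complex.I)
    else if hz : ∃ e ∈ S, z ∈ D.A e then
      h hz.choose z + (N (D.t hz.choose false) - n hz.choose false : ℤ) * (2 * Real.pi * Complex.I)
    else 0
  have GB : ∀ v, ∀ z ∈ D.B v, G z = g v z + N v * (2 * Real.pi * Complex.I) := by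
    intro v z hz
    have hex : ∃ v, z ∈ D.B v := ⟨v, hz⟩
    have : hex.choose = v := D.mem_B_eq hex.choose_spec hz
    simp only [G, dif_pos hex, this]
  have GA : ∀ e ∈ S, ∀ z ∈ D.A e, G z =
      h e z + (N (D.t e false) - n e false : ℤ) * (2 * Real.pi * Complex.I) := by
    intro e he z hz
    rcases D.mem_A hz with hzo | ⟨i, rfl⟩
    · have hex : ¬ ∃ v, z ∈ D.B v := fun ⟨v, hv⟩ => D.not_mem_B hzo v hv
      have hex' : ∃ e ∈ S, z ∈ D.A e := ⟨e, he, hz⟩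
      have : hex'.choose = e := by
        by_contra hne
        exact D.not_mem_A (Ne.symm hne) hzo hex'.choose_spec.2
      simp only [G, dif_neg hex, dif_pos hex', this]
    · rw [GB _ _ (D.c_mem e i), hn e i he]
      have h1 := hN' e he
      have h2 : N (D.t e i) = n e i + (N (D.t e false) - n e false) := by
        cases i
        · ring
        · linear_combination h1
      rw [h2]
      push_cast
      ring
  have hexp : ∀ (m : ℤ) (w : ℂ), Complex.exp (w + m * (2 * Real.pi * Complex.I)) =
      Complex.exp w := fun m w => Complex.exp_eq_exp_iff_exists_int.2 ⟨m, rfl⟩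
  refine ⟨G, ?_, ?_⟩
  · refine ContinuousOn.union_of_isClosed ?_ ?_ ?_ ?_
    · refine (locallyFinite_of_finite _).continuousOn_iUnion
        (fun v => (D.blob v).compact.isClosed) fun v => ?_
      exact ((hg v).add continuousOn_const).congr (GB v)
    · rw [biUnion_eq_iUnion]
      refine (locallyFinite_of_finite _).continuousOn_iUnion
        (fun e => (D.arc e).compact.isClosed) fun e => ?_
      exact ((hh e e.2).1.add continuousOn_const).congr (GA e e.2)
    · exact isClosed_iUnion_of_finite fun v => (D.blob v).compact.isClosed
    · exact (Set.toFinite S).isClosed_biUnion fun e _ => (D.arc e).compact.isClosed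
  · rintro z (hz | hz)
    · obtain ⟨v, hv⟩ := mem_iUnion.1 hz
      rw [GB v z hv, hexp, hgf v z hv]
    · obtain ⟨e, he, hze⟩ := mem_iUnion₂.1 hz
      rw [GA e he z hze, hexp, (hh e he).2 z hze]

theorem forest_isPreconnected [Finite V] {S : Set E} (hF : D.Forest S) :
    IsPreconnected (D.K S)ᶜ :=
  (D.forest_allLogs hF).isPreconnected_compl (D.K_compact S)

end J1

end BlobDrawing
end BAP

/-! ### Cycles separate the plane -/

namespace BAP

/-- `(z - p) / (z - q)` winds around `p`, so it has no logarithm on the plane minus `p, q`. -/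
theorem not_hasLog_compl_pair {p q : ℂ} (hpq : p ≠ q) :
    ¬ HasLog (fun z => (z - p) / (z - q)) {p, q}ᶜ := by
  intro h
  have hd : 0 < ‖p - q‖ := norm_pos_iff.2 (sub_ne_zero.2 hpq)
  set r := ‖p - q‖ / 2 with hr
  have hr0 : 0 < r := by positivity
  have hpq' : p - q ≠ 0 := sub_ne_zero.2 hpq
  have hlt : ∀ z ∈ Metric.sphere p r, ‖(z - p) / (p - q)‖ < 1 := fun z hz => by
    rw [mem_sphere_iff_norm] at hz
    rw [norm_div, hz, div_lt_one hd]
    linarith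
  have h1 : HasLog (fun z => z - q) (Metric.sphere p r) := by
    refine ⟨fun z => Complex.log (1 + (z - p) / (p - q)) + Complex.log (p - q), ?_, fun z hz => ?_⟩
    · refine ContinuousOn.add (ContinuousOn.clog (by fun_prop) fun z hz => ?_) continuousOn_const
      exact Complex.mem_slitPlane_of_norm_lt_one (hlt z hz)
    · rw [Complex.exp_add, Complex.exp_log, Complex.exp_log hpq']
      · field_simp
        ring
      · exact Complex.slitPlane_ne_zero (Complex.mem_slitPlane_of_norm_lt_one (hlt z hz))
  have hsub : Metric.sphere p r ⊆ ({p, q}ᶜ : Set ℂ) := by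
    intro z hz hz'
    rw [mem_sphere_iff_norm] at hz
    rcases hz' with rfl | hz'
    · rw [sub_self, norm_zero] at hz
      linarith
    · rw [mem_singleton_iff.1 hz', norm_sub_rev] at hz
      linarith
  refine not_hasLog_sphere (p := p) (k := 1) hr0 one_ne_zero (((h.mono hsub).mul h1).congr ?_)
  intro z hz
  have : z - q ≠ 0 := fun h0 => hsub hz (by rw [sub_eq_zero.1 h0]; simp)
  simp [this]

theorem const_of_locally {X Y : Type*} [TopologicalSpace X] {T : Set X} (hT : IsPreconnected T)
    {Γ : X → Y} (h : ∀ z ∈ T, ∀ᶠ w in nhds z, Γ w = Γ z) {x y : X} (hx : x ∈ T) (hy : y ∈ T) :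
    Γ x = Γ y := by
  let _ : TopologicalSpace Y := ⊥
  have : DiscreteTopology Y := ⟨rfl⟩
  refine hT.constant (f := Γ) (fun z hz => ?_) hx hy
  have : ContinuousAt Γ z := by
    rw [ContinuousAt, nhds_discrete Y, Filter.tendsto_pure]
    exact h z hz
  exact this.continuousWithinAt

namespace BlobDrawing
variable {V E : Type} (D : BlobDrawing V E)

/-- The union of the blobs and the arcs of a nonzero cycle separates the plane. -/
theorem cycle_not_isPreconnected [Finite V] [Fintype E] {z₀ : E → ZMod 2} (hz₀ : D.IsCyc z₀)
    (hne : z₀ ≠ 0) : ¬ IsPreconnected (D.K {e | z₀ e ≠ 0})ᶜ := by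
  classical
  intro hpre
  obtain ⟨e₀, he₀⟩ : ∃ e, z₀ e ≠ 0 := by
    by_contra h
    push Not at h
    exact hne (funext h)
  set T : Set E := {e | z₀ e ≠ 0} \ {e₀} with hT
  have hins : {e | z₀ e ≠ 0} = insert e₀ T := by
    rw [hT, insert_sdiff_singleton, insert_eq_of_mem]
    exact he₀
  rw [hins, K_insert] at hpre
  have heT : e₀ ∉ T := fun h => h.2 rfl
  set c₁ := D.c e₀ false
  set c₂ := D.c e₀ true
  have hc12 : c₁ ≠ c₂ := (D.arc e₀).ne
  -- logarithm off the arc of `e₀`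
  have path_log : ∀ {P : Set ℂ} {L : Set ℂ}, IsPathConnected P → P ⊆ L → ∀ {p q : ℂ}, p ∈ P →
      q ∈ P → HasLog (fun z => (z - p) / (z - q)) Lᶜ := by
    intro P L hP hPL p q hp hq
    have hj := hP.joinedIn _ hq _ hp
    exact hasLog_path hj.somePath fun t ht => ht (hPL (hj.somePath_mem t))
  obtain ⟨g, hg, hgf⟩ : HasLog (fun z => (z - c₁) / (z - c₂)) (D.A e₀)ᶜ :=
    path_log (D.arc e₀).path Subset.rfl (D.c_mem_A _ _) (D.c_mem_A _ _)
  -- logarithm off the rest of the cycle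
  have trans : ∀ {p q r : ℂ}, p ∈ D.K T → q ∈ D.K T → r ∈ D.K T →
      HasLog (fun z => (z - p) / (z - q)) (D.K T)ᶜ →
      HasLog (fun z => (z - q) / (z - r)) (D.K T)ᶜ →
      HasLog (fun z => (z - p) / (z - r)) (D.K T)ᶜ := by
    intro p q r _ hq _ h1 h2
    refine (h1.mul h2).congr fun z hz => ?_
    have : z - q ≠ 0 := fun h => hz (by rw [sub_eq_zero.1 h]; exact hq)
    exact div_mul_div_cancel₀ this
  let y : V → ZMod 2 := fun v =>
    if ∀ q ∈ D.B v, HasLog (fun z => (z - c₁) / (z - q)) (D.K T)ᶜ then 1 else 0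
  have step : ∀ e ∈ T, ∀ i, (∀ q ∈ D.B (D.t e i), HasLog (fun z => (z - c₁) / (z - q)) (D.K T)ᶜ) →
      ∀ q ∈ D.B (D.t e (!i)), HasLog (fun z => (z - c₁) / (z - q)) (D.K T)ᶜ := by
    intro e he i hi q hq
    have hc1 := D.c_mem_K T e₀ false
    have h1 := hi _ (D.c_mem e i)
    have h2 := path_log (D.arc e).path (D.A_sub_K he) (D.c_mem_A e i) (D.c_mem_A e (!i))
    have h3 := path_log (D.blob _).path (D.B_sub_K T _) (D.c_mem e (!i)) hq
    have hq' := D.B_sub_K T _ hq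
    exact trans hc1 (D.c_mem_K T e _) hq' (trans hc1 (D.c_mem_K T e _) (D.c_mem_K T e _) h1 h2) h3
  have hyT : ∀ e ∈ T, D.δ y e = 0 := by
    intro e he
    rw [δ, zmod2_add_eq_zero]
    have : (∀ q ∈ D.B (D.t e false), HasLog (fun z => (z - c₁) / (z - q)) (D.K T)ᶜ) ↔
        (∀ q ∈ D.B (D.t e true), HasLog (fun z => (z - c₁) / (z - q)) (D.K T)ᶜ) :=
      ⟨step e he false, step e he true⟩
    simp only [y, this]
  have hy0 : D.δ y e₀ = 0 := by
    have h1 := hz₀ y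
    rw [Finset.sum_eq_single e₀] at h1
    · rcases mul_eq_zero.1 h1 with h | h
      · exact (he₀ h).elim
      · exact h
    · intro e _ hee
      by_cases hze : z₀ e = 0
      · rw [hze, zero_mul]
      · rw [hyT e ⟨hze, hee⟩, mul_zero]
    · simp
  obtain ⟨h, hh, hhf⟩ : HasLog (fun z => (z - c₁) / (z - c₂)) (D.K T)ᶜ := by
    have h1 : ∀ q ∈ D.B (D.t e₀ false), HasLog (fun z => (z - c₁) / (z - q)) (D.K T)ᶜ :=
      fun q hq => path_log (D.blob _).path (D.B_sub_K T _) (D.c_mem e₀ false) hq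
    have h2 := zmod2_add_eq_zero.1 hy0
    simp only [y] at h2
    rw [if_pos h1] at h2
    by_contra hcon
    rw [if_neg] at h2
    · exact one_ne_zero h2
    · exact fun h => hcon (h _ (D.c_mem e₀ true))
  have hA : IsClosed (D.A e₀) := (D.arc e₀).compact.isClosed
  have hK : IsClosed (D.K T) := (D.K_compact T).isClosed
  rw [compl_union] at hpre
  obtain ⟨n, hn⟩ := exists_int_of_exp_eq hpre (hg.mono inter_subset_left)
    (hh.mono inter_subset_right) (fun z hz => (hgf z hz.1).trans (hhf z hz.2).symm)
  refine not_hasLog_compl_pair hc12 ?_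
  refine ⟨fun z => if z ∈ D.A e₀ then h z + n * (2 * Real.pi * Complex.I) else g z, ?_, ?_⟩
  · have hu : ({c₁, c₂}ᶜ : Set ℂ) ⊆ (D.A e₀)ᶜ ∪ (D.K T)ᶜ := by
      intro z hz
      by_cases hzA : z ∈ D.A e₀
      · exact Or.inr (D.not_mem_K heT ⟨hzA, hz⟩)
      · exact Or.inl hzA
    refine ContinuousOn.mono ?_ hu
    refine ContinuousOn.union_of_isOpen ?_ ?_ hA.isOpen_compl hK.isOpen_compl
    · exact hg.congr fun z hz => if_neg hz
    · refine (hh.add (continuousOn_const (c := n * (2 * Real.pi * Complex.I)))).congr fun z hz => ?_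
      by_cases hzA : z ∈ D.A e₀
      · simp only [if_pos hzA, Pi.add_apply]
      · simp only [if_neg hzA]
        exact hn z ⟨hzA, hz⟩
  · intro z hz
    by_cases hzA : z ∈ D.A e₀
    · simp only [if_pos hzA]
      refine Eq.trans ?_ (hhf z (D.not_mem_K heT ⟨hzA, hz⟩))
      exact Complex.exp_eq_exp_iff_exists_int.2 ⟨n, rfl⟩
    · simp only [if_neg hzA]
      exact hgf z hzA

/-- The complementary component of the whole drawing containing `p`. -/
def face (p : ℂ) : Set ℂ := connectedComponentIn (D.K univ)ᶜ p

variable [Finite V] [Fintype E]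

theorem face_open (p : ℂ) : IsOpen (D.face p) :=
  (D.K_compact univ).isClosed.isOpen_compl.connectedComponentIn

/-- Every point of an open arc is a limit of points off the drawing. -/
theorem exists_near (e : E) {z : ℂ} (hz : z ∈ D.o e) {N : Set ℂ} (hN : N ∈ nhds z) :
    ∃ p ∈ N, p ∉ D.K univ := by
  classical
  have hcl : (D.K {e}ᶜ)ᶜ ∈ nhds z := (D.K_compact _).isClosed.isOpen_compl.mem_nhds
    (D.not_mem_K (by simp) hz)
  by_contra hcon
  push Not at hcon
  have hsub : N ∩ (D.K {e}ᶜ)ᶜ ⊆ D.A e := by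
    rintro w ⟨hwN, hwK⟩
    have h1 := hcon w hwN
    have h2 : (univ : Set E) = insert e {e}ᶜ := by
      ext x
      simp [em]
    rw [h2, K_insert] at h1
    exact h1.resolve_right hwK
  have h3 : z ∈ interior (D.A e) := mem_interior_iff_mem_nhds.2
    (Filter.mem_of_superset (Filter.inter_mem hN hcl) hsub)
  rw [(D.arc e).int_empty] at h3
  exact h3

/-- A face touching an edge lies in the component of the edge after its removal. -/
theorem touch_sub {e : E} {z p : ℂ} (hz : z ∈ D.o e) (hp : p ∉ D.K univ)
    (ht : (closure (D.face p) ∩ D.o e).Nonempty) :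
    p ∈ connectedComponentIn (D.K {e}ᶜ)ᶜ z := by
  obtain ⟨x, hx1, hx2⟩ := ht
  have ho : IsOpen (connectedComponentIn (D.K {e}ᶜ)ᶜ z) :=
    (D.K_compact _).isClosed.isOpen_compl.connectedComponentIn
  have hoe : D.o e ⊆ (D.K {e}ᶜ)ᶜ := fun w hw => D.not_mem_K (by simp) hw
  have hxm : x ∈ connectedComponentIn (D.K {e}ᶜ)ᶜ z :=
    (D.arc e).conn.subset_connectedComponentIn hz hoe hx2
  obtain ⟨w, hw1, hw2⟩ := mem_closure_iff.1 hx1 _ ho hxm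
  rw [connectedComponentIn_eq hw1]
  refine (isPreconnected_connectedComponentIn (x := p) (F := (D.K univ)ᶜ)).subset_connectedComponentIn
    hw2 ((connectedComponentIn_subset _ _).trans ?_) (mem_connectedComponentIn hp)
  exact compl_subset_compl.2 (D.K_mono (subset_univ _))

/-- At most two faces touch an edge. -/
theorem touch_le_two {e : E} {p : Fin 3 → ℂ} (hp : ∀ i, p i ∉ D.K univ)
    (ht : ∀ i, (closure (D.face (p i)) ∩ D.o e).Nonempty) :
    D.face (p 0) = D.face (p 1) ∨ D.face (p 0) = D.face (p 2) ∨ D.face (p 1) = D.face (p 2) := by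
  classical
  have hKc := D.K_compact univ
  have hLc := D.K_compact {e}ᶜ
  have hKL : D.K univ = D.A e ∪ D.K {e}ᶜ := by
    rw [← K_insert]
    congr 1
    ext x
    simp [em]
  have hnz : ∀ i, ∀ z ∈ D.K univ, z - p i ≠ 0 := fun i z hz h =>
    hp i (by rw [← sub_eq_zero.1 h]; exact hz)
  obtain ⟨x, hx⟩ := (D.arc e).nonempty
  have hcomp : ∀ i, p i ∈ connectedComponentIn (D.K {e}ᶜ)ᶜ x := fun i => D.touch_sub hx (hp i) (ht i)
  -- for each `i`, a logarithm on either piece, and the discrepancy at the two common points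
  have data : ∀ i, ∃ (g h : ℂ → ℂ) (m : Bool → ℤ), ContinuousOn g (D.K {e}ᶜ) ∧
      ContinuousOn h (D.A e) ∧ (∀ z ∈ D.K {e}ᶜ, Complex.exp (g z) = (z - p 0) / (z - p i)) ∧
      (∀ z ∈ D.A e, Complex.exp (h z) = (z - p 0) / (z - p i)) ∧
      ∀ j, g (D.c e j) = h (D.c e j) + m j * (2 * Real.pi * Complex.I) := by
    intro i
    have h1 : HasLog (fun z => (z - p 0) / (z - p i)) (D.K {e}ᶜ) := by
      refine hasLog_of_mem_component hLc.isClosed ?_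
      rw [← connectedComponentIn_eq (hcomp 0)]
      exact hcomp i
    have h2 : HasLog (fun z => (z - p 0) / (z - p i)) (D.A e) := by
      have hs : D.A e ⊆ D.K univ := D.A_sub_K (mem_univ e)
      refine (D.arc e).logs _ (ContinuousOn.div (by fun_prop) (by fun_prop) ?_) ?_
      · exact fun z hz => hnz i z (hs hz)
      · exact fun z hz => div_ne_zero (hnz 0 z (hs hz)) (hnz i z (hs hz))
    obtain ⟨g, hg, hgf⟩ := h1
    obtain ⟨h, hh, hhf⟩ := h2
    have := fun j => Complex.exp_eq_exp_iff_exists_int.1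
      ((hgf _ (D.c_mem_K _ e j)).trans (hhf _ (D.c_mem_A e j)).symm)
    choose m hm using this
    exact ⟨g, h, m, hg, hh, hgf, hhf, hm⟩
  choose g h m hg hh hgf hhf hm using data
  let d : Fin 3 → ℤ := fun i => m i true - m i false
  -- combinations without total discrepancy have a logarithm on the whole drawing
  have comb : ∀ (k l : ℤ), k * d 1 + l * d 2 = 0 →
      HasLog (fun z => ((z - p 0) / (z - p 1)) ^ k * ((z - p 0) / (z - p 2)) ^ l) (D.K univ) := by
    intro k l hkl
    rw [hKL]
    refine hasLog_union (g := fun z => k * h 1 z + l * h 2 z +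
        (k * m 1 false + l * m 2 false : ℤ) * (2 * Real.pi * Complex.I))
      (h := fun z => k * g 1 z + l * g 2 z) (D.arc e).compact.isClosed hLc.isClosed ?_ ?_ ?_ ?_ ?_
    · exact (((hh 1).const_mul _).add ((hh 2).const_mul _)).add continuousOn_const
    · exact ((hg 1).const_mul _).add ((hg 2).const_mul _)
    · intro z hz
      rw [← hhf 1 z hz, ← hhf 2 z hz, ← Complex.exp_int_mul, ← Complex.exp_int_mul,
        ← Complex.exp_add]
      exact Complex.exp_eq_exp_iff_exists_int.2 ⟨_, rfl⟩
    · intro z hz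
      rw [← hgf 1 z hz, ← hgf 2 z hz, ← Complex.exp_int_mul, ← Complex.exp_int_mul,
        ← Complex.exp_add]
    · rintro z ⟨hz1, hz2⟩
      rcases D.mem_A hz1 with hzo | ⟨j, rfl⟩
      · exact (D.not_mem_K (by simp) hzo hz2).elim
      · simp only [hm]
        have : k * m 1 false + l * m 2 false = k * m 1 j + l * m 2 j := by
          cases j
          · rfl
          · simp only [d] at hkl
            linear_combination -hkl
        rw [this]
        push_cast
        ring
  have eq_of : ∀ {p q : ℂ}, q ∈ connectedComponentIn (D.K univ)ᶜ p → D.face p = D.face q :=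
    fun h => connectedComponentIn_eq h
  by_cases h1 : d 1 = 0
  · left
    refine eq_of (mem_component_of_hasLog hKc (hp 0) (hp 1) ?_)
    exact (comb 1 0 (by simp [h1])).congr fun z _ => by simp
  by_cases h2 : d 2 = 0
  · right; left
    refine eq_of (mem_component_of_hasLog hKc (hp 0) (hp 2) ?_)
    exact (comb 0 1 (by simp [h2])).congr fun z _ => by simp
  by_contra hcon
  push Not at hcon
  have hnot : ∀ i j, D.face (p i) ≠ D.face (p j) → ∀ z ∈ closure (D.face (p i)), z - p j ≠ 0 := by
    intro i j hij z hz h0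
    rw [sub_eq_zero.1 h0] at hz
    rcases closure_component_subset hKc.isClosed _ hz with h | h
    · exact hij (eq_of h)
    · exact hp j h
  have hlog := comb (d 2) (-d 1) (by ring)
  rcases bounded_or_bounded hKc (p := p 1) (q := p 2) (fun h => hcon.2.2 (eq_of h)) with hb | hb
  · have n0 := hnot 1 0 hcon.1.symm
    have n2 := hnot 1 2 hcon.2.2
    refine no_log_of_bounded hKc.isClosed (hp 1) hb (neg_ne_zero.2 h2)
      (w := fun z => (z - p 0) ^ d 2 * ((z - p 0) / (z - p 2)) ^ (-d 1)) ?_ ?_ (hlog.congr ?_)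
    · refine ContinuousOn.mul ?_ ?_
      · exact (by fun_prop : ContinuousOn (fun z : ℂ => z - p 0) _).zpow₀ _
          fun z hz => Or.inl (n0 z hz)
      · exact (ContinuousOn.div (by fun_prop) (by fun_prop) n2).zpow₀ _
          fun z hz => Or.inl (div_ne_zero (n0 z hz) (n2 z hz))
    · exact fun z hz => mul_ne_zero (zpow_ne_zero _ (n0 z hz))
        (zpow_ne_zero _ (div_ne_zero (n0 z hz) (n2 z hz)))
    · intro z _
      simp only [div_zpow, zpow_neg]
      field_simp
  · have n0 := hnot 2 0 hcon.2.1.symm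
    have n1 := hnot 2 1 hcon.2.2.symm
    refine no_log_of_bounded hKc.isClosed (hp 2) hb h1
      (w := fun z => (z - p 0) ^ (-d 1) * ((z - p 0) / (z - p 1)) ^ (d 2)) ?_ ?_ (hlog.congr ?_)
    · refine ContinuousOn.mul ?_ ?_
      · exact (by fun_prop : ContinuousOn (fun z : ℂ => z - p 0) _).zpow₀ _
          fun z hz => Or.inl (n0 z hz)
      · exact (ContinuousOn.div (by fun_prop) (by fun_prop) n1).zpow₀ _
          fun z hz => Or.inl (div_ne_zero (n0 z hz) (n1 z hz))
    · exact fun z hz => mul_ne_zero (zpow_ne_zero _ (n0 z hz))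
        (zpow_ne_zero _ (div_ne_zero (n0 z hz) (n1 z hz)))
    · intro z hz
      have := hnz 2 z hz
      simp only [div_zpow, zpow_neg]
      field_simp

end BlobDrawing
end BAP

/-! ### Faces and the cycle space -/

namespace BAP
namespace BlobDrawing
variable {V E : Type} (D : BlobDrawing V E)

/-- The faces of the drawing. -/
def Face : Type := {U : Set ℂ // ∃ p, p ∉ D.K univ ∧ U = D.face p}

/-- The face containing a point off the drawing. -/
def mkFace {p : ℂ} (hp : p ∉ D.K univ) : D.Face := ⟨D.face p, p, hp, rfl⟩

/-- The face `U` has a point of the open arc of `e` in its closure. -/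
def Touch (U : D.Face) (e : E) : Prop := (closure U.1 ∩ D.o e).Nonempty

variable [Finite V] [Fintype E]

theorem exists_ball {e : E} {z : ℂ} (hz : z ∈ D.o e) :
    ∃ N : Set ℂ, N ∈ nhds z ∧ IsPreconnected N ∧ N ⊆ (D.K {e}ᶜ)ᶜ := by
  have hcl : (D.K {e}ᶜ)ᶜ ∈ nhds z := (D.K_compact _).isClosed.isOpen_compl.mem_nhds
    (D.not_mem_K (by simp) hz)
  obtain ⟨ε, hε, h⟩ := Metric.mem_nhds_iff.1 hcl
  exact ⟨_, Metric.ball_mem_nhds z hε, Metric.isPreconnected_ball, h⟩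

theorem K_univ_eq (e : E) : D.K univ = D.A e ∪ D.K {e}ᶜ := by
  rw [← K_insert]
  congr 1
  ext x
  simp [em]

theorem mem_o_of_mem_K {e : E} {z : ℂ} (h1 : z ∈ D.K univ) (h2 : z ∉ D.K {e}ᶜ) : z ∈ D.o e := by
  rw [D.K_univ_eq e] at h1
  rcases D.mem_A (h1.resolve_right h2) with h | ⟨i, rfl⟩
  · exact h
  · exact (h2 (D.c_mem_K _ e i)).elim

theorem touch_of_ball {e : E} {z p : ℂ} (hz : z ∈ D.o e) {N : Set ℂ} (hzN : z ∈ N)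
    (hN : IsPreconnected N) (hNK : N ⊆ (D.K {e}ᶜ)ᶜ) (hpN : p ∈ N) (hp : p ∉ D.K univ) :
    D.Touch (D.mkFace hp) e := by
  by_contra hcon
  have hsub : N ⊆ D.face p := by
    refine hN.subset_of_closure_inter_subset (D.face_open p)
      ⟨p, hpN, mem_connectedComponentIn hp⟩ ?_
    rintro w ⟨hw, hwN⟩
    rcases closure_component_subset (D.K_compact univ).isClosed p hw with h | h
    · exact h
    · exact (hcon ⟨w, hw, D.mem_o_of_mem_K h (hNK hwN)⟩).elim
  exact connectedComponentIn_subset _ _ (hsub hzN) (D.A_sub_K (mem_univ e) hz.1)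

theorem exists_sides (e : E) : ∃ s : Bool → D.Face,
    (∀ i, D.Touch (s i) e) ∧ ∀ U : D.Face, D.Touch U e → ∃ i, U = s i := by
  classical
  obtain ⟨z, hz⟩ := (D.arc e).nonempty
  obtain ⟨N, hN, hNc, hNK⟩ := D.exists_ball hz
  obtain ⟨p, hpN, hp⟩ := D.exists_near e hz hN
  have h0 := D.touch_of_ball hz (mem_of_mem_nhds hN) hNc hNK hpN hp
  by_cases h : ∃ U, D.Touch U e ∧ U ≠ D.mkFace hp
  · obtain ⟨U, hU, hne⟩ := h
    refine ⟨fun i => if i then U else D.mkFace hp, fun i => ?_, fun W hW => ?_⟩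
    · cases i <;> simpa
    obtain ⟨_, q, hq, rfl⟩ := U
    obtain ⟨_, r, hr, rfl⟩ := W
    have := D.touch_le_two (e := e) (p := ![p, q, r])
      (by intro i; fin_cases i <;> assumption) (by intro i; fin_cases i <;> assumption)
    rcases this with h | h | h
    · exact (hne (Subtype.ext h.symm)).elim
    · exact ⟨false, Subtype.ext h.symm⟩
    · exact ⟨true, Subtype.ext h.symm⟩
  · push Not at h
    exact ⟨fun _ => D.mkFace hp, fun _ => h0, fun U hU => ⟨true, h U hU⟩⟩

/-- The two (possibly equal) faces along an edge. -/
noncomputable def side (e : E) : Bool → D.Face := (D.exists_sides e).choose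

theorem side_spec {e : E} {U : D.Face} (h : D.Touch U e) : ∃ i, U = D.side e i :=
  (D.exists_sides e).choose_spec.2 U h

theorem side_touch (e : E) (i : Bool) : D.Touch (D.side e i) e :=
  (D.exists_sides e).choose_spec.1 i

/-- Both faces along an edge outside `S` lie in the component of `(K S)ᶜ` containing the edge. -/
theorem side_component {S : Set E} {e : E} (he : e ∉ S) {z : ℂ} (hz : z ∈ D.o e) (i : Bool) :
    ∃ p, ∃ hp : p ∉ D.K univ, D.side e i = D.mkFace hp ∧
      p ∈ connectedComponentIn (D.K S)ᶜ z := by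
  obtain ⟨w, hw, hwe⟩ := D.side_touch e i
  have hwS : w ∈ (D.K S)ᶜ := D.not_mem_K he hwe
  obtain ⟨v, hv, hvU⟩ := mem_closure_iff.1 hw _
    ((D.K_compact S).isClosed.isOpen_compl.connectedComponentIn (x := w))
    (mem_connectedComponentIn hwS)
  obtain ⟨p, hp, h⟩ := (D.side e i).2
  have hvK : v ∉ D.K univ := by
    rw [h] at hvU
    exact connectedComponentIn_subset _ _ hvU
  refine ⟨v, hvK, Subtype.ext (h.trans ?_), ?_⟩
  · rw [h] at hvU
    exact connectedComponentIn_eq hvU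
  · have hwz : w ∈ connectedComponentIn (D.K S)ᶜ z :=
      (D.arc e).conn.subset_connectedComponentIn hz (fun x hx => D.not_mem_K he hx) hwe
    rwa [connectedComponentIn_eq hwz]

/-- The coboundary of a function on the faces. -/
noncomputable def d (γ : D.Face → ZMod 2) (e : E) : ZMod 2 :=
  γ (D.side e false) + γ (D.side e true)

theorem forest_empty : D.Forest ∅ := fun _ _ h => funext fun e => h e (notMem_empty e)

instance face_finite : Finite D.Face := by
  have hsub : (univ : Set D.Face) ⊆ (range fun x : E × Bool => D.side x.1 x.2) ∪
      {U | U.1 = (D.K ∅)ᶜ} := by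
    rintro U -
    by_cases h : ∃ e, D.Touch U e
    · obtain ⟨e, he⟩ := h
      obtain ⟨i, hi⟩ := D.side_spec he
      exact Or.inl ⟨(e, i), hi.symm⟩
    · right
      push Not at h
      obtain ⟨_, p, hp, rfl⟩ := U
      have hK : D.K ∅ ⊆ D.K univ := D.K_mono (empty_subset _)
      refine Subset.antisymm ((connectedComponentIn_subset _ _).trans (compl_subset_compl.2 hK)) ?_
      refine (D.forest_isPreconnected D.forest_empty).subset_of_closure_inter_subset
        (D.face_open p) ⟨p, fun hp' => hp (hK hp'), mem_connectedComponentIn hp⟩ ?_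
      rintro w ⟨hw, hwN⟩
      rcases closure_component_subset (D.K_compact univ).isClosed p hw with h' | h'
      · exact h'
      · exfalso
        rcases h' with h' | h'
        · exact hwN (Or.inl h')
        · obtain ⟨e, -, he⟩ := mem_iUnion₂.1 h'
          rcases D.mem_A he with ho | ⟨i, rfl⟩
          · exact h e ⟨w, hw, ho⟩
          · exact hwN (D.c_mem_K _ e i)
  rw [← Set.finite_univ_iff]
  refine Set.Finite.subset (Set.Finite.union (Set.finite_range _) ?_) hsub
  exact Set.Subsingleton.finite fun U hU W hW => Subtype.ext (Eq.trans hU (Eq.symm hW))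

/-- A function on the faces which is constant across all edges outside `S` extends to a
locally constant function off the subdrawing `K S`. -/
theorem exists_extension (γ : D.Face → ZMod 2) {S : Set E} (hγ : ∀ e ∉ S, D.d γ e = 0) :
    ∃ Γ : ℂ → ZMod 2, (∀ p (hp : p ∉ D.K univ), Γ p = γ (D.mkFace hp)) ∧
      (∀ e ∉ S, ∀ z ∈ D.o e, ∀ i, Γ z = γ (D.side e i)) ∧
      ∀ z ∈ (D.K S)ᶜ, ∀ᶠ w in nhds z, Γ w = Γ z := by
  classical
  let Γ : ℂ → ZMod 2 := fun z =>
    if hz : z ∉ D.K univ then γ (D.mkFace hz)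
    else if hz : ∃ e ∉ S, z ∈ D.o e then γ (D.side hz.choose false) else 0
  have h1 : ∀ p (hp : p ∉ D.K univ), Γ p = γ (D.mkFace hp) := fun p hp => by
    simp only [Γ, dif_pos hp]
  have h2 : ∀ e ∉ S, ∀ z ∈ D.o e, ∀ i, Γ z = γ (D.side e i) := by
    intro e he z hz i
    have hzK : ¬ z ∉ D.K univ := fun h => h (D.A_sub_K (mem_univ e) hz.1)
    have hex : ∃ e ∉ S, z ∈ D.o e := ⟨e, he, hz⟩
    have hc : hex.choose = e := by
      by_contra hne
      exact D.not_mem_A (Ne.symm hne) hz (D.o_sub _ hex.choose_spec.2)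
    simp only [Γ, dif_neg hzK, dif_pos hex, hc]
    cases i
    · rfl
    · exact zmod2_add_eq_zero.1 (hγ e he)
  refine ⟨Γ, h1, h2, fun z hz => ?_⟩
  by_cases hzK : z ∈ D.K univ
  · obtain ⟨e, he, hze⟩ : ∃ e ∉ S, z ∈ D.o e := by
      rcases hzK with h | h
      · exact (hz (Or.inl h)).elim
      · obtain ⟨e, -, he⟩ := mem_iUnion₂.1 h
        rcases D.mem_A he with ho | ⟨i, rfl⟩
        · exact ⟨e, fun heS => hz (D.A_sub_K heS he), ho⟩
        · exact (hz (D.c_mem_K _ e i)).elim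
    obtain ⟨N, hN, hNc, hNK⟩ := D.exists_ball hze
    filter_upwards [hN] with w hw
    by_cases hwK : w ∈ D.K univ
    · rw [h2 e he w (D.mem_o_of_mem_K hwK (hNK hw)) false, h2 e he z hze false]
    · obtain ⟨i, hi⟩ := D.side_spec (D.touch_of_ball hze (mem_of_mem_nhds hN) hNc hNK hw hwK)
      rw [h1 w hwK, hi, h2 e he z hze i]
  · filter_upwards [(D.face_open z).mem_nhds (mem_connectedComponentIn hzK)] with w hw
    have hwK : w ∉ D.K univ := connectedComponentIn_subset _ _ hw
    rw [h1 w hwK, h1 z hzK]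
    congr 1
    exact Subtype.ext (connectedComponentIn_eq hw).symm

theorem const_of_forest (γ : D.Face → ZMod 2) {S : Set E} (hS : D.Forest S)
    (hγ : ∀ e ∉ S, D.d γ e = 0) (U W : D.Face) : γ U = γ W := by
  obtain ⟨Γ, h1, -, h3⟩ := D.exists_extension γ hγ
  obtain ⟨_, p, hp, rfl⟩ := U
  obtain ⟨_, q, hq, rfl⟩ := W
  have hK : D.K S ⊆ D.K univ := D.K_mono (subset_univ _)
  have := const_of_locally (D.forest_isPreconnected hS) h3 (x := p) (y := q)
    (fun h => hp (hK h)) (fun h => hq (hK h))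
  rw [h1 p hp, h1 q hq] at this
  exact this

theorem isCyc_add {z z' : E → ZMod 2} (h : D.IsCyc z) (h' : D.IsCyc z') : D.IsCyc (z + z') := by
  intro y
  simp only [Pi.add_apply, add_mul, Finset.sum_add_distrib, h y, h' y, add_zero]

theorem d_add (γ γ' : D.Face → ZMod 2) : D.d (γ + γ') = D.d γ + D.d γ' := by
  ext e
  simp only [d, Pi.add_apply]
  ring

theorem d_eq_zero_of_const {γ : D.Face → ZMod 2} (h : ∀ U W, γ U = γ W) : D.d γ = 0 := by
  ext e
  exact zmod2_add_eq_zero.2 (h _ _)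

/-- A cycle of minimal support is a coboundary of faces: its arcs separate the plane, and the
indicator function of one of the parts has the right coboundary. -/
theorem minimal_cycle {z : E → ZMod 2} (hz : D.IsCyc z) (hne : z ≠ 0)
    (hmin : ∀ z', D.IsCyc z' → z' ≠ 0 → (∀ e, z e = 0 → z' e = 0) → z' = z) :
    ∃ γ, D.d γ = z := by
  classical
  set S : Set E := {e | z e ≠ 0} with hS
  have hnp := D.cycle_not_isPreconnected hz hne
  obtain ⟨p, hp, q, hq, hpq⟩ : ∃ p ∈ (D.K S)ᶜ, ∃ q ∈ (D.K S)ᶜ,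
      q ∉ connectedComponentIn (D.K S)ᶜ p := by
    by_contra hcon
    push Not at hcon
    rcases ((D.K S)ᶜ).eq_empty_or_nonempty with h | ⟨p, hp⟩
    · exact hnp (h ▸ isPreconnected_empty)
    · have : (D.K S)ᶜ = connectedComponentIn (D.K S)ᶜ p :=
        Subset.antisymm (hcon p hp) (connectedComponentIn_subset _ _)
      exact hnp (this ▸ isPreconnected_connectedComponentIn)
  have hopen : ∀ x, IsOpen (connectedComponentIn (D.K S)ᶜ x) := fun x =>
    (D.K_compact S).isClosed.isOpen_compl.connectedComponentIn
  have hKS : (D.K univ)ᶜ ⊆ (D.K S)ᶜ := compl_subset_compl.2 (D.K_mono (subset_univ _))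
  set C := connectedComponentIn (D.K S)ᶜ p with hC
  let γ : D.Face → ZMod 2 := fun U => if U.1 ⊆ C then 1 else 0
  have hsub : ∀ x ∉ D.K univ, D.face x ⊆ connectedComponentIn (D.K S)ᶜ x := fun x hx =>
    isPreconnected_connectedComponentIn.subset_connectedComponentIn (mem_connectedComponentIn hx)
      ((connectedComponentIn_subset _ _).trans hKS)
  have hγ1 : ∀ x (hx : x ∉ D.K univ), x ∈ C → γ (D.mkFace hx) = 1 := fun x hx hxC =>
    if_pos (by
      have := hsub x hx
      rwa [← connectedComponentIn_eq hxC] at this)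
  have hγ0 : ∀ x (hx : x ∉ D.K univ), x ∉ C → γ (D.mkFace hx) = 0 := fun x hx hxC =>
    if_neg fun h => hxC (h (mem_connectedComponentIn hx))
  have near : ∀ x ∉ D.K S, ∃ w, ∃ _ : w ∉ D.K univ, w ∈ connectedComponentIn (D.K S)ᶜ x := by
    intro x hx
    by_cases hxK : x ∈ D.K univ
    · obtain ⟨e, he⟩ : ∃ e, x ∈ D.o e := by
        rcases hxK with h | h
        · exact (hx (Or.inl h)).elim
        · obtain ⟨e, -, he⟩ := mem_iUnion₂.1 h
          rcases D.mem_A he with ho | ⟨i, rfl⟩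
          · exact ⟨e, ho⟩
          · exact (hx (D.c_mem_K _ e i)).elim
      obtain ⟨w, hw, hwK⟩ := D.exists_near e he ((hopen x).mem_nhds (mem_connectedComponentIn hx))
      exact ⟨w, hwK, hw⟩
    · exact ⟨x, hxK, mem_connectedComponentIn hx⟩
  -- `γ` is not constant
  have hnc : ¬ ∀ U W, γ U = γ W := by
    intro hc
    obtain ⟨w, hw, hwp⟩ := near p hp
    obtain ⟨v, hv, hvq⟩ := near q hq
    have h1 := hγ1 w hw hwp
    have h0 := hγ0 v hv fun hvC => hpq (by
      have e1 := connectedComponentIn_eq hvC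
      have e2 := connectedComponentIn_eq hvq
      rw [hC, e1, ← e2]
      exact mem_connectedComponentIn hq)
    rw [hc _ (D.mkFace hv), h0] at h1
    exact zero_ne_one h1
  have hoff : ∀ e ∉ S, D.d γ e = 0 := by
    intro e he
    obtain ⟨x, hx⟩ := (D.arc e).nonempty
    obtain ⟨a, ha, hae, hax⟩ := D.side_component he hx false
    obtain ⟨b, hb, hbe, hbx⟩ := D.side_component he hx true
    have hab : a ∈ C ↔ b ∈ C := by
      have e1 := connectedComponentIn_eq hax
      have e2 := connectedComponentIn_eq hbx
      have ha' : a ∈ (D.K S)ᶜ := hKS ha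
      have hb' : b ∈ (D.K S)ᶜ := hKS hb
      constructor
      · intro h
        rw [hC, connectedComponentIn_eq h, ← e1, e2]
        exact mem_connectedComponentIn hb'
      · intro h
        rw [hC, connectedComponentIn_eq h, ← e2, e1]
        exact mem_connectedComponentIn ha'
    refine zmod2_add_eq_zero.2 ?_
    rw [hae, hbe]
    by_cases h : a ∈ C
    · rw [hγ1 a ha h, hγ1 b hb (hab.1 h)]
    · rw [hγ0 a ha h, hγ0 b hb (fun h' => h (hab.2 h'))]
  refine ⟨γ, funext fun e => ?_⟩
  by_cases he : z e = 0
  · rw [he]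
    exact hoff e (by simpa [hS] using he)
  · have hze : z e = 1 := (zmod2_cases _).resolve_left he
    rw [hze]
    refine (zmod2_cases _).resolve_left fun h0 => hnc ?_
    refine D.const_of_forest γ (S := S \ {e}) ?_ ?_
    · intro z' hz' hsupp
      by_contra hz'0
      have h1 := hmin z' hz' hz'0 fun f hf => hsupp f (by simp [hS, hf])
      have h2 := hsupp e (by simp)
      rw [h1] at h2
      exact he h2
    · intro f hf
      by_cases hfe : f = e
      · rwa [hfe]
      · exact hoff f fun h => hf ⟨h, hfe⟩

theorem cycle_exists {z : E → ZMod 2} (hz : D.IsCyc z) : ∃ γ, D.d γ = z := by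
  classical
  induction hn : (Finset.univ.filter fun e => z e ≠ 0).card using Nat.strong_induction_on
    generalizing z with
  | _ n ih =>
    by_cases hne : z = 0
    · exact ⟨0, by rw [hne]; exact D.d_eq_zero_of_const fun _ _ => rfl⟩
    by_cases hmin : ∀ z', D.IsCyc z' → z' ≠ 0 → (∀ e, z e = 0 → z' e = 0) → z' = z
    · exact D.minimal_cycle hz hne hmin
    push Not at hmin
    obtain ⟨z', hz', hz'0, hs, hzz⟩ := hmin
    have key : ∀ z'' : E → ZMod 2, (∀ e, z e = 0 → z'' e = 0) → z'' + z ≠ 0 →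
        (Finset.univ.filter fun e => z'' e ≠ 0).card < n := by
      intro z'' h1 h2
      rw [← hn]
      refine Finset.card_lt_card ⟨fun e he => ?_, fun hsub => h2 (funext fun e => ?_)⟩
      · simp only [Finset.mem_filter, Finset.mem_univ, true_and] at he ⊢
        exact fun h => he (h1 e h)
      · refine zmod2_add_eq_zero.2 ?_
        by_cases h : z e = 0
        · rw [h, h1 e h]
        · have := hsub (by simpa using h)
          simp only [Finset.mem_filter, Finset.mem_univ, true_and] at this
          rw [(zmod2_cases _).resolve_left h, (zmod2_cases _).resolve_left this]
    have hadd : z' + z ≠ 0 := fun h => hzz (funext fun e => zmod2_add_eq_zero.1 (congrFun h e))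
    obtain ⟨γ1, h1⟩ := ih _ (key z' hs hadd) hz' rfl
    obtain ⟨γ2, h2⟩ := ih _ (key (z' + z) (fun e he => by simp [he, hs e he]) (by
      rw [add_assoc]
      intro h
      apply hz'0
      have hzz0 : z + z = 0 := funext fun e => zmod2_add_self _
      rwa [hzz0, add_zero] at h)) (D.isCyc_add hz' hz) rfl
    refine ⟨γ1 + γ2, ?_⟩
    rw [d_add, h1, h2, ← add_assoc]
    have hzz0 : z' + z' = 0 := funext fun e => zmod2_add_self _
    rw [hzz0, zero_add]

theorem d_isCyc (γ : D.Face → ZMod 2) : D.IsCyc (D.d γ) := by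
  classical
  induction hn : (Finset.univ.filter fun e => D.d γ e ≠ 0).card using Nat.strong_induction_on
    generalizing γ with
  | _ n ih =>
    have hz0 : D.IsCyc 0 := fun y => by simp
    by_cases hF : D.Forest {e | D.d γ e ≠ 0}
    · rw [D.d_eq_zero_of_const (D.const_of_forest γ hF fun e he => by simpa using he)]
      exact hz0
    · unfold Forest at hF
      push Not at hF
      obtain ⟨z, hz, hs, hne⟩ := hF
      obtain ⟨γ', h'⟩ := D.cycle_exists hz
      obtain ⟨e, he⟩ := Function.ne_iff.1 hne
      have hz1 : z e = 1 := (zmod2_cases _).resolve_left he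
      have hde : D.d γ e = 1 := (zmod2_cases _).resolve_left fun h => he (hs e (by simp [h]))
      have := ih _ ?_ (γ + γ') rfl
      · have h2 := D.isCyc_add this hz
        rw [d_add, h', add_assoc] at h2
        have hzz0 : z + z = 0 := funext fun e => zmod2_add_self _
        rwa [hzz0, add_zero] at h2
      · rw [← hn, d_add, h']
        refine Finset.card_lt_card ⟨fun f hf => ?_, fun hsub => ?_⟩
        · simp only [Finset.mem_filter, Finset.mem_univ, true_and] at hf ⊢
          intro h
          exact hf (by simp [h, hs f (by simp [h])])
        · have := hsub (x := e) (by simp [hde])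
          simp only [Finset.mem_filter, Finset.mem_univ, true_and, Pi.add_apply, hde, hz1] at this
          exact this (zmod2_add_self 1)

end BlobDrawing
end BAP

/-! ### Faces around a vertex -/

namespace BAP
namespace BlobDrawing
variable {V E : Type} (D : BlobDrawing V E)

theorem star_preconnected {e : E} {v : V} {i : Bool} (h : D.t e i = v) :
    IsPreconnected (D.B v ∪ D.o e) := by
  have h1 : IsPreconnected (insert (D.c e i) (D.o e)) := by
    refine (D.arc e).conn.subset_closure (subset_insert _ _) (insert_subset ?_ subset_closure)
    cases i
    · exact (D.arc e).left_closure
    · exact (D.arc e).right_closure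
  have h2 := IsPreconnected.union (D.c e i) (h ▸ D.c_mem e i) (mem_insert _ _)
    (D.blob v).path.isConnected.isPreconnected h1
  have h3 : D.B v ∪ insert (D.c e i) (D.o e) = D.B v ∪ D.o e := by
    rw [union_insert, insert_eq_of_mem]
    exact Or.inl (h ▸ D.c_mem e i)
  rwa [h3] at h2

variable [Finite V] [Fintype E]

/-- If no edge at `v` separates different values of `γ`, all the faces around `v` have the same
value: the blob of `v` alone does not separate the plane. -/
theorem const_around (γ : D.Face → ZMod 2) (v : V)
    (h : ∀ e i, D.t e i = v → D.d γ e = 0) {e e' : E} {i i' : Bool} (j j' : Bool)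
    (he : D.t e i = v) (he' : D.t e' i' = v) : γ (D.side e j) = γ (D.side e' j') := by
  set S : Set E := {e | ∀ i, D.t e i ≠ v} with hS
  have heS : e ∉ S := fun h => h i he
  have heS' : e' ∉ S := fun h => h i' he'
  obtain ⟨Γ, -, h2, h3⟩ := D.exists_extension γ (S := S) (by
    intro e he
    simp only [hS, mem_ofPred_eq, not_forall, not_not] at he
    obtain ⟨i, hi⟩ := he
    exact h e i hi)
  obtain ⟨p, hp⟩ := (D.arc e).nonempty
  obtain ⟨q, hq⟩ := (D.arc e').nonempty
  rw [← h2 e heS p hp j, ← h2 e' heS' q hq j']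
  have hpK : p ∉ D.K S := D.not_mem_K heS hp
  have hqK : q ∉ D.K S := D.not_mem_K heS' hq
  set K' : Set ℂ := (⋃ w ∈ ({v}ᶜ : Set V), D.B w) ∪ ⋃ e ∈ S, D.A e with hK'
  have hKc : IsClosed K' := IsCompact.isClosed (IsCompact.union
    ((Set.toFinite _).isCompact_biUnion fun w _ => (D.blob w).compact)
    ((Set.toFinite S).isCompact_biUnion fun e _ => (D.arc e).compact))
  have hKS : D.K S = K' ∪ D.B v := by
    ext z
    simp only [K, hK', mem_union, mem_iUnion, mem_compl_iff, mem_singleton_iff, exists_prop]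
    constructor
    · rintro (⟨w, hw⟩ | hz)
      · by_cases hwv : w = v
        · exact Or.inr (hwv ▸ hw)
        · exact Or.inl (Or.inl ⟨w, hwv, hw⟩)
      · exact Or.inl (Or.inr hz)
    · rintro ((⟨w, -, hw⟩ | hz) | hz)
      · exact Or.inl ⟨w, hw⟩
      · exact Or.inr hz
      · exact Or.inl ⟨v, hz⟩
  have hdisj : Disjoint K' (D.B v) := by
    rw [Set.disjoint_left]
    rintro z (hz | hz) hzv
    · obtain ⟨w, hw, hzw⟩ := mem_iUnion₂.1 hz
      exact hw (D.mem_B_eq hzw hzv)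
    · obtain ⟨f, hf, hzf⟩ := mem_iUnion₂.1 hz
      obtain ⟨i, -, hi⟩ := D.A_inter_B hzf hzv
      exact hf i hi.symm
  have hconn : IsPreconnected ((D.B v ∪ D.o e) ∪ (D.B v ∪ D.o e')) := by
    obtain ⟨b, hb⟩ := (D.blob v).path.nonempty
    exact IsPreconnected.union b (Or.inl hb) (Or.inl hb) (D.star_preconnected he)
      (D.star_preconnected he')
  have hsub : (D.B v ∪ D.o e) ∪ (D.B v ∪ D.o e') ⊆ K'ᶜ := by
    have hB : D.B v ⊆ K'ᶜ := fun z hz hz' => hdisj.le_bot ⟨hz', hz⟩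
    have ho : ∀ f ∉ S, D.o f ⊆ K'ᶜ := fun f hf z hz hz' =>
      D.not_mem_K hf hz (hKS ▸ Or.inl hz')
    exact union_subset (union_subset hB (ho e heS)) (union_subset hB (ho e' heS'))
  have hmem : q ∈ connectedComponentIn K'ᶜ p :=
    hconn.subset_connectedComponentIn (Or.inl (Or.inr hp)) hsub (Or.inr (Or.inr hq))
  have hlog : HasLog (fun z => (z - p) / (z - q)) (D.K S) := by
    rw [hKS]
    refine hasLog_union_disjoint hKc (D.blob v).compact.isClosed hdisj
      (hasLog_of_mem_component hKc hmem) ((D.blob v).logs _ ?_ ?_)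
    · refine ContinuousOn.div (by fun_prop) (by fun_prop) fun z hz => sub_ne_zero.2 ?_
      rintro rfl
      exact D.not_mem_B hq v hz
    · intro z hz
      refine div_ne_zero (sub_ne_zero.2 ?_) (sub_ne_zero.2 ?_)
      · rintro rfl
        exact D.not_mem_B hp v hz
      · rintro rfl
        exact D.not_mem_B hq v hz
  have := mem_component_of_hasLog (D.K_compact S) hpK hqK hlog
  exact const_of_locally isPreconnected_connectedComponentIn
    (fun z hz => h3 z (connectedComponentIn_subset _ _ hz)) (mem_connectedComponentIn hpK) this

/-- The combinatorial facts about the faces of a drawing on the sphere: the coboundaries of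
functions on the faces are exactly the cycles, only the constants have coboundary zero, and
the faces around a vertex are linked by the edges at that vertex. -/
theorem exists_faces : ∃ (Φ : Type) (_ : Fintype Φ) (_ : Nonempty Φ) (s : E → Bool → Φ),
    (∀ (y : V → ZMod 2) (γ : Φ → ZMod 2),
      ∑ e, (γ (s e false) + γ (s e true)) * (y (D.t e false) + y (D.t e true)) = 0) ∧
    (∀ z : E → ZMod 2,
      (∀ y : V → ZMod 2, ∑ e, z e * (y (D.t e false) + y (D.t e true)) = 0) →
      ∃ γ : Φ → ZMod 2, ∀ e, z e = γ (s e false) + γ (s e true)) ∧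
    (∀ γ : Φ → ZMod 2, (∀ e, γ (s e false) = γ (s e true)) → ∀ f f', γ f = γ f') ∧
    (∀ (γ : Φ → ZMod 2) (v : V), (∀ e i, D.t e i = v → γ (s e false) = γ (s e true)) →
      ∀ e i e' i' j j', D.t e i = v → D.t e' i' = v → γ (s e j) = γ (s e' j')) := by
  have hne : Nonempty D.Face := by
    have : (D.K univ) ≠ univ := (D.K_compact univ).ne_univ
    obtain ⟨p, hp⟩ := (ne_univ_iff_exists_notMem _).1 this
    exact ⟨D.mkFace hp⟩
  refine ⟨D.Face, Fintype.ofFinite _, hne, D.side, fun y γ => D.d_isCyc γ y, fun z hz => ?_,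
    fun γ hγ => ?_, fun γ v h e i e' i' j j' he he' => ?_⟩
  · obtain ⟨γ, hγ⟩ := D.cycle_exists (z := z) hz
    exact ⟨γ, fun e => (congrFun hγ e).symm⟩
  · exact D.const_of_forest γ (S := ∅) D.forest_empty fun e _ => zmod2_add_eq_zero.2 (hγ e)
  · exact D.const_around γ v (fun e i hi => zmod2_add_eq_zero.2 (h e i hi)) j j' he he'

end BlobDrawing
end BAP

/-! ### Drawings with at most one crossing partner per edge -/

namespace BAP

/-- A drawing in the complex plane of a family of edges, an edge from `a` to `b` being the pair
`(a, b)`, in which every edge crosses at most one other edge. -/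
structure ODrawing (V : Type) (P : Set (V × V)) where
  pos : V → ℂ
  pos_inj : Function.Injective pos
  cv : P → ℝ → ℂ
  cont : ∀ e, ContinuousOn (cv e) (Icc 0 1)
  inj : ∀ e, InjOn (cv e) (Icc 0 1)
  start : ∀ e : P, cv e 0 = pos e.1.1
  finish : ∀ e : P, cv e 1 = pos e.1.2
  no_vertex : ∀ e, ∀ t ∈ Ioo (0 : ℝ) 1, ∀ v, cv e t ≠ pos v
  finite_meet : ∀ e f, e ≠ f → (cv e '' Icc 0 1 ∩ cv f '' Icc 0 1).Finite
  cross : ∀ e f g, e ≠ f → e ≠ g → (cv e '' Ioo 0 1 ∩ cv f '' Ioo 0 1).Nonempty →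
    (cv e '' Ioo 0 1 ∩ cv g '' Ioo 0 1).Nonempty → f = g

namespace ODrawing
variable {V : Type} {P : Set (V × V)} (D : ODrawing V P)

/-- Restriction of a drawing to the vertices other than `v`. -/
def delete (v : V) : ODrawing {w : V // w ≠ v} {p | (p.1.1, p.2.1) ∈ P} where
  pos w := D.pos w.1
  pos_inj := D.pos_inj.comp Subtype.val_injective
  cv e := D.cv ⟨_, e.2⟩
  cont e := D.cont _
  inj e := D.inj _
  start e := D.start _
  finish e := D.finish _
  no_vertex e t ht w := D.no_vertex _ t ht _
  finite_meet e f hef := D.finite_meet _ _ fun h => hef (by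
    have := congrArg Subtype.val h
    simp only [Prod.mk.injEq] at this
    exact Subtype.ext (Prod.ext (Subtype.ext this.1) (Subtype.ext this.2)))
  cross e f g hef heg h1 h2 := by
    have key : ∀ e f : {p : {w : V // w ≠ v} × {w : V // w ≠ v} | (p.1.1, p.2.1) ∈ P},
        (⟨_, e.2⟩ : P) = ⟨_, f.2⟩ → e = f := fun e f h => by
      have := congrArg Subtype.val h
      simp only [Prod.mk.injEq] at this
      exact Subtype.ext (Prod.ext (Subtype.ext this.1) (Subtype.ext this.2))
    exact key _ _ (D.cross _ _ _ (fun h => hef (key _ _ h)) (fun h => heg (key _ _ h)) h1 h2)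

/-- Two edges cross. -/
def Cr (e f : P) : Prop := e ≠ f ∧ (D.cv e '' Ioo 0 1 ∩ D.cv f '' Ioo 0 1).Nonempty

theorem Cr.symm {e f : P} (h : D.Cr e f) : D.Cr f e := ⟨h.1.symm, by rw [inter_comm]; exact h.2⟩

theorem Cr.unique {e f g : P} (h : D.Cr e f) (h' : D.Cr e g) : f = g :=
  D.cross e f g h.1 h'.1 h.2 h'.2

/-- The crossing points of the pair `e`, `f` lie on `e` between the parameters `a` and `b`, and
the part of `f` between the parameters `a'` and `b'` contains the first and the last one. -/
theorem exists_params {e f : P} (h : D.Cr e f) : ∃ a b a' b' : ℝ, 0 < a ∧ a ≤ b ∧ b < 1 ∧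
    0 < a' ∧ a' ≤ b' ∧ b' < 1 ∧ D.cv e a ∈ D.cv f '' Icc a' b' ∧ D.cv e b ∈ D.cv f '' Icc a' b' ∧
    ∀ t ∈ Ioo (0 : ℝ) 1, D.cv e t ∈ D.cv f '' Ioo 0 1 → t ∈ Icc a b := by
  set M : Set ℝ := {t | t ∈ Ioo (0 : ℝ) 1 ∧ D.cv e t ∈ D.cv f '' Ioo 0 1} with hM
  have hfin : M.Finite := by
    refine Set.Finite.of_finite_image (f := D.cv e) ((D.finite_meet e f h.1).subset ?_) ?_
    · rintro _ ⟨t, ⟨ht, ht'⟩, rfl⟩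
      exact ⟨⟨t, Ioo_subset_Icc_self ht, rfl⟩, image_mono Ioo_subset_Icc_self ht'⟩
    · exact (D.inj e).mono fun t ht => Ioo_subset_Icc_self ht.1
  have hne : M.Nonempty := by
    obtain ⟨_, ⟨t, ht, rfl⟩, h2⟩ := h.2
    exact ⟨t, ht, h2⟩
  obtain ⟨a, ha, hamin⟩ := hfin.exists_minimalFor id M hne
  obtain ⟨b, hb, hbmax⟩ := hfin.exists_maximalFor id M hne
  have hamin' : ∀ t ∈ M, a ≤ t := fun t ht => (le_total a t).elim id fun h => hamin ht h
  have hbmax' : ∀ t ∈ M, t ≤ b := fun t ht => (le_total t b).elim id fun h => hbmax ht h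
  obtain ⟨s, hs, hsa⟩ := ha.2
  obtain ⟨t, ht, htb⟩ := hb.2
  refine ⟨a, b, min s t, max s t, ha.1.1, hamin' b hb, hb.1.2, lt_min hs.1 ht.1, min_le_max,
    max_lt hs.2 ht.2, ⟨s, ⟨min_le_left _ _, le_max_left _ _⟩, hsa⟩,
    ⟨t, ⟨min_le_right _ _, le_max_right _ _⟩, htb⟩, fun τ hτ hmem => ⟨hamin' τ ⟨hτ, hmem⟩,
    hbmax' τ ⟨hτ, hmem⟩⟩⟩

/-- The uncrossed edges. -/
def Unc : Type := {e : P // ∀ f, ¬ D.Cr e f}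

/-- The pairs of crossing edges, each represented by the smaller edge of the pair with respect to
an enumeration. -/
def Crp (ι : P → ℕ) : Type := {e : P // ∃ f, D.Cr e f ∧ ι e < ι f}

variable (ι : P → ℕ)

/-- The second edge of a crossing pair. -/
noncomputable def mate (x : D.Crp ι) : P := x.2.choose

theorem mate_cr (x : D.Crp ι) : D.Cr x.1 (D.mate ι x) := x.2.choose_spec.1

/-- The two edges of a crossing pair: `true` is the smaller one. -/
noncomputable def xe (x : D.Crp ι) (i : Bool) : P := if i then x.1 else D.mate ι x

theorem xe_cr (x : D.Crp ι) (i : Bool) : D.Cr (D.xe ι x i) (D.xe ι x (!i)) := by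
  cases i
  · exact (D.mate_cr ι x).symm
  · exact D.mate_cr ι x

theorem xe_inj {x x' : D.Crp ι} {i i' : Bool} (h : D.xe ι x i = D.xe ι x' i') :
    x = x' ∧ i = i' := by
  have h1 := D.xe_cr ι x i
  have h2 := D.xe_cr ι x' i'
  rw [← h] at h2
  have h3 := Cr.unique D h1 h2
  have l : ι x.1 < ι (D.mate ι x) := x.2.choose_spec.2
  have l' : ι x'.1 < ι (D.mate ι x') := x'.2.choose_spec.2
  cases i <;> cases i'
  · exact ⟨Subtype.ext h3, rfl⟩
  · exfalso
    simp only [xe, Bool.not_false, Bool.not_true, if_true, Bool.false_eq_true, if_false] at h h3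
    rw [h, h3] at l
    exact lt_asymm l l'
  · exfalso
    simp only [xe, Bool.not_false, Bool.not_true, if_true, Bool.false_eq_true, if_false] at h h3
    rw [h, h3] at l
    exact lt_asymm l l'
  · exact ⟨Subtype.ext h, rfl⟩

theorem xe_cover (hι : Function.Injective ι) (e : P) (he : ∃ f, D.Cr e f) :
    ∃ x i, e = D.xe ι x i := by
  obtain ⟨f, hf⟩ := he
  rcases lt_trichotomy (ι e) (ι f) with h | h | h
  · exact ⟨⟨e, f, hf, h⟩, true, rfl⟩
  · exact (hf.1 (hι h)).elim
  · refine ⟨⟨f, e, hf.symm, h⟩, false, ?_⟩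
    exact Cr.unique D hf.symm (D.mate_cr ι ⟨f, e, hf.symm, h⟩)

theorem meet_cases {x x' : D.Crp ι} {i i' : Bool} {s t : ℝ} (hs : s ∈ Ioo (0 : ℝ) 1)
    (ht : t ∈ Ioo (0 : ℝ) 1) (h : D.cv (D.xe ι x i) s = D.cv (D.xe ι x' i') t) :
    x = x' ∧ (i = i' → s = t) := by
  by_cases he : D.xe ι x i = D.xe ι x' i'
  · refine ⟨(D.xe_inj ι he).1, fun _ => ?_⟩
    rw [← he] at h
    exact D.inj _ (Ioo_subset_Icc_self hs) (Ioo_subset_Icc_self ht) h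
  · have h1 : D.Cr (D.xe ι x i) (D.xe ι x' i') := ⟨he, _, ⟨s, hs, rfl⟩, ⟨t, ht, h.symm⟩⟩
    have h2 := (D.xe_inj ι (Cr.unique D (D.xe_cr ι x i) h1))
    refine ⟨h2.1, fun hi => ?_⟩
    subst hi
    exact (Bool.not_ne_self _ h2.2).elim

end ODrawing
end BAP

/-! ### Planarisation -/

namespace BAP
namespace ODrawing
variable {V : Type} {P : Set (V × V)} (D : ODrawing V P) (ι : P → ℕ)

/-- The pieces of the edges in the planarised drawing: the uncrossed edges, and four half-edges
`(s, c)` for every crossing pair, where `c` tells whether the half-edge is the final part of its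
edge and `s = c` holds for the halves of the first edge of the pair. -/
abbrev Pc : Type := D.Unc ⊕ D.Crp ι × Bool × Bool

/-- The edge containing a piece. -/
noncomputable def pe : D.Pc ι → P
  | Sum.inl u => u.1
  | Sum.inr (x, s, c) => D.xe ι x (s == c)

/-- The left end of the parameter interval of a piece. -/
def pl (hi : D.Crp ι → Bool → ℝ) : D.Pc ι → ℝ
  | Sum.inl _ => 0
  | Sum.inr (x, s, c) => if c then hi x (s == c) else 0

/-- The right end of the parameter interval of a piece. -/
def pr (lo : D.Crp ι → Bool → ℝ) : D.Pc ι → ℝ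
  | Sum.inl _ => 1
  | Sum.inr (x, s, c) => if c then 1 else lo x (s == c)

/-- The end vertices of a piece in the planarised drawing. -/
noncomputable def pt : D.Pc ι → Bool → V ⊕ D.Crp ι
  | Sum.inl u, i => Sum.inl (if i then u.1.1.2 else u.1.1.1)
  | Sum.inr (x, s, c), i => if i = c then
      Sum.inl (if c then (D.xe ι x (s == c)).1.2 else (D.xe ι x (s == c)).1.1)
    else Sum.inr x

/-- The planarisation: the part of the second edge of a crossing pair between the first
and the last crossing becomes the blob of a new vertex. -/
theorem exists_blobDrawing (hP : ∀ p ∈ P, p.1 ≠ p.2) :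
    ∃ B : BlobDrawing (V ⊕ D.Crp ι) (D.Pc ι), B.t = D.pt ι := by
  have hpar : ∀ x : D.Crp ι, ∃ lo hi : Bool → ℝ, (∀ i, 0 < lo i ∧ lo i ≤ hi i ∧ hi i < 1) ∧
      (D.cv (D.xe ι x true) (lo true) ∈ D.cv (D.xe ι x false) '' Icc (lo false) (hi false)) ∧
      (D.cv (D.xe ι x true) (hi true) ∈ D.cv (D.xe ι x false) '' Icc (lo false) (hi false)) ∧
      ∀ t ∈ Ioo (0 : ℝ) 1, D.cv (D.xe ι x true) t ∈ D.cv (D.xe ι x false) '' Ioo 0 1 →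
        t ∈ Icc (lo true) (hi true) := fun x => by
    obtain ⟨a, b, a', b', h1, h2, h3, h4, h5, h6, h7, h8, h9⟩ := D.exists_params (D.xe_cr ι x true)
    refine ⟨fun i => if i then a else a', fun i => if i then b else b', ?_, h7, h8, h9⟩
    rintro (_ | _)
    · exact ⟨h4, h5, h6⟩
    · exact ⟨h1, h2, h3⟩
  choose lo hi hlh hlo hhi hout using hpar
  let Bx : V ⊕ D.Crp ι → Set ℂ := fun v => match v with
    | Sum.inl v => {D.pos v}
    | Sum.inr x => D.cv (D.xe ι x false) '' Icc (lo x false) (hi x false)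
  have hlt : ∀ e, D.pl ι hi e < D.pr ι lo e := by
    rintro (u | ⟨x, s, c⟩)
    · exact zero_lt_one
    · cases c
      · exact (hlh x _).1
      · exact (hlh x _).2.2
  have hl0 : ∀ e, 0 ≤ D.pl ι hi e := by
    rintro (u | ⟨x, s, c⟩)
    · exact le_rfl
    · cases c
      · exact le_rfl
      · exact ((hlh x _).1.trans_le (hlh x _).2.1).le
  have hr1 : ∀ e, D.pr ι lo e ≤ 1 := by
    rintro (u | ⟨x, s, c⟩)
    · exact le_rfl
    · cases c
      · exact ((hlh x _).2.1.trans_lt (hlh x _).2.2).le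
      · exact le_rfl
  have hsub : ∀ e, Icc (D.pl ι hi e) (D.pr ι lo e) ⊆ Icc 0 1 := fun e =>
    Icc_subset_Icc (hl0 e) (hr1 e)
  have hsub' : ∀ e, Ioo (D.pl ι hi e) (D.pr ι lo e) ⊆ Ioo 0 1 := fun e =>
    Ioo_subset_Ioo (hl0 e) (hr1 e)
  let A : D.Pc ι → Set ℂ := fun e => D.cv (D.pe ι e) '' Icc (D.pl ι hi e) (D.pr ι lo e)
  let c : D.Pc ι → Bool → ℂ := fun e i =>
    D.cv (D.pe ι e) (if i then D.pr ι lo e else D.pl ι hi e)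
  have harc : ∀ e, IsArc (A e) (c e false) (c e true) := fun e =>
    isArc_image (hlt e) ((D.cont _).mono (hsub e)) ((D.inj _).mono (hsub e))
  have ho : ∀ e, A e \ {c e false, c e true} =
      D.cv (D.pe ι e) '' Ioo (D.pl ι hi e) (D.pr ι lo e) := fun e =>
    image_Icc_diff (hlt e) ((D.inj _).mono (hsub e))
  have hBsub : ∀ x, Icc (lo x false) (hi x false) ⊆ Ioo 0 1 := fun x t ht =>
    ⟨(hlh x false).1.trans_le ht.1, ht.2.trans_lt (hlh x false).2.2⟩
  have hunc : ∀ (u : D.Unc) (f : P) (s t : ℝ), s ∈ Ioo (0 : ℝ) 1 → t ∈ Ioo (0 : ℝ) 1 →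
      D.cv u.1 s = D.cv f t → u.1 = f := fun u f s t hs ht h => by
    by_contra hne
    exact u.2 f ⟨hne, _, ⟨s, hs, rfl⟩, ⟨t, ht, h.symm⟩⟩
  have hxeU : ∀ (u : D.Unc) x i, u.1 ≠ D.xe ι x i := fun u x i h =>
    u.2 _ (h ▸ D.xe_cr ι x i)
  -- a parameter in a half-edge lies outside the interval of the crossing
  have hhalf : ∀ x s c (t : ℝ), t ∈ Ioo (D.pl ι hi (Sum.inr (x, s, c)))
      (D.pr ι lo (Sum.inr (x, s, c))) →
      (c = false ∧ t < lo x (s == c)) ∨ (c = true ∧ hi x (s == c) < t) := by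
    intro x s c t ht
    cases c
    · exact Or.inl ⟨rfl, ht.2⟩
    · exact Or.inr ⟨rfl, ht.1⟩
  have hhalf' : ∀ x s c (t : ℝ), t ∈ Ioo (D.pl ι hi (Sum.inr (x, s, c)))
      (D.pr ι lo (Sum.inr (x, s, c))) → t ∉ Icc (lo x (s == c)) (hi x (s == c)) := by
    intro x s c t ht hm
    rcases hhalf x s c t ht with ⟨-, h⟩ | ⟨-, h⟩
    · exact absurd hm.1 (not_le.2 h)
    · exact absurd hm.2 (not_le.2 h)
  refine ⟨⟨Bx, A, c, D.pt ι, ?_, harc, ?_, ?_, ?_, ?_, ?_⟩, rfl⟩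
  · rintro (v | x)
    · have := isBlob_image (γ := fun _ => D.pos v) (l := 0) (r := 0) le_rfl
        continuousOn_const (by simp)
      simpa [Bx] using this
    · exact isBlob_image (hlh x false).2.1 ((D.cont _).mono ((hBsub x).trans Ioo_subset_Icc_self))
        ((D.inj _).mono ((hBsub x).trans Ioo_subset_Icc_self))
  · rintro (u | ⟨x, s, c'⟩) i
    · cases i
      · exact D.start _
      · exact D.finish _
    · have hj : ∀ j, D.cv (D.xe ι x j) (lo x j) ∈ Bx (Sum.inr x) ∧
          D.cv (D.xe ι x j) (hi x j) ∈ Bx (Sum.inr x) := by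
        rintro (_ | _)
        · exact ⟨⟨_, left_mem_Icc.2 (hlh x false).2.1, rfl⟩,
            ⟨_, right_mem_Icc.2 (hlh x false).2.1, rfl⟩⟩
        · exact ⟨hlo x, hhi x⟩
      cases i <;> cases c'
      · exact D.start _
      · exact (hj _).2
      · exact (hj _).1
      · exact D.finish _
  · rintro (u | ⟨x, s, c'⟩)
    · intro h
      exact hP _ u.1.2 (Sum.inl_injective h)
    · cases c' <;> simp [pt]
  · rintro (v | x) (w | x') hne <;> rw [Set.disjoint_left]
    · rintro _ rfl h
      exact hne (congrArg _ (D.pos_inj h))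
    · rintro _ rfl ⟨t, ht, h⟩
      exact D.no_vertex _ t (hBsub x' ht) _ h
    · rintro _ ⟨t, ht, rfl⟩ h
      exact D.no_vertex _ t (hBsub x ht) _ h
    · rintro _ ⟨t, ht, rfl⟩ ⟨t', ht', h⟩
      exact hne (congrArg _ (D.meet_cases ι (hBsub x ht) (hBsub x' ht') h.symm).1)
  · intro e v
    rw [ho, Set.disjoint_left]
    rintro _ ⟨t, ht, rfl⟩ hv
    have ht' := hsub' e ht
    rcases v with v | x
    · exact D.no_vertex _ t ht' _ hv
    · obtain ⟨t', ht'', h⟩ := hv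
      rcases e with u | ⟨x', s, c'⟩
      · exact hxeU u x false (hunc u _ _ _ ht' (hBsub x ht'') h.symm)
      · obtain ⟨rfl, h2⟩ := D.meet_cases ι ht' (hBsub x ht'') h.symm
        have hnot := hhalf' _ _ _ _ ht
        by_cases hsc : (s == c') = true
        · rw [hsc] at hnot
          change D.cv (D.xe ι x' false) t' = D.cv (D.xe ι x' (s == c')) t at h
          rw [hsc] at h
          exact hnot (hout x' t ht' ⟨t', hBsub _ ht'', h⟩)
        · have hsc' : (s == c') = false := by simpa using hsc
          rw [h2 hsc', hsc'] at hnot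
          exact hnot ht''
  · intro e f hef
    rw [ho, ho, Set.disjoint_left]
    rintro _ ⟨t, ht, rfl⟩ ⟨t', ht', h⟩
    have h1 := hsub' e ht
    have h2 := hsub' f ht'
    rcases e with u | ⟨x, s, c'⟩ <;> rcases f with u' | ⟨x', s', c''⟩
    · exact hef (congrArg _ (Subtype.ext (hunc u _ _ _ h1 h2 h.symm)))
    · exact hxeU u x' _ (hunc u _ _ _ h1 h2 h.symm)
    · exact hxeU u' x _ (hunc u' _ _ _ h2 h1 h)
    · obtain ⟨rfl, h3⟩ := D.meet_cases ι h1 h2 h.symm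
      change D.cv (D.xe ι x (s' == c'')) t' = D.cv (D.xe ι x (s == c')) t at h
      by_cases hi' : (s == c') = (s' == c'')
      · have htt := h3 hi'
        subst htt
        have hc : c' = c'' := by
          rcases hhalf _ _ _ _ ht with ⟨e1, g1⟩ | ⟨e1, g1⟩ <;>
            rcases hhalf _ _ _ _ ht' with ⟨e2, g2⟩ | ⟨e2, g2⟩
          · rw [e1, e2]
          · rw [hi'] at g1
            exact absurd (hlh x (s' == c'')).2.1 (not_le.2 (g2.trans g1))
          · rw [hi'] at g1
            exact absurd (hlh x (s' == c'')).2.1 (not_le.2 (g1.trans g2))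
          · rw [e1, e2]
        subst hc
        have hs : s = s' := by
          revert hi'
          cases s <;> cases s' <;> cases c' <;> simp
        subst hs
        exact hef rfl
      · by_cases hsc : (s == c') = true
        · have hsc' : (s' == c'') = false := by
            rw [hsc] at hi'
            simpa using Ne.symm hi'
          have hnot := hhalf' _ _ _ _ ht
          rw [hsc] at hnot h
          rw [hsc'] at h
          exact hnot (hout x t h1 ⟨t', h2, h⟩)
        · have hsc0 : (s == c') = false := by simpa using hsc
          have hsc' : (s' == c'') = true := by
            rw [hsc0] at hi'
            simpa using Ne.symm hi'
          have hnot := hhalf' _ _ _ _ ht'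
          rw [hsc'] at hnot h
          rw [hsc0] at h
          exact hnot (hout x t' h2 ⟨t, h1, h.symm⟩)

end ODrawing
end BAP

/-! ### Combinatorial representations of drawings -/

namespace BAP

/-- A combinatorial representation of a drawing with colour classes `col`: `U` is the set of
uncrossed edges, `X` the set of crossing pairs and `Φ` the set of faces. The half-edges of the
crossing `x` are indexed by `(s, c)`, where `c` is the colour of the end `hv x s c` of the
half-edge and the edges of the pair consist of the halves `(s, false)` and `(!s, true)`.
The fields `us` and `hs` record the faces on both sides. The last five fields express that the
planarisation is drawn on the sphere. -/
structure GenRep {V : Type} (col : V → Bool) (P : Set (V × V)) where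
  X : Type
  U : Type
  Φ : Type
  [fX : Fintype X]
  [fU : Fintype U]
  [fΦ : Fintype Φ]
  [ne : Nonempty Φ]
  uv : U → Bool → V
  us : U → Bool → Φ
  hv : X → Bool → Bool → V
  hs : X → Bool → Bool → Bool → Φ
  col_uv : ∀ u c, col (uv u c) = c
  col_hv : ∀ x s c, col (hv x s c) = c
  inj : Function.Injective (Sum.elim (fun u => (uv u false, uv u true))
    (fun x : X × Bool => (hv x.1 x.2 false, hv x.1 (!x.2) true)))
  cover : ∀ p ∈ P, p ∈ range (Sum.elim (fun u => (uv u false, uv u true))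
    (fun x : X × Bool => (hv x.1 x.2 false, hv x.1 (!x.2) true)))
  cyc : ∀ (y : V → ZMod 2) (γ : Φ → ZMod 2),
    (∑ u, (γ (us u false) + γ (us u true)) * (y (uv u false) + y (uv u true))) +
      ∑ x, ∑ s, ∑ c, (γ (hs x s c false) + γ (hs x s c true)) * y (hv x s c) = 0
  cycX : ∀ (x : X) (γ : Φ → ZMod 2), ∑ s, ∑ c, (γ (hs x s c false) + γ (hs x s c true)) = 0
  bdry : ∀ (zU : U → ZMod 2) (zX : X → Bool → Bool → ZMod 2), (∀ x, ∑ s, ∑ c, zX x s c = 0) →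
    (∀ y : V → ZMod 2, (∑ u, zU u * (y (uv u false) + y (uv u true))) +
      ∑ x, ∑ s, ∑ c, zX x s c * y (hv x s c) = 0) →
    ∃ γ : Φ → ZMod 2, (∀ u, zU u = γ (us u false) + γ (us u true)) ∧
      ∀ x s c, zX x s c = γ (hs x s c false) + γ (hs x s c true)
  const : ∀ γ : Φ → ZMod 2, (∀ u, γ (us u false) = γ (us u true)) →
    (∀ x s c, γ (hs x s c false) = γ (hs x s c true)) → ∀ f f', γ f = γ f'
  around : ∀ (γ : Φ → ZMod 2) (x : X), (∀ s c, γ (hs x s c false) = γ (hs x s c true)) →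
    ∀ s c i s' c' i', γ (hs x s c i) = γ (hs x s' c' i')

attribute [instance] GenRep.fX GenRep.fU GenRep.fΦ GenRep.ne

/-- The faces of the planarisation give a representation in which the edges are the pairs
in `P`. -/
theorem ODrawing.exists_genRep {V : Type} [Finite V] {P : Set (V × V)} (D : ODrawing V P)
    {col : V → Bool} (hP : ∀ p ∈ P, col p.1 = false ∧ col p.2 = true) :
    Nonempty (GenRep col P) := by
  classical
  have : Finite P := inferInstance
  obtain ⟨ι, hι⟩ : ∃ ι : P → ℕ, Function.Injective ι :=
    ⟨fun p => (Finite.equivFin P p : ℕ), fun a b h => (Finite.equivFin P).injective (Fin.ext h)⟩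
  have : Finite D.Unc := Subtype.finite
  have : Finite (D.Crp ι) := Subtype.finite
  let _ : Fintype D.Unc := Fintype.ofFinite _
  let _ : Fintype (D.Crp ι) := Fintype.ofFinite _
  obtain ⟨B, hB⟩ := D.exists_blobDrawing ι fun p hp h => by
    have := hP p hp
    rw [h, this.2] at this
    exact absurd this.1 (by simp)
  obtain ⟨Φ, hΦ, hne, s, h1, h2, h3, h4⟩ := B.exists_faces
  rw [hB] at h1 h2 h4
  let uv : D.Unc → Bool → V := fun u c => if c then u.1.1.2 else u.1.1.1
  let hv : D.Crp ι → Bool → Bool → V := fun x s c =>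
    if c then (D.xe ι x (s == c)).1.2 else (D.xe ι x (s == c)).1.1
  let θ : D.Unc ⊕ D.Crp ι × Bool → P := Sum.elim (fun u => u.1) (fun x => D.xe ι x.1 (!x.2))
  have hθ : (Sum.elim (fun u => (uv u false, uv u true))
    (fun x : D.Crp ι × Bool => (hv x.1 x.2 false, hv x.1 (!x.2) true))) = fun w => (θ w).1 := by
    funext w
    rcases w with u | ⟨x, s⟩
    · rfl
    · cases s <;> rfl
  have hpu : ∀ u i, D.pt ι (Sum.inl u) i = Sum.inl (uv u i) := fun u i => rfl
  have hpx : ∀ x s c (y : V ⊕ D.Crp ι → ZMod 2), y (D.pt ι (Sum.inr (x, s, c)) false) +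
      y (D.pt ι (Sum.inr (x, s, c)) true) = y (Sum.inl (hv x s c)) + y (Sum.inr x) := by
    intro x s c y
    cases c
    · rfl
    · exact add_comm _ _
  have hpx' : ∀ x s c, D.pt ι (Sum.inr (x, s, c)) (!c) = Sum.inr x := by
    intro x s c
    cases c <;> rfl
  have hpx'' : ∀ x x' s c i, D.pt ι (Sum.inr (x', s, c)) i = Sum.inr x → x' = x := by
    intro x x' s c i h
    cases c <;> cases i <;> simp [pt] at h <;> exact h
  simp only [Fintype.sum_sum_type, Fintype.sum_prod_type, hpx, hpu] at h1 h2
  refine ⟨⟨D.Crp ι, D.Unc, Φ, uv, fun u => s (Sum.inl u), hv, fun x s' c => s (Sum.inr (x, s', c)),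
    ?_, ?_, ?_, ?_, ?_, ?_, ?_, ?_, ?_⟩⟩
  · intro u c
    cases c
    · exact (hP _ u.1.2).1
    · exact (hP _ u.1.2).2
  · intro x s c
    cases c
    · exact (hP _ (D.xe ι x _).2).1
    · exact (hP _ (D.xe ι x _).2).2
  · rw [hθ]
    refine Subtype.val_injective.comp ?_
    rintro (u | ⟨x, i⟩) (u' | ⟨x', i'⟩) h
    · exact congrArg _ (Subtype.ext h)
    · have h : u.1 = D.xe ι x' (!i') := h
      exact (u.2 _ (h ▸ D.xe_cr ι x' (!i'))).elim
    · have h : D.xe ι x (!i) = u'.1 := h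
      exact (u'.2 _ (h ▸ D.xe_cr ι x (!i))).elim
    · obtain ⟨rfl, h⟩ := D.xe_inj ι h
      have h' : i = i' := Bool.not_inj h
      rw [h']
  · intro p hp
    rw [hθ]
    by_cases h : ∃ f, D.Cr ⟨p, hp⟩ f
    · obtain ⟨x, i, hx⟩ := D.xe_cover ι hι _ h
      refine ⟨Sum.inr (x, !i), ?_⟩
      simp only [θ, Sum.elim_inr, Bool.not_not]
      rw [← hx]
    · exact ⟨Sum.inl ⟨⟨p, hp⟩, not_exists.1 h⟩, rfl⟩
  · intro y γ
    have := h1 (Sum.elim y 0) γ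
    simpa using this
  · intro x γ
    have := h1 (Sum.elim 0 (Pi.single x 1)) γ
    simp only [Sum.elim_inl, Sum.elim_inr, Pi.zero_apply, add_zero, mul_zero, zero_add,
      Finset.sum_const_zero] at this
    rw [Finset.sum_eq_single x] at this
    · simpa using this
    · intro x' _ hx'
      simp [Pi.single_eq_of_ne hx']
    · simp
  · intro zU zX hzX hz
    obtain ⟨γ, hγ⟩ := h2 (Sum.elim zU fun w => zX w.1 w.2.1 w.2.2) (by
      intro y
      have := hz (fun v => y (Sum.inl v))
      simp only [Sum.elim_inl, Sum.elim_inr, mul_add, Finset.sum_add_distrib] at this ⊢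
      rw [← add_assoc, this, zero_add]
      refine Finset.sum_eq_zero fun x _ => ?_
      have := hzX x
      simp only [← Finset.sum_mul]
      rw [this, zero_mul])
    exact ⟨γ, fun u => hγ (Sum.inl u), fun x s c => hγ (Sum.inr (x, s, c))⟩
  · intro γ hu hx
    refine h3 γ ?_
    rintro (u | ⟨x, s, c⟩)
    · exact hu u
    · exact hx x s c
  · intro γ x hx s' c i s'' c' i'
    refine h4 γ (Sum.inr x) ?_ _ _ _ _ i i' (hpx' x s' c) (hpx' x s'' c')
    rintro (u | ⟨x', a, b⟩) j hj
    · simp [hpu] at hj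
    · have := hpx'' x x' a b j hj
      subst this
      exact hx a b

end BAP

/-! ### Removal of degenerate crossings -/

namespace BAP
namespace GenRep
variable {V : Type} {col : V → Bool} {P : Set (V × V)}

/-- The coboundary of a face function on a half-edge. -/
def dh (R : GenRep col P) (γ : R.Φ → ZMod 2) (x : R.X) (s c : Bool) : ZMod 2 :=
  γ (R.hs x s c false) + γ (R.hs x s c true)

theorem sum_split {X : Type} [Fintype X] [DecidableEq X] (x₀ : X) (F : X → ZMod 2) :
    ∑ x, F x = F x₀ + ∑ x : {x : X // x ≠ x₀}, F x.1 := by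
  rw [← Finset.add_sum_erase _ _ (Finset.mem_univ x₀)]
  congr 1
  refine (Finset.sum_subtype _ (fun x => ?_) F)
  simp

/-- A crossing can be removed if two half-edges at it, a white and a black one, share
a face: they are joined to form an uncrossed edge, and so are the other two. By the last
hypothesis the new edges have the same pairs of ends as the old ones. -/
theorem uncross (R : GenRep col P) (x₀ : R.X) (t : Bool) (p q r : R.Φ)
    (hA : ∀ γ, R.dh γ x₀ false false = γ p + γ q) (hB : ∀ γ, R.dh γ x₀ t true = γ q + γ r)
    (π : Bool → Bool) (hπ : Function.Injective π)
    (hπ' : ∀ j, (R.hv x₀ j false, R.hv x₀ (xor t j) true) =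
      (R.hv x₀ (π j) false, R.hv x₀ (!π j) true)) :
    ∃ R' : GenRep col P, Fintype.card R'.X < Fintype.card R.X := by
  classical
  let rel : R.Φ → R.Φ → Prop := fun a b => a = p ∧ b = r
  let mk : R.Φ → Quot rel := Quot.mk rel
  have hmk : mk p = mk r := Quot.sound ⟨rfl, rfl⟩
  have hfin : Finite (Quot rel) := Finite.of_surjective mk Quot.mk_surjective
  let _ : Fintype (Quot rel) := Fintype.ofFinite _
  have _ : Nonempty (Quot rel) := ⟨mk p⟩
  let X' := {x : R.X // x ≠ x₀}
  let uv : R.U ⊕ Bool → Bool → V := Sum.elim R.uv fun j c =>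
    if c then R.hv x₀ (xor t j) true else R.hv x₀ j false
  let us : R.U ⊕ Bool → Bool → Quot rel := Sum.elim (fun u i => mk (R.us u i)) fun j i =>
    if j then mk (R.hs x₀ true false i) else if i then mk q else mk p
  let hv : X' → Bool → Bool → V := fun x => R.hv x.1
  let θ : (R.U ⊕ Bool) ⊕ X' × Bool → R.U ⊕ R.X × Bool :=
    Sum.elim (Sum.elim Sum.inl fun j => Sum.inr (x₀, π j)) fun x => Sum.inr (x.1.1, x.2)
  have hθ : (Sum.elim (fun u => (uv u false, uv u true))
      (fun x : X' × Bool => (hv x.1 x.2 false, hv x.1 (!x.2) true))) =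
      (Sum.elim (fun u => (R.uv u false, R.uv u true))
    (fun x : R.X × Bool => (R.hv x.1 x.2 false, R.hv x.1 (!x.2) true))) ∘ θ := by
    funext w
    rcases w with (u | j) | ⟨x, s⟩
    · rfl
    · exact hπ' j
    · rfl
  have hθi : Function.Injective θ := by
    rintro ((u | j) | ⟨x, s⟩) ((u' | j') | ⟨x', s'⟩) h <;> simp [θ] at h
    · rw [h]
    · rw [hπ h]
    · exact (x'.2 h.1.symm).elim
    · exact (x.2 h.1).elim
    · obtain ⟨h1, h2⟩ := h
      rw [Subtype.ext h1, h2]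
  have hθs : Function.Surjective θ := by
    rintro (u | ⟨x, s⟩)
    · exact ⟨Sum.inl (Sum.inl u), rfl⟩
    · by_cases hx : x = x₀
      · subst hx
        obtain ⟨j, rfl⟩ := Finite.surjective_of_injective hπ s
        exact ⟨Sum.inl (Sum.inr j), rfl⟩
      · exact ⟨Sum.inr (⟨x, hx⟩, s), rfl⟩
  have hΦ : ∀ γ : Quot rel → ZMod 2, R.dh (γ ∘ mk) x₀ t true = γ (mk p) + γ (mk q) ∧
      R.dh (γ ∘ mk) x₀ false false = γ (mk p) + γ (mk q) ∧
      R.dh (γ ∘ mk) x₀ (!t) true = R.dh (γ ∘ mk) x₀ true false := by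
    intro γ
    have h1 := hA (γ ∘ mk)
    have h2 := hB (γ ∘ mk)
    have h3 := R.cycX x₀ (γ ∘ mk)
    change ∑ s, ∑ c, R.dh (γ ∘ mk) x₀ s c = 0 at h3
    simp only [Function.comp_apply] at h1 h2
    rw [← hmk, add_comm] at h2
    refine ⟨h2, h1, ?_⟩
    simp only [Fintype.sum_bool] at h3
    generalize R.dh (γ ∘ mk) x₀ true false = a at *
    cases t
    · rw [h1, h2] at h3
      revert h3
      rw [Bool.not_false]
      generalize R.dh (γ ∘ mk) x₀ true true = b
      generalize γ (mk p) + γ (mk q) = c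
      revert a b c
      decide
    · rw [h1, h2] at h3
      revert h3
      rw [Bool.not_true]
      generalize R.dh (γ ∘ mk) x₀ false true = b
      generalize γ (mk p) + γ (mk q) = c
      revert a b c
      decide
  have hsumb : ∀ F : Bool → ZMod 2, F true + F false = F t + F (!t) := by
    intro F
    cases t
    · exact add_comm _ _
    · rfl
  refine ⟨⟨X', R.U ⊕ Bool, Quot rel, uv, us, hv, fun x s c i => mk (R.hs x.1 s c i), ?_,
    fun x => R.col_hv x.1, ?_, ?_, ?_, ?_, ?_, ?_, ?_⟩, ?_⟩
  · rintro (u | j) c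
    · exact R.col_uv u c
    · cases c
      · exact R.col_hv x₀ j false
      · exact R.col_hv x₀ (xor t j) true
  · rw [hθ]
    exact R.inj.comp hθi
  · intro p' hp'
    rw [hθ, hθs.range_comp]
    exact R.cover p' hp'
  · intro y γ
    have h1 := R.cyc y (γ ∘ mk)
    rw [sum_split x₀] at h1
    obtain ⟨e1, e2, e3⟩ := hΦ γ
    change (_ + ((∑ s, ∑ c, R.dh (γ ∘ mk) x₀ s c * y (R.hv x₀ s c)) + _)) = 0 at h1
    refine Eq.trans ?_ h1
    rw [Fintype.sum_sum_type, add_assoc]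
    congr 1
    refine congrArg₂ _ ?_ rfl
    simp only [Fintype.sum_bool]
    have h4 : ∀ a b c d : ZMod 2, a + b + (c + d) = (a + c) + (b + d) := fun a b c d => by ring
    rw [h4, hsumb (fun s => R.dh (γ ∘ mk) x₀ s true * y (R.hv x₀ s true)), e1, e2, e3]
    simp only [uv, us, Sum.elim_inr, if_true, Bool.false_eq_true, if_false, Bool.xor_false,
      Bool.xor_true]
    simp only [dh, Function.comp_apply]
    ring
  · intro x γ
    exact R.cycX x.1 (γ ∘ mk)
  · intro zU zX hzX hz
    let zX' : R.X → Bool → Bool → ZMod 2 := fun x s c => if h : x = x₀ then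
      zU (Sum.inr (if c then xor t s else s)) else zX ⟨x, h⟩ s c
    have hx0 : ∀ s c, zX' x₀ s c = zU (Sum.inr (if c then xor t s else s)) := fun s c =>
      dif_pos rfl
    have hx : ∀ x : X', zX' x.1 = zX x := fun x => by
      funext s c
      exact dif_neg x.2
    obtain ⟨γ, hγ1, hγ2⟩ := R.bdry (fun u => zU (Sum.inl u)) zX' (by
      intro x
      by_cases h : x = x₀
      · subst h
        simp only [hx0, Fintype.sum_bool, if_true, Bool.false_eq_true, if_false, Bool.xor_false,
          Bool.xor_true]
        have := hsumb (fun s => zU (Sum.inr s))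
        have h5 : ∀ a b c d : ZMod 2, a + b = c + d → d + a + (c + b) = 0 := by decide
        exact h5 _ _ _ _ this
      · rw [hx ⟨x, h⟩]
        exact hzX ⟨x, h⟩) (by
      intro y
      refine Eq.trans ?_ (hz y)
      rw [sum_split x₀, Fintype.sum_sum_type, add_assoc]
      congr 1
      refine congrArg₂ _ ?_ (Finset.sum_congr rfl fun x _ => ?_)
      · simp only [hx0, Fintype.sum_bool, if_true, Bool.false_eq_true, if_false]
        have h4 : ∀ a b c d : ZMod 2, a + b + (c + d) = (a + c) + (b + d) := fun a b c d => by ring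
        rw [h4, hsumb (fun s => zU (Sum.inr (xor t s)) * y (R.hv x₀ s true))]
        simp only [uv, Sum.elim_inr, if_true, Bool.false_eq_true, if_false, Bool.xor_false,
          Bool.xor_true, Bool.xor_self, Bool.xor_not_self]
        ring
      · rw [hx x])
    have e1 : R.dh γ x₀ false false = zU (Sum.inr false) := (hγ2 x₀ false false).symm.trans
      (hx0 _ _)
    have e2 : R.dh γ x₀ t true = zU (Sum.inr false) := by
      refine (hγ2 x₀ t true).symm.trans ((hx0 _ _).trans ?_)
      simp
    have e3 : R.dh γ x₀ true false = zU (Sum.inr true) := (hγ2 x₀ true false).symm.trans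
      (hx0 _ _)
    have hpr : γ p = γ r := by
      rw [hA] at e1
      rw [hB, ← e1] at e2
      revert e2
      generalize γ p = a, γ q = b, γ r = c
      revert a b c
      decide
    refine ⟨Quot.lift γ (by rintro _ _ ⟨rfl, rfl⟩; exact hpr), ?_, ?_⟩
    · rintro (u | j)
      · exact hγ1 u
      · cases j
        · exact e1.symm.trans (hA γ)
        · exact e3.symm
    · intro x s c
      rw [← hx x]
      exact hγ2 x.1 s c
  · intro γ hu hx
    have key := R.const (γ ∘ mk) (fun u => hu (Sum.inl u)) (fun x s c => by
      by_cases h : x = x₀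
      · subst h
        obtain ⟨e1, e2, e3⟩ := hΦ γ
        have z1 : γ (mk p) + γ (mk q) = 0 := zmod2_add_eq_zero.2 (hu (Sum.inr false))
        have z2 : R.dh (γ ∘ mk) x true false = 0 := zmod2_add_eq_zero.2 (hu (Sum.inr true))
        refine (zmod2_add_eq_zero (a := (γ ∘ mk) (R.hs x s c false))).1 ?_
        change R.dh (γ ∘ mk) x s c = 0
        rw [z1] at e1 e2
        rw [z2] at e3
        cases c
        · cases s
          · exact e2
          · exact z2
        · by_cases hst : s = t
          · rw [hst]; exact e1
          · rw [Bool.eq_not.2 hst]; exact e3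
      · exact hx ⟨x, h⟩ s c)
    intro f f'
    obtain ⟨f, rfl⟩ := Quot.mk_surjective f
    obtain ⟨f', rfl⟩ := Quot.mk_surjective f'
    exact key f f'
  · intro γ x hx
    exact R.around (γ ∘ mk) x.1 hx
  · exact Fintype.card_subtype_lt (x := x₀) (by simp)

/-- In the generic case every half-edge at a crossing lies between a monochromatic face, which
it shares with the other half-edge ending in its colour, and a bichromatic one, as far as
coboundaries can tell. -/
def Normal (R : GenRep col P) (x : R.X) : Prop :=
  ∃ mono gi : Bool → R.Φ, ∀ γ s c, R.dh γ x s c = γ (mono c) + γ (gi s)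

/-- A crossing is generic if the two halves `(false, false)` and `(true, true)` of its first
edge share no face. -/
theorem normal_of_not_share (R : GenRep col P) (x : R.X)
    (h : ∀ i j, R.hs x false false i ≠ R.hs x true true j) : R.Normal x := by
  classical
  -- the indicator function of the faces along the half-edge `(s, s)`
  let ind : Bool → R.Φ → ZMod 2 := fun s f => if f = R.hs x s s false ∨ f = R.hs x s s true then 1 else 0
  have hin : ∀ s i, ind s (R.hs x s s i) = 1 := by
    intro s i
    cases i <;> simp [ind]
  have hout : ∀ s i, ind s (R.hs x (!s) (!s) i) = 0 := by
    intro s i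
    refine if_neg ?_
    rintro (h' | h') <;> cases s
    · exact h _ _ h'.symm
    · exact h _ _ h'
    · exact h _ _ h'.symm
    · exact h _ _ h'
  have hss : ∀ s, R.dh (ind s) x s s = 0 ∧ R.dh (ind s) x (!s) (!s) = 0 := by
    intro s
    constructor
    · simp only [dh, hin]; exact zmod2_add_self 1
    · simp only [dh, hout]; exact zmod2_add_self 0
  have hmix : ∀ s c, s ≠ c → R.dh (ind c) x s c = 1 ∧ R.dh (ind s) x s c = 1 := by
    have key : ∀ w, R.dh (ind w) x true false = 1 ∧ R.dh (ind w) x false true = 1 := by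
      intro w
      have h3 := R.cycX x (ind w)
      change ∑ s, ∑ c, R.dh (ind w) x s c = 0 at h3
      simp only [Fintype.sum_bool] at h3
      have h4 : R.dh (ind w) x true true = 0 ∧ R.dh (ind w) x false false = 0 := by
        cases w
        · exact ⟨(hss false).2, (hss false).1⟩
        · exact ⟨(hss true).1, (hss true).2⟩
      have h5 : R.dh (ind w) x true false = R.dh (ind w) x false true := by
        rw [h4.1, h4.2, zero_add, add_zero] at h3
        exact zmod2_add_eq_zero.1 h3
      have h6 : R.dh (ind w) x true false = 1 := by
        refine (zmod2_cases _).resolve_left fun h0 => ?_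
        have := R.around (ind w) x (fun s c => zmod2_add_eq_zero.1 (by
          change R.dh (ind w) x s c = 0
          cases s <;> cases c
          · exact h4.2
          · rw [← h5]; exact h0
          · exact h0
          · exact h4.1)) w w false (!w) (!w) false
        rw [hin, hout] at this
        exact one_ne_zero this
      exact ⟨h6, h5 ▸ h6⟩
    intro s c hsc
    cases s <;> cases c
    · exact (hsc rfl).elim
    · exact ⟨(key _).2, (key _).2⟩
    · exact ⟨(key _).1, (key _).1⟩
    · exact (hsc rfl).elim
  have hind : ∀ s f, ind s f = 1 → ∃ i, f = R.hs x s s i := by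
    intro s f hf
    by_contra hcon
    push Not at hcon
    have : ind s f = 0 := if_neg (by rintro (h' | h'); exacts [hcon _ h', hcon _ h'])
    rw [this] at hf
    exact zero_ne_one hf
  -- one face of the half-edge `(true, false)` is on the half-edge `(false, false)`
  obtain ⟨k, i, hk⟩ : ∃ k i, R.hs x true false k = R.hs x false false i := by
    have := (hmix true false (by simp)).1
    have h1 : ind false (R.hs x true false false) = 1 ∨ ind false (R.hs x true false true) = 1 := by
      revert this
      simp only [dh]
      generalize ind false (R.hs x true false false) = a, ind false (R.hs x true false true) = b
      revert a b
      decide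
    rcases h1 with h1 | h1
    · obtain ⟨i, hi⟩ := hind _ _ h1
      exact ⟨_, i, hi⟩
    · obtain ⟨i, hi⟩ := hind _ _ h1
      exact ⟨_, i, hi⟩
  -- and the other one is on the half-edge `(true, true)`
  obtain ⟨j, hj⟩ : ∃ j, R.hs x true false (!k) = R.hs x true true j := by
    refine hind _ _ ?_
    have h1 := (hmix true false (by simp)).2
    have h2 : ind true (R.hs x true false k) = 0 := by rw [hk]; exact hout true i
    revert h1 h2
    simp only [dh]
    cases k
    · simp only [Bool.not_false]
      generalize ind true (R.hs x true false false) = a, ind true (R.hs x true false true) = b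
      revert a b
      decide
    · simp only [Bool.not_true]
      generalize ind true (R.hs x true false false) = a, ind true (R.hs x true false true) = b
      revert a b
      decide
  have hflip : ∀ (γ : R.Φ → ZMod 2) s c i, R.dh γ x s c = γ (R.hs x s c i) + γ (R.hs x s c (!i)) := by
    intro γ s c i
    cases i
    · rfl
    · exact add_comm _ _
  refine ⟨fun c => if c then R.hs x true true (!j) else R.hs x false false i,
    fun s => if s then R.hs x true true j else R.hs x false false (!i), fun γ s c => ?_⟩
  have hTF : R.dh γ x true false = γ (R.hs x false false i) + γ (R.hs x true true j) := by
    rw [hflip γ true false k, hk, hj]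
  have hFF := hflip γ false false i
  have hTT := hflip γ true true j
  cases s <;> cases c
  · exact hFF
  · have h3 := R.cycX x γ
    change ∑ s, ∑ c, R.dh γ x s c = 0 at h3
    simp only [Fintype.sum_bool] at h3
    rw [hTF, hFF, hTT] at h3
    simp only [if_true, Bool.false_eq_true, if_false]
    revert h3
    generalize R.dh γ x false true = a, γ (R.hs x false false i) = b,
      γ (R.hs x false false !i) = c, γ (R.hs x true true j) = d, γ (R.hs x true true !j) = e
    revert a b c d e
    decide
  · exact hTF
  · exact hTT.trans (add_comm _ _)

/-- A crossing is removed by joining the halves of an edge anew if they share a face, and by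
exchanging halves of its two edges if these have a common end. -/
theorem exists_normal (R : GenRep col P) : ∃ R' : GenRep col P,
    (∀ x, R'.Normal x) ∧ ∀ x c, R'.hv x false c ≠ R'.hv x true c := by
  induction hn : Fintype.card R.X using Nat.strong_induction_on generalizing R with
  | _ n ih =>
    have step : (∃ R' : GenRep col P, Fintype.card R'.X < Fintype.card R.X) →
        ∃ R' : GenRep col P, (∀ x, R'.Normal x) ∧ ∀ x c, R'.hv x false c ≠ R'.hv x true c := by
      rintro ⟨R', hR'⟩
      exact ih _ (hn ▸ hR') R' rfl
    by_cases h1 : ∀ x, R.Normal x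
    · by_cases h2 : ∀ x c, R.hv x false c ≠ R.hv x true c
      · exact ⟨R, h1, h2⟩
      · push Not at h2
        obtain ⟨x, c, hx⟩ := h2
        obtain ⟨mono, gi, hmg⟩ := h1 x
        apply step
        cases c
        · refine R.uncross x false (mono false) (gi false) (mono true) (fun γ => hmg γ _ _)
            (fun γ => (hmg γ _ _).trans (add_comm _ _)) (fun j => !j) (by decide) ?_
          rintro (_ | _)
          · simp [hx]
          · simp [hx]
        · refine R.uncross x false (mono false) (gi false) (mono true) (fun γ => hmg γ _ _)
            (fun γ => (hmg γ _ _).trans (add_comm _ _)) id (by decide) ?_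
          rintro (_ | _)
          · simp [hx]
          · simp [hx]
    · push Not at h1
      obtain ⟨x, hx⟩ := h1
      apply step
      by_cases hs : ∀ i j, R.hs x false false i ≠ R.hs x true true j
      · exact (hx (R.normal_of_not_share x hs)).elim
      · push Not at hs
        obtain ⟨i, j, hij⟩ := hs
        refine R.uncross x true (R.hs x false false (!i)) (R.hs x false false i)
          (R.hs x true true (!j)) (fun γ => ?_) (fun γ => ?_) id (by decide) ?_
        · cases i
          · exact add_comm _ _
          · rfl
        · rw [hij]
          cases j
          · rfl
          · exact add_comm _ _
        · rintro (_ | _) <;> simp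

end GenRep
end BAP

/-! ### Generic representations -/

namespace BAP

open Classical in
/-- The number of elements mapped to `f`. -/
noncomputable def cnt {A B : Type} [Fintype A] (g : A → B) (f : B) : ℕ :=
  ∑ a, if g a = f then 1 else 0

section cnt
variable {A B : Type} [Fintype A] (g : A → B)

theorem cnt_eq_card [DecidableEq B] (f : B) :
    cnt g f = (Finset.univ.filter fun a => g a = f).card := by
  classical
  rw [cnt, Finset.card_filter]
  exact Finset.sum_congr rfl fun a _ => by congr

theorem cnt_eq_zero {f : B} : cnt g f = 0 ↔ ∀ a, g a ≠ f := by
  classical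
  rw [cnt_eq_card, Finset.card_eq_zero, Finset.filter_eq_empty_iff]
  simp

theorem cnt_pos {f : B} : 0 < cnt g f ↔ ∃ a, g a = f := by
  rw [Nat.pos_iff_ne_zero, ne_eq, cnt_eq_zero]
  push Not
  rfl

theorem cnt_eq_one {f : B} : cnt g f = 1 ↔ ∃ a, ∀ a', g a' = f ↔ a' = a := by
  classical
  rw [cnt_eq_card, Finset.card_eq_one]
  refine exists_congr fun a => ?_
  rw [Finset.ext_iff]
  simp

theorem cnt_eq_two {f : B} : cnt g f = 2 ↔ ∃ a b, a ≠ b ∧ ∀ a', g a' = f ↔ a' = a ∨ a' = b := by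
  classical
  rw [cnt_eq_card, Finset.card_eq_two]
  refine exists_congr fun a => exists_congr fun b => and_congr Iff.rfl ?_
  rw [Finset.ext_iff]
  simp

theorem sum_cnt [Fintype B] : ∑ f, cnt g f = Fintype.card A := by
  classical
  simp only [cnt]
  rw [Finset.sum_comm]
  simp

open Classical in
theorem cnt_cast (f : B) : (cnt g f : ZMod 2) = ∑ a, (Pi.single f 1 : B → ZMod 2) (g a) := by
  simp [cnt, Pi.single_apply]

theorem cnt_some (f : B) : cnt (fun a => some (g a)) (some f) = cnt g f := by
  classical
  simp [cnt]

theorem cnt_some_none : cnt (fun a => some (g a)) none = 0 := by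
  simp [cnt]

theorem cnt_move [DecidableEq A] [DecidableEq B] (a₀ : A) (f : B) :
    cnt (fun a => if a = a₀ then none else some (g a)) (some f) + (if g a₀ = f then 1 else 0) =
      cnt g f := by
  classical
  simp only [cnt]
  rw [← Finset.sum_erase_add _ _ (Finset.mem_univ a₀), ← Finset.sum_erase_add (a := a₀) _ _ (Finset.mem_univ a₀)]
  simp only [if_true, reduceCtorEq, if_false, add_zero]
  congr 1
  swap
  · congr
  refine Finset.sum_congr rfl fun a ha => ?_
  simp [Finset.ne_of_mem_erase ha]

theorem cnt_move_none [DecidableEq A] (a₀ : A) : cnt (fun a => if a = a₀ then none else some (g a)) none = 1 := by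
  rw [cnt_eq_one]
  refine ⟨a₀, fun a => ?_⟩
  by_cases h : a = a₀ <;> simp [h]

end cnt

/-- A representation in which every crossing is generic: the half-edge `(s, c)` at `x` lies between
the monochromatic face `mono x c` and the bichromatic face `gi x s`. Uncrossed edges may
be parallel to other edges, but no face is bounded by two uncrossed edges only. -/
structure Rep {V : Type} (col : V → Bool) (P : Set (V × V)) where
  X : Type
  U : Type
  Φ : Type
  [fX : Fintype X]
  [fU : Fintype U]
  [fΦ : Fintype Φ]
  [ne : Nonempty Φ]
  uv : U → Bool → V
  us : U → Bool → Φ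
  hv : X → Bool → Bool → V
  mono : X → Bool → Φ
  gi : X → Bool → Φ
  col_uv : ∀ u c, col (uv u c) = c
  col_hv : ∀ x s c, col (hv x s c) = c
  hv_ne : ∀ x c, hv x false c ≠ hv x true c
  inj : Function.Injective (fun x : X × Bool => (hv x.1 x.2 false, hv x.1 (!x.2) true))
  cover : ∀ p ∈ P, (∃ u, p = (uv u false, uv u true)) ∨
    ∃ x s, p = (hv x s false, hv x (!s) true)
  cyc : ∀ (y : V → ZMod 2) (γ : Φ → ZMod 2),
    (∑ u, (γ (us u false) + γ (us u true)) * (y (uv u false) + y (uv u true))) +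
      ∑ x, ∑ s, ∑ c, (γ (mono x c) + γ (gi x s)) * y (hv x s c) = 0
  bdry : ∀ (zU : U → ZMod 2) (zX : X → Bool → Bool → ZMod 2), (∀ x, ∑ s, ∑ c, zX x s c = 0) →
    (∀ y : V → ZMod 2, (∑ u, zU u * (y (uv u false) + y (uv u true))) +
      ∑ x, ∑ s, ∑ c, zX x s c * y (hv x s c) = 0) →
    ∃ γ : Φ → ZMod 2, (∀ u, zU u = γ (us u false) + γ (us u true)) ∧
      ∀ x s c, zX x s c = γ (mono x c) + γ (gi x s)
  const : ∀ γ : Φ → ZMod 2, (∀ u, γ (us u false) = γ (us u true)) →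
    (∀ x s c, γ (mono x c) = γ (gi x s)) → ∀ f f', γ f = γ f'
  nd : ∀ f, ¬ (cnt (fun w : U × Bool => us w.1 w.2) f = 2 ∧
    cnt (fun w : X × Bool => gi w.1 w.2) f = 0 ∧ cnt (fun w : X × Bool => mono w.1 w.2) f = 0)

attribute [instance] Rep.fX Rep.fU Rep.fΦ Rep.ne

variable {V : Type} {col : V → Bool} {P : Set (V × V)}

open Classical in
/-- No two edges are parallel, so a face with just two sides of
uncrossed edges would be bounded by both sides of a single edge; this is excluded by the presence
of a second edge. -/
theorem GenRep.exists_rep [Finite V] (R₀ : GenRep col P) (hP : 2 ≤ P.ncard) :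
    Nonempty (Rep col P) := by
  obtain ⟨R, hN, hne⟩ := R₀.exists_normal
  choose mono gi hmg using hN
  simp only [dh] at hmg
  refine ⟨⟨R.X, R.U, R.Φ, R.uv, R.us, R.hv, mono, gi, R.col_uv, R.col_hv, hne, ?_, ?_, ?_, ?_, ?_,
    ?_⟩⟩
  · exact R.inj.comp (Sum.inr_injective)
  · intro p hp
    obtain ⟨(u | ⟨x, s⟩), h⟩ := R.cover p hp
    · exact Or.inl ⟨u, h.symm⟩
    · exact Or.inr ⟨x, s, h.symm⟩
  · intro y γ
    have := R.cyc y γ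
    simpa only [hmg] using this
  · intro zU zX h1 h2
    obtain ⟨γ, h3, h4⟩ := R.bdry zU zX h1 h2
    exact ⟨γ, h3, fun x s c => (h4 x s c).trans (hmg x γ s c)⟩
  · intro γ h1 h2
    refine R.const γ h1 fun x s c => zmod2_add_eq_zero.1 ?_
    rw [hmg]
    exact zmod2_add_eq_zero.2 (h2 x s c)
  · rintro f ⟨h2, hb, hm⟩
    rw [cnt_eq_zero] at hb hm
    obtain ⟨a, b, hab, hf⟩ := (cnt_eq_two _).1 h2
    have hx : ∀ x s c, (Pi.single f 1 : R.Φ → ZMod 2) (mono x c) +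
        (Pi.single f 1 : R.Φ → ZMod 2) (gi x s) = 0 := fun x s c => by
      rw [Pi.single_eq_of_ne (hm (x, c)), Pi.single_eq_of_ne (hb (x, s)), add_zero]
    by_cases huu : a.1 = b.1
    · -- both sides of one edge: this edge is the whole graph
      have hall : ∀ i, R.us a.1 i = f := by
        intro i
        by_cases hi : i = a.2
        · rw [hi]; exact (hf a).2 (Or.inl rfl)
        · have hab2 : a.2 ≠ b.2 := fun h => hab (Prod.ext huu h)
          have : i = b.2 := by
            revert hi hab2
            cases i <;> cases a.2 <;> cases b.2 <;> simp
          rw [this, huu]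
          exact (hf b).2 (Or.inr rfl)
      have hconst := R.const (Pi.single f 1) (fun u => by
        by_cases hu : u = a.1
        · rw [hu, hall, hall]
        · have : ∀ i, R.us u i ≠ f := fun i h => by
            rcases (hf (u, i)).1 h with h | h
            · exact hu (congrArg Prod.fst h)
            · exact hu ((congrArg Prod.fst h).trans huu.symm)
          rw [Pi.single_eq_of_ne (this _), Pi.single_eq_of_ne (this _)])
        (fun x s c => by
          have := hx x s c
          rw [← hmg x _ s c] at this
          exact zmod2_add_eq_zero.1 this)
      have hone : ∀ g, g = f := fun g => by
        by_contra hg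
        have := hconst g f
        rw [Pi.single_eq_same, Pi.single_eq_of_ne hg] at this
        exact zero_ne_one this
      have hsub : P ⊆ {(R.uv a.1 false, R.uv a.1 true)} := by
        intro p hp
        obtain ⟨(u | ⟨x, s⟩), h⟩ := R.cover p hp
        · have : u = a.1 := by
            rcases (hf (u, false)).1 (hone _) with h | h
            · exact congrArg Prod.fst h
            · exact (congrArg Prod.fst h).trans huu.symm
          rw [← this]
          exact h.symm
        · exact (hb (x, s) (hone _)).elim
      have := ncard_le_ncard hsub
      rw [ncard_singleton] at this
      omega
    · -- two parallel edges
      apply huu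
      have hy : ∀ y : V → ZMod 2, (y (R.uv a.1 false) + y (R.uv a.1 true)) +
          (y (R.uv b.1 false) + y (R.uv b.1 true)) = 0 := by
        intro y
        have h1 := R.cyc y (Pi.single f 1)
        simp only [hmg, hx, zero_mul, Finset.sum_const_zero, add_zero] at h1
        rw [← Finset.add_sum_erase _ _ (Finset.mem_univ a.1),
          ← Finset.add_sum_erase _ _ (Finset.mem_erase.2 ⟨Ne.symm huu, Finset.mem_univ b.1⟩),
          Finset.sum_eq_zero, add_zero] at h1
        · have key : ∀ w w' : R.U × Bool, w.1 ≠ w'.1 → (∀ a', R.us a'.1 a'.2 = f ↔ a' = w ∨ a' = w') →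
              (Pi.single f 1 : R.Φ → ZMod 2) (R.us w.1 false) +
              (Pi.single f 1 : R.Φ → ZMod 2) (R.us w.1 true) = 1 := by
            rintro ⟨u, i⟩ ⟨u', i'⟩ huu' hf
            have e1 : R.us u i = f := (hf (u, i)).2 (Or.inl rfl)
            have e2 : R.us u (!i) ≠ f := fun h => by
              rcases (hf (u, !i)).1 h with h | h
              · exact Bool.not_ne_self i (congrArg Prod.snd h)
              · exact huu' (Prod.mk.inj h).1
            cases i
            · have e3 : R.us u true ≠ f := e2
              simp [e1, Pi.single_eq_of_ne e3]
            · have e3 : R.us u false ≠ f := e2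
              simp [e1, Pi.single_eq_of_ne e3]
          rw [key a b huu hf, key b a (Ne.symm huu) (fun a' => (hf a').trans or_comm), one_mul,
            one_mul] at h1
          exact h1
        · intro u hu
          rw [Finset.mem_erase, Finset.mem_erase] at hu
          have : ∀ i, R.us u i ≠ f := fun i h => by
            rcases (hf (u, i)).1 h with h | h
            · exact hu.2.1 (congrArg Prod.fst h)
            · exact hu.1 (congrArg Prod.fst h)
          rw [Pi.single_eq_of_ne (this _), Pi.single_eq_of_ne (this _), add_zero, zero_mul]
      have hc : ∀ u u' c, R.uv u c ≠ R.uv u' (!c) := fun u u' c h => by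
        have := congrArg col h
        rw [R.col_uv, R.col_uv] at this
        exact Bool.not_ne_self c this.symm
      have heq : ∀ c, R.uv a.1 c = R.uv b.1 c := by
        intro c
        by_contra hne
        have := hy (Pi.single (R.uv a.1 c) 1)
        have e1 : (Pi.single (R.uv a.1 c) 1 : V → ZMod 2) (R.uv b.1 c) = 0 :=
          Pi.single_eq_of_ne (Ne.symm hne) _
        have e2 : ∀ u', (Pi.single (R.uv a.1 c) 1 : V → ZMod 2) (R.uv u' (!c)) = 0 := fun u' =>
          Pi.single_eq_of_ne (Ne.symm (hc _ _ _)) _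
        have e3 : (Pi.single (R.uv a.1 c) 1 : V → ZMod 2) (R.uv a.1 c) = 1 := Pi.single_eq_same _ _
        cases c
        · rw [Bool.not_false] at e2
          rw [e1, e2, e2, e3] at this
          simp at this
        · rw [Bool.not_true] at e2
          rw [e1, e2, e2, e3] at this
          simp at this
      have := @R.inj (Sum.inl a.1) (Sum.inl b.1) (by simp [heq])
      exact Sum.inl_injective this

end BAP

/-! ### Cutting off bichromatic corners -/

namespace BAP

variable {V : Type} {col : V → Bool} {P : Set (V × V)}

namespace Rep

/-- The number of sides of uncrossed edges on the face `f`. -/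
noncomputable def eN (R : Rep col P) (f : R.Φ) : ℕ := cnt (fun w : R.U × Bool => R.us w.1 w.2) f

/-- The number of bichromatic corners at crossings on the face `f`. -/
noncomputable def bN (R : Rep col P) (f : R.Φ) : ℕ := cnt (fun w : R.X × Bool => R.gi w.1 w.2) f

/-- The number of monochromatic corners at crossings on the face `f`. -/
noncomputable def kN (R : Rep col P) (f : R.Φ) : ℕ := cnt (fun w : R.X × Bool => R.mono w.1 w.2) f

/-- The face `f` is bounded by one uncrossed edge and one bichromatic corner. -/
def TriFace (R : Rep col P) (f : R.Φ) : Prop := R.eN f = 1 ∧ R.bN f = 1 ∧ R.kN f = 0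

/-- Every bichromatic corner belongs to a triangle. -/
def Tri (R : Rep col P) : Prop := ∀ x s, R.TriFace (R.gi x s)

/-- The bichromatic corners that are not in triangles. -/
def bad (R : Rep col P) : Set (R.X × Bool) := {w | ¬ R.TriFace (R.gi w.1 w.2)}

theorem sum_corner {X : Type} [Fintype X] [DecidableEq (X × Bool)] (w : X × Bool)
    (F : X → Bool → ZMod 2) :
    ∑ x, ∑ s, (if (x, s) = w then F x s else 0) = F w.1 w.2 := by
  rw [← Fintype.sum_prod_type' (f := fun x s => if (x, s) = w then F x s else 0)]
  rw [Finset.sum_eq_single w]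
  · simp
  · intro b _ hb
    simp [hb]
  · simp

theorem cnt_sum {U B : Type} [Fintype U] (F : (U ⊕ Unit) → Bool → B) (f : B)
    [Decidable (F (Sum.inr ()) true = f)] [Decidable (F (Sum.inr ()) false = f)] :
    cnt (fun v : (U ⊕ Unit) × Bool => F v.1 v.2) f =
      cnt (fun v : U × Bool => F (Sum.inl v.1) v.2) f +
        ((if F (Sum.inr ()) true = f then 1 else 0) +
          (if F (Sum.inr ()) false = f then 1 else 0)) := by
  simp only [cnt]
  rw [Fintype.sum_prod_type, Fintype.sum_prod_type, Fintype.sum_sum_type]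
  simp only [Finset.univ_unique, Finset.sum_singleton, Fintype.sum_bool]
  congr 2 <;> congr

open Classical in
/-- Cutting off a bichromatic corner by a new edge, parallel to the two half-edges at the corner. -/
noncomputable def cut (R : Rep col P) (w : R.X × Bool) (hw : w ∈ R.bad) : Rep col P where
  X := R.X
  U := R.U ⊕ Unit
  Φ := Option R.Φ
  uv := Sum.elim R.uv fun _ => R.hv w.1 w.2
  us := Sum.elim (fun u i => some (R.us u i)) fun _ i => if i then some (R.gi w.1 w.2) else none
  hv := R.hv
  mono x c := some (R.mono x c)
  gi x s := if (x, s) = w then none else some (R.gi x s)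
  col_uv := by
    rintro (u | u) c
    · exact R.col_uv u c
    · exact R.col_hv _ _ c
  col_hv := R.col_hv
  hv_ne := R.hv_ne
  inj := R.inj
  cover p hp := by
    rcases R.cover p hp with ⟨u, h⟩ | h
    · exact Or.inl ⟨Sum.inl u, h⟩
    · exact Or.inr h
  cyc y γ := by
    have h := R.cyc y (fun f => γ (some f))
    have hg : ∀ x s, γ (if (x, s) = w then none else some (R.gi x s)) = γ (some (R.gi x s)) +
        if (x, s) = w then γ none + γ (some (R.gi x s)) else 0 := by
      intro x s
      split_ifs
      · generalize γ (some (R.gi x s)) = a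
        generalize γ none = b
        revert a b
        decide
      · simp
    have h2 := sum_corner w fun x s => ∑ c, (γ none + γ (some (R.gi x s))) * y (R.hv x s c)
    have h3 : (∑ x, ∑ s, ∑ c, (γ (some (R.mono x c)) +
        γ (if (x, s) = w then none else some (R.gi x s))) * y (R.hv x s c)) =
        (∑ x, ∑ s, ∑ c, (γ (some (R.mono x c)) + γ (some (R.gi x s))) * y (R.hv x s c)) +
        ∑ x, ∑ s, (if (x, s) = w then ∑ c, (γ none + γ (some (R.gi x s))) * y (R.hv x s c)
          else 0) := by
      simp only [← Finset.sum_add_distrib]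
      refine Finset.sum_congr rfl fun x _ => Finset.sum_congr rfl fun s _ => ?_
      rw [hg]
      by_cases h : (x, s) = w
      · rw [if_pos h, if_pos h, ← Finset.sum_add_distrib]
        exact Finset.sum_congr rfl fun c _ => by ring
      · simp [h]
    rw [h3, h2, Fintype.sum_sum_type]
    simp only [Sum.elim_inl, Sum.elim_inr, Finset.univ_unique, Finset.sum_singleton,
      Fintype.sum_bool, if_true, Bool.false_eq_true, if_false] at h ⊢
    generalize γ (some (R.gi w.1 w.2)) = a
    generalize γ none = b
    generalize y (R.hv w.1 w.2 true) = p
    generalize y (R.hv w.1 w.2 false) = q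
    have e : (b + a) * (q + p) + ((b + a) * p + (b + a) * q) = 0 := by
      revert a b p q
      decide
    linear_combination h + e
  bdry zU zX h1 h2 := by
    set ε := zU (Sum.inr ()) with hε
    obtain ⟨γ, h3, h4⟩ := R.bdry (fun u => zU (Sum.inl u))
      (fun x s c => zX x s c + if (x, s) = w then ε else 0)
      (fun x => by
        simp only [Finset.sum_add_distrib]
        rw [h1, zero_add]
        refine Finset.sum_eq_zero fun s _ => ?_
        rw [Fintype.sum_bool]
        exact zmod2_add_self _)
      (fun y => by
        have h := h2 y
        have h5 := sum_corner w fun x s => ∑ c, ε * y (R.hv x s c)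
        have h6 : (∑ x, ∑ s, ∑ c, (zX x s c + if (x, s) = w then ε else 0) * y (R.hv x s c)) =
            (∑ x, ∑ s, ∑ c, zX x s c * y (R.hv x s c)) +
            ∑ x, ∑ s, (if (x, s) = w then ∑ c, ε * y (R.hv x s c) else 0) := by
          simp only [← Finset.sum_add_distrib]
          refine Finset.sum_congr rfl fun x _ => Finset.sum_congr rfl fun s _ => ?_
          by_cases h : (x, s) = w
          · rw [if_pos h, if_pos h, ← Finset.sum_add_distrib]
            exact Finset.sum_congr rfl fun c _ => by ring
          · simp [h]
        rw [h6, h5]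
        rw [Fintype.sum_sum_type] at h
        simp only [Sum.elim_inl, Sum.elim_inr, Finset.univ_unique, Finset.sum_singleton,
          Fintype.sum_bool] at h ⊢
        rw [show zU (Sum.inr default) = ε from rfl] at h
        linear_combination h)
    refine ⟨fun o => o.elim (γ (R.gi w.1 w.2) + ε) γ, ?_, ?_⟩
    · rintro (u | u)
      · exact h3 u
      · change ε = (γ (R.gi w.1 w.2) + ε) + γ (R.gi w.1 w.2)
        have := zmod2_add_self (γ (R.gi w.1 w.2))
        linear_combination -this
    · intro x s c
      have h := h4 x s c
      have e := zmod2_add_self ε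
      by_cases hxs : (x, s) = w
      · rw [if_pos hxs] at h ⊢
        subst hxs
        change _ = γ (R.mono x c) + (γ (R.gi x s) + ε)
        linear_combination h - e
      · rw [if_neg hxs] at h ⊢
        change _ = γ (R.mono x c) + γ (R.gi x s)
        linear_combination h
  const γ h1 h2 := by
    have hn : γ none = γ (some (R.gi w.1 w.2)) := h1 (Sum.inr ())
    have h := R.const (fun f => γ (some f)) (fun u => h1 (Sum.inl u)) (fun x s c => by
      have h := h2 x s c
      by_cases hxs : (x, s) = w
      · rw [if_pos hxs, hn] at h
        rw [h, ← hxs]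
      · rwa [if_neg hxs] at h)
    rintro (_ | f) (_ | f')
    · rfl
    · rw [hn]; exact h _ _
    · rw [hn]; exact h _ _
    · exact h _ _
  nd f := by
    rw [cnt_sum]
    rcases f with _ | f
    · rintro ⟨-, h, -⟩
      exact one_ne_zero ((cnt_move_none (fun v : R.X × Bool => R.gi v.1 v.2) w).symm.trans h)
    · rintro ⟨h1, h2, h3⟩
      have hmf := cnt_move (fun v : R.X × Bool => R.gi v.1 v.2) w f
      rw [show cnt (fun a : R.X × Bool => if a = w then none else some (R.gi a.1 a.2)) (some f) = 0
        from h2] at hmf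
      simp only [Sum.elim_inl, Sum.elim_inr, if_true, Bool.false_eq_true, if_false, reduceCtorEq,
        add_zero, Option.some.injEq] at h1
      rw [cnt_some (fun v : R.U × Bool => R.us v.1 v.2)] at h1
      rw [cnt_some (fun v : R.X × Bool => R.mono v.1 v.2)] at h3
      by_cases hf : R.gi w.1 w.2 = f
      · rw [if_pos hf] at h1 hmf
        apply hw
        rw [hf]
        exact ⟨by unfold eN; omega, by unfold bN; omega, h3⟩
      · rw [if_neg hf] at h1 hmf
        exact R.nd f ⟨h1, by omega, h3⟩

open Classical in
theorem cut_bad (R : Rep col P) (w : R.X × Bool) (hw : w ∈ R.bad) :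
    (R.cut w hw).bad ⊂ (R.bad : Set (R.X × Bool)) := by
  have he : ∀ f : Option R.Φ, (R.cut w hw).eN f = cnt (fun v : R.U × Bool => some (R.us v.1 v.2)) f +
      ((if some (R.gi w.1 w.2) = f then 1 else 0) + if none = f then 1 else 0) := fun f => by
    refine (cnt_sum (R.cut w hw).us f).trans ?_
    congr
  refine ⟨?_, fun hsub => ?_⟩
  · intro v hv hgood
    apply hv
    have hvw : v ≠ w := fun h => hw (h ▸ hgood)
    have hg : (R.cut w hw).gi v.1 v.2 = some (R.gi v.1 v.2) := if_neg hvw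
    rw [hg]
    have hf : R.gi w.1 w.2 ≠ R.gi v.1 v.2 := fun h => hw (by
      rw [h]; exact hgood)
    refine ⟨?_, ?_, ?_⟩
    · rw [he, cnt_some (fun v : R.U × Bool => R.us v.1 v.2)]
      simp only [Option.some.injEq, hf, if_false, reduceCtorEq, add_zero]
      exact hgood.1
    · have := cnt_move (fun v : R.X × Bool => R.gi v.1 v.2) w (R.gi v.1 v.2)
      rw [if_neg hf, add_zero] at this
      exact this.trans hgood.2.1
    · exact (cnt_some (fun v : R.X × Bool => R.mono v.1 v.2) _).trans hgood.2.2
  · apply hsub hw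
    have hg : (R.cut w hw).gi w.1 w.2 = none := if_pos rfl
    rw [hg]
    refine ⟨?_, ?_, ?_⟩
    · rw [he, cnt_some_none]
      simp
    · exact cnt_move_none (fun v : R.X × Bool => R.gi v.1 v.2) w
    · exact cnt_some_none _

/-- Cutting off one corner after another turns all bichromatic corners into triangles. -/
theorem exists_tri (R : Rep col P) : ∃ R' : Rep col P, R'.Tri := by
  induction h : R.bad.ncard using Nat.strong_induction_on generalizing R with
  | _ n ih =>
    rcases R.bad.eq_empty_or_nonempty with he | ⟨w, hw⟩
    · refine ⟨R, fun x s => ?_⟩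
      by_contra hc
      have : (x, s) ∈ R.bad := hc
      rw [he] at this
      exact this
    · exact ih _ (h ▸ ncard_lt_ncard (R.cut_bad w hw) (toFinite R.bad)) (R.cut w hw) rfl

end Rep

end BAP

/-! ### Face lengths and the Euler formula -/

namespace BAP

/-- If every vector orthogonal to the range of `D` lies in the range of `E`, then
`rank D + rank E` is at least the dimension of the ambient space. -/
theorem rank_dual {A B J : Type*} [AddCommGroup A] [Module (ZMod 2) A] [AddCommGroup B]
    [Module (ZMod 2) B] [Module.Finite (ZMod 2) A] [Module.Finite (ZMod 2) B] [Fintype J]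
    (D : A →ₗ[ZMod 2] (J → ZMod 2)) (E : B →ₗ[ZMod 2] (J → ZMod 2))
    (h : ∀ z : J → ZMod 2, (∀ a, ∑ j, z j * D a j = 0) → ∃ b, E b = z)
    (a : A) (ha : a ≠ 0) (hDa : D a = 0) (b : B) (hb : b ≠ 0) (hEb : E b = 0) :
    Fintype.card J + 2 ≤ Module.finrank (ZMod 2) A + Module.finrank (ZMod 2) B := by
  classical
  have h1 := Subspace.finrank_add_finrank_dualAnnihilator_eq (LinearMap.range D)
  rw [Module.finrank_fintype_fun_eq_card] at h1
  have hD := LinearMap.finrank_range_add_finrank_ker D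
  have hE := LinearMap.finrank_range_add_finrank_ker E
  have h2 : Module.finrank (ZMod 2) (LinearMap.range D).dualAnnihilator ≤
      Module.finrank (ZMod 2) (LinearMap.range E) := by
    rw [← LinearEquiv.finrank_map_eq ((Pi.basisFun (ZMod 2) J).constr (ZMod 2)).symm
      (LinearMap.range D).dualAnnihilator]
    refine Submodule.finrank_mono ?_
    rintro z ⟨φ, hφ, rfl⟩
    refine h _ fun a => ?_
    have h3 := (Submodule.mem_dualAnnihilator φ).1 hφ (D a) ⟨a, rfl⟩
    rw [LinearMap.pi_apply_eq_sum_univ φ] at h3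
    rw [← h3]
    refine Finset.sum_congr rfl fun j _ => ?_
    rw [smul_eq_mul, mul_comm]
    congr 1
    simp only [LinearEquiv.coe_coe]
    change φ (Pi.basisFun (ZMod 2) J j) = _
    rw [Pi.basisFun_apply]
    congr 1
    ext k
    simp [Pi.single_apply, eq_comm]
  have h3 : 0 < Module.finrank (ZMod 2) (LinearMap.ker D) :=
    Module.finrank_pos_iff_exists_ne_zero.2
      ⟨⟨a, hDa⟩, fun h => ha (congrArg Subtype.val h)⟩
  have h4 : 0 < Module.finrank (ZMod 2) (LinearMap.ker E) :=
    Module.finrank_pos_iff_exists_ne_zero.2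
      ⟨⟨b, hEb⟩, fun h => hb (congrArg Subtype.val h)⟩
  omega

variable {V : Type} {col : V → Bool} {P : Set (V × V)}

namespace Rep

variable (R : Rep col P)

theorem sum_eN : ∑ f, R.eN f = 2 * Fintype.card R.U := by
  unfold eN
  rw [sum_cnt]
  simp [mul_comm]

theorem sum_bN : ∑ f, R.bN f = 2 * Fintype.card R.X := by
  unfold bN
  rw [sum_cnt]
  simp [mul_comm]

theorem sum_kN : ∑ f, R.kN f = 2 * Fintype.card R.X := by
  unfold kN
  rw [sum_cnt]
  simp [mul_comm]

theorem eN_pos (u : R.U) (i : Bool) : 0 < R.eN (R.us u i) := (cnt_pos _).2 ⟨(u, i), rfl⟩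
theorem bN_pos (x : R.X) (s : Bool) : 0 < R.bN (R.gi x s) := (cnt_pos _).2 ⟨(x, s), rfl⟩
theorem kN_pos (x : R.X) (c : Bool) : 0 < R.kN (R.mono x c) := (cnt_pos _).2 ⟨(x, c), rfl⟩

/-- The colours alternate around a face, except at monochromatic corners. -/
theorem even_eN_add_bN (f : R.Φ) : Even (R.eN f + R.bN f) := by
  classical
  have h := R.cyc (fun v => if col v then 1 else 0) (Pi.single f 1)
  simp only [R.col_uv, R.col_hv, Fintype.sum_bool, Bool.false_eq_true, if_false, if_true, mul_zero,
    mul_one, zero_add, add_zero] at h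
  rw [← ZMod.natCast_eq_zero_iff_even, Nat.cast_add, eN, bN, cnt_cast, cnt_cast,
    Fintype.sum_prod_type, Fintype.sum_prod_type]
  simp only [Fintype.sum_bool]
  rw [← h]
  congr 1
  · exact Finset.sum_congr rfl fun _ _ => add_comm _ _
  · refine Finset.sum_congr rfl fun x _ => ?_
    have := zmod2_add_self ((Pi.single f 1 : R.Φ → ZMod 2) (R.mono x true))
    linear_combination -this

open Classical in
theorem cyc_single (f : R.Φ) (y : V → ZMod 2) (he : R.eN f = 0) (hb : R.bN f = 0) :
    ∑ x, ∑ c, (Pi.single f 1 : R.Φ → ZMod 2) (R.mono x c) *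
      (y (R.hv x false c) + y (R.hv x true c)) = 0 := by
  have he' := (cnt_eq_zero _).1 he
  have hb' := (cnt_eq_zero _).1 hb
  have h := R.cyc y (Pi.single f 1)
  have h1 : ∀ u i, (Pi.single f 1 : R.Φ → ZMod 2) (R.us u i) = 0 := fun u i =>
    Pi.single_eq_of_ne (he' (u, i)) _
  have h2 : ∀ u i, (Pi.single f 1 : R.Φ → ZMod 2) (R.gi u i) = 0 := fun u i =>
    Pi.single_eq_of_ne (hb' (u, i)) _
  simp only [h1, h2, add_zero, zero_mul, Finset.sum_const_zero, zero_add] at h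
  rw [← h]
  refine Finset.sum_congr rfl fun x _ => ?_
  simp only [Fintype.sum_bool]
  ring

/-- A face is a triangle at a bichromatic corner, or it is bounded by two monochromatic corners,
or it has positive charge. -/
theorem face_cases (hP : P.Nonempty) (f : R.Φ) :
    (R.eN f = 1 ∧ R.bN f = 1 ∧ R.kN f = 0) ∨ (R.eN f = 0 ∧ R.bN f = 0 ∧ R.kN f = 2) ∨
      7 ≤ 2 * R.eN f + 4 * R.bN f + 3 * R.kN f := by
  classical
  have h1 := R.even_eN_add_bN f
  have h2 : ¬ (R.eN f = 0 ∧ R.bN f = 0 ∧ R.kN f = 0) := by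
    rintro ⟨he, hb, hk⟩
    have he' := (cnt_eq_zero _).1 he
    have hb' := (cnt_eq_zero _).1 hb
    have hk' := (cnt_eq_zero _).1 hk
    have hall := R.const (Pi.single f 1) (fun u => by
      rw [Pi.single_eq_of_ne (he' (u, _)), Pi.single_eq_of_ne (he' (u, _))])
      (fun x s c => by rw [Pi.single_eq_of_ne (hk' (x, c)), Pi.single_eq_of_ne (hb' (x, s))])
    have hone : ∀ g, g = f := fun g => by
      by_contra hg
      have := hall g f
      rw [Pi.single_eq_same, Pi.single_eq_of_ne hg] at this
      exact zero_ne_one this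
    obtain ⟨p, hp⟩ := hP
    rcases R.cover p hp with ⟨u, -⟩ | ⟨x, s, -⟩
    · exact he' (u, false) (hone _)
    · exact hb' (x, s) (hone _)
  have h3 : ¬ (R.eN f = 0 ∧ R.bN f = 0 ∧ R.kN f = 1) := by
    rintro ⟨he, hb, hk⟩
    obtain ⟨⟨x, c⟩, hx⟩ := (cnt_eq_one _).1 hk
    have h := R.cyc_single f (Pi.single (R.hv x false c) 1) he hb
    rw [← Fintype.sum_prod_type' (f := fun x' c' => (Pi.single f 1 : R.Φ → ZMod 2) (R.mono x' c') *
      ((Pi.single (R.hv x false c) 1 : V → ZMod 2) (R.hv x' false c') +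
        (Pi.single (R.hv x false c) 1 : V → ZMod 2) (R.hv x' true c'))),
      Finset.sum_eq_single (x, c)] at h
    · have e1 : R.mono x c = f := (hx (x, c)).2 rfl
      simp only at h
      rw [e1, Pi.single_eq_same, Pi.single_eq_same, Pi.single_eq_of_ne (R.hv_ne x c).symm] at h
      simp at h
    · intro w _ hw
      rw [Pi.single_eq_of_ne (fun h => hw ((hx w).1 h)), zero_mul]
    · simp
  have h4 := R.nd f
  change ¬ (R.eN f = 2 ∧ R.bN f = 0 ∧ R.kN f = 0) at h4
  obtain ⟨r, hr⟩ := h1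
  generalize R.eN f = e at *
  generalize R.bN f = b at *
  generalize R.kN f = k at *
  omega

/-- The coboundary of a function on the vertices and crossings, as a function on the uncrossed edges
and the half-edges. -/
def cobd : ((V → ZMod 2) × (R.X → ZMod 2)) →ₗ[ZMod 2] (R.U ⊕ R.X × Bool × Bool → ZMod 2) :=
  { toFun := fun p => Sum.elim (fun u => p.1 (R.uv u false) + p.1 (R.uv u true))
      (fun h => p.1 (R.hv h.1 h.2.1 h.2.2) + p.2 h.1)
    map_add' := by
      intro p q
      ext (u | h)
      · simp only [Prod.fst_add, Pi.add_apply, Sum.elim_inl]; ring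
      · simp only [Prod.fst_add, Prod.snd_add, Pi.add_apply, Sum.elim_inr]; ring
    map_smul' := by
      intro r p
      ext (u | h)
      · simp [mul_add]
      · simp [mul_add] }

/-- The coboundary of a function on the faces, in the dual graph. -/
def bd : (R.Φ → ZMod 2) →ₗ[ZMod 2] (R.U ⊕ R.X × Bool × Bool → ZMod 2) :=
  { toFun := fun γ => Sum.elim (fun u => γ (R.us u false) + γ (R.us u true))
      (fun h => γ (R.mono h.1 h.2.2) + γ (R.gi h.1 h.2.1))
    map_add' := by
      intro p q
      ext (u | h)
      · simp only [Pi.add_apply, Sum.elim_inl]; ring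
      · simp only [Pi.add_apply, Sum.elim_inr]; ring
    map_smul' := by
      intro r p
      ext (u | h)
      · simp [mul_add]
      · simp [mul_add] }

theorem exists_bd (z : R.U ⊕ R.X × Bool × Bool → ZMod 2)
    (hz : ∀ a, ∑ j, z j * R.cobd a j = 0) : ∃ γ, R.bd γ = z := by
  obtain ⟨γ, h1, h2⟩ := R.bdry (fun u => z (Sum.inl u)) (fun x s c => z (Sum.inr (x, s, c)))
    (fun x => by
      classical
      have h := hz (0, Pi.single x 1)
      simp only [cobd, LinearMap.coe_mk, AddHom.coe_mk, Fintype.sum_sum_type, Sum.elim_inl,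
        Sum.elim_inr, Pi.zero_apply, add_zero, mul_zero, Finset.sum_const_zero, zero_add,
        Fintype.sum_prod_type] at h
      rw [Finset.sum_eq_single x] at h
      · simpa using h
      · intro b _ hb
        simp [hb]
      · simp)
    (fun y => by
      have h := hz (y, 0)
      simpa only [cobd, LinearMap.coe_mk, AddHom.coe_mk, Fintype.sum_sum_type, Sum.elim_inl,
        Sum.elim_inr, Pi.zero_apply, add_zero, Fintype.sum_prod_type] using h)
  refine ⟨γ, ?_⟩
  ext (u | ⟨x, s, c⟩)
  · exact (h1 u).symm
  · exact (h2 x s c).symm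

/-- Euler's formula, as an inequality: there may be several components. -/
theorem euler [Fintype V] [Nonempty V] :
    Fintype.card R.U + 3 * Fintype.card R.X + 2 ≤ Fintype.card V + Fintype.card R.Φ := by
  have h := rank_dual R.cobd R.bd R.exists_bd
    (fun _ => 1, fun _ => 1) (fun h => by
      have := congrFun (congrArg Prod.fst h) (Classical.arbitrary V)
      exact one_ne_zero this)
    (by
      ext (u | h)
      · exact zmod2_add_self 1
      · exact zmod2_add_self 1)
    (fun _ => 1) (fun h => one_ne_zero (congrFun h (Classical.arbitrary R.Φ)))
    (by
      ext (u | h)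
      · exact zmod2_add_self 1
      · exact zmod2_add_self 1)
  rw [Module.finrank_prod, Module.finrank_fintype_fun_eq_card, Module.finrank_fintype_fun_eq_card,
    Module.finrank_fintype_fun_eq_card] at h
  simp only [Fintype.card_sum, Fintype.card_prod, Fintype.card_bool] at h
  omega

end Rep

end BAP

/-! ### Charges and classes of faces -/

namespace BAP

theorem sum_mul_cnt {A B M : Type} [Fintype A] [Fintype B] [CommSemiring M] (g : A → B)
    (F : B → M) : ∑ f, F f * (cnt g f : M) = ∑ a, F (g a) := by
  classical
  simp only [cnt, Nat.cast_sum, Finset.mul_sum]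
  rw [Finset.sum_comm]
  simp

variable {V : Type} {col : V → Bool} {P : Set (V × V)}

namespace Rep

variable (R : Rep col P)

/-- Two faces are linked if they meet in a half-edge. -/
def link (f g : R.Φ) : Prop := ∃ x c s, f = R.mono x c ∧ g = R.gi x s

/-- The classes of faces generated by links; equivalently, the faces of the subgraph formed by the
uncrossed edges, as far as the cycle space is concerned. -/
def Cls : Type := Quot R.link

noncomputable instance : Fintype R.Cls :=
  have : Finite R.Cls := inferInstanceAs (Finite (Quot R.link))
  Fintype.ofFinite _

/-- The class of a face. -/
def cls (f : R.Φ) : R.Cls := Quot.mk _ f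

theorem cls_gi (x : R.X) (s c : Bool) : R.cls (R.gi x s) = R.cls (R.mono x c) :=
  (Quot.sound ⟨x, c, s, rfl, rfl⟩).symm

theorem cls_mono (x : R.X) (c d : Bool) : R.cls (R.mono x c) = R.cls (R.mono x d) :=
  (R.cls_gi x false c).symm.trans (R.cls_gi x false d)

/-- Twice the charge of a face. The subtraction does not truncate, by `Rep.face_cases`. -/
noncomputable def ch (f : R.Φ) : ℕ := 2 * R.eN f + 4 * R.bN f + 3 * R.kN f - 6

open Classical in
/-- The total charge of a class of faces, doubled. -/
noncomputable def chS (C : R.Cls) : ℕ := ∑ f, if R.cls f = C then R.ch f else 0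

theorem ch_spec (hP : P.Nonempty) (f : R.Φ) :
    2 * R.eN f + 4 * R.bN f + 3 * R.kN f = R.ch f + 6 := by
  have := R.face_cases hP f
  unfold ch
  omega

theorem kN_of_ch (hP : P.Nonempty) {f : R.Φ} (h : R.ch f = 0) : R.kN f = 0 ∨ R.kN f = 2 := by
  have := R.face_cases hP f
  have := R.ch_spec hP f
  omega

theorem ch_le_chS (f : R.Φ) : R.ch f ≤ R.chS (R.cls f) := by
  classical
  refine le_trans ?_ (Finset.single_le_sum
    (f := fun g => if R.cls g = R.cls f then R.ch g else 0) (fun _ _ => Nat.zero_le _)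
    (Finset.mem_univ f))
  simp

theorem sum_chS : ∑ C, R.chS C = ∑ f, R.ch f := by
  classical
  unfold chS
  rw [Finset.sum_comm]
  simp

theorem even_chS (hP : P.Nonempty) (C : R.Cls) : Even (R.chS C) := by
  classical
  have h : ∑ f, (if R.cls f = C then 1 else 0) * R.kN f =
      ∑ x, 2 * if R.cls (R.mono x true) = C then 1 else 0 := by
    have := sum_mul_cnt (M := ℕ) (fun w : R.X × Bool => R.mono w.1 w.2)
      (fun f => if R.cls f = C then 1 else 0)
    simp only [Nat.cast_id] at this
    unfold kN
    rw [this, Fintype.sum_prod_type]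
    refine Finset.sum_congr rfl fun x _ => ?_
    rw [Fintype.sum_bool, R.cls_mono x false true, two_mul]
  have h2 : Even (∑ f, (if R.cls f = C then 1 else 0) * R.kN f) := by
    rw [h, ← Finset.mul_sum]
    exact even_two_mul _
  have h3 : R.chS C + ∑ f, (if R.cls f = C then 1 else 0) * R.kN f =
      ∑ f, 2 * (if R.cls f = C then R.eN f + 2 * R.bN f + 2 * R.kN f - 3 else 0) := by
    unfold chS
    rw [← Finset.sum_add_distrib]
    refine Finset.sum_congr rfl fun f _ => ?_
    have := R.ch_spec hP f
    split_ifs <;> omega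
  have h4 : Even (R.chS C + ∑ f, (if R.cls f = C then 1 else 0) * R.kN f) := by
    rw [h3, ← Finset.mul_sum]
    exact even_two_mul _
  exact (Nat.even_add.1 h4).2 h2

open Classical in
/-- For a chargeless class there is a set of vertices which no uncrossed edge leaves and which
separates the two ends of each colour at exactly the crossings of the class. The reason is that
each face of the class has none or two monochromatic corners. -/
theorem exists_cut (hP : P.Nonempty) (C : R.Cls) (hC : R.chS C = 0) :
    ∃ y : V → ZMod 2, (∀ u, y (R.uv u false) + y (R.uv u true) = 0) ∧
      ∀ x c, y (R.hv x false c) + y (R.hv x true c) = if R.cls (R.mono x c) = C then 1 else 0 := by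
  have hz : ∀ f, R.cls f = C → (R.kN f : ZMod 2) = 0 := by
    rintro f rfl
    have h := R.ch_le_chS f
    rw [hC] at h
    rcases R.kN_of_ch hP (Nat.le_zero.1 h) with h | h
    · rw [h]; rfl
    · rw [h]; rfl
  obtain ⟨⟨y, w⟩, hyw⟩ := fredholm R.cobd (Sum.elim (fun _ => 0)
    (fun h => if h.2.1 = false ∧ R.cls (R.mono h.1 true) = C then 1 else 0)) (fun z hz' => by
      obtain ⟨γ, rfl⟩ := R.exists_bd z hz'
      have h := sum_mul_cnt (M := ZMod 2) (fun w : R.X × Bool => R.mono w.1 w.2)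
        (fun f => if R.cls f = C then γ f else 0)
      rw [Finset.sum_eq_zero, Fintype.sum_prod_type] at h
      · rw [Fintype.sum_sum_type, Fintype.sum_prod_type]
        simp only [Sum.elim_inl, mul_zero, Finset.sum_const_zero, zero_add, Sum.elim_inr]
        refine (Finset.sum_congr rfl fun x _ => ?_).trans h.symm
        simp only [Fintype.sum_prod_type, Fintype.sum_bool, Bool.true_eq_false, false_and, if_false,
          mul_zero, zero_add, true_and]
        rw [R.cls_mono x false true]
        split_ifs
        · simp only [bd, LinearMap.coe_mk, AddHom.coe_mk, Sum.elim_inr, mul_one]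
          have := zmod2_add_self (γ (R.gi x false))
          linear_combination this
        · simp
      · intro f _
        split_ifs with hf
        · have := hz f hf
          unfold kN at this
          rw [this, mul_zero]
        · rw [zero_mul])
  refine ⟨y, fun u => congrFun hyw (Sum.inl u), fun x c => ?_⟩
  have h1 := congrFun hyw (Sum.inr (x, false, c))
  have h2 := congrFun hyw (Sum.inr (x, true, c))
  simp only [cobd, LinearMap.coe_mk, AddHom.coe_mk, Sum.elim_inr, true_and, Bool.true_eq_false,
    false_and, if_false] at h1 h2
  rw [R.cls_mono x c true]
  have := zmod2_add_self (w x)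
  linear_combination h1 + h2 - this

theorem exists_x_of_chS (hP : P.Nonempty) (C : R.Cls) (hC : R.chS C = 0) :
    ∃ x, R.cls (R.mono x false) = C := by
  obtain ⟨f, rfl⟩ := Quot.exists_rep C
  have h := R.ch_le_chS f
  change R.chS (R.cls f) = 0 at hC
  rw [hC] at h
  have h1 := R.face_cases hP f
  have h2 := R.ch_spec hP f
  have h3 : 0 < R.bN f ∨ 0 < R.kN f := by omega
  rcases h3 with h3 | h3
  · obtain ⟨⟨x, s⟩, hx⟩ := (cnt_pos _).1 h3
    exact ⟨x, (R.cls_gi x s false).symm.trans (congrArg R.cls hx)⟩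
  · obtain ⟨⟨x, s⟩, hx⟩ := (cnt_pos _).1 h3
    exact ⟨x, (R.cls_mono x false s).trans (congrArg R.cls hx)⟩

open Classical in
/-- The number of classes with positive charge. -/
noncomputable def posN : ℕ := (Finset.univ.filter fun C => R.chS C ≠ 0).card

/-- The graph of uncrossed edges together with one monochromatic pair of vertices for every
chargeless class satisfies Euler's formula with the classes as faces: by `Rep.exists_cut` the
additional pairs lie on no cycles. -/
theorem card_U_le [Fintype V] [Nonempty V] (hP : P.Nonempty) :
    Fintype.card R.U + 2 ≤ Fintype.card V + R.posN := by
  classical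
  have hx : ∀ C : {C // R.chS C = 0}, ∃ x, R.cls (R.mono x false) = C.1 := fun C =>
    R.exists_x_of_chS hP C.1 C.2
  choose x hx using hx
  let D : (V → ZMod 2) →ₗ[ZMod 2] (R.U ⊕ {C // R.chS C = 0} → ZMod 2) :=
    { toFun := fun y => Sum.elim (fun u => y (R.uv u false) + y (R.uv u true))
        (fun C => y (R.hv (x C) false false) + y (R.hv (x C) true false))
      map_add' := by
        intro p q
        ext (u | h)
        · simp only [Pi.add_apply, Sum.elim_inl]; ring
        · simp only [Pi.add_apply, Sum.elim_inr]; ring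
      map_smul' := by
        intro r p
        ext (u | h)
        · simp [mul_add]
        · simp [mul_add] }
  let E : (R.Cls → ZMod 2) →ₗ[ZMod 2] (R.U ⊕ {C // R.chS C = 0} → ZMod 2) :=
    { toFun := fun b => Sum.elim (fun u => b (R.cls (R.us u false)) + b (R.cls (R.us u true)))
        (fun _ => 0)
      map_add' := by
        intro p q
        ext (u | h)
        · simp only [Pi.add_apply, Sum.elim_inl]; ring
        · simp
      map_smul' := by
        intro r p
        ext (u | h)
        · simp [mul_add]
        · simp }
  have h := rank_dual D E (fun z hz => by
    have hz0 : ∀ C, z (Sum.inr C) = 0 := by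
      intro C
      obtain ⟨y, hy1, hy2⟩ := R.exists_cut hP C.1 C.2
      have h := hz y
      simp only [D, LinearMap.coe_mk, AddHom.coe_mk, Fintype.sum_sum_type, Sum.elim_inl,
        Sum.elim_inr, hy1, hy2, hx, mul_zero, Finset.sum_const_zero, zero_add] at h
      rw [Finset.sum_eq_single C] at h
      · simpa using h
      · intro C' _ hC'
        rw [if_neg (fun h => hC' (Subtype.ext h)), mul_zero]
      · simp
    obtain ⟨γ, h1, h2⟩ := R.bdry (fun u => z (Sum.inl u)) (fun _ _ _ => 0) (by simp)
      (fun y => by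
        have h := hz y
        simp only [D, LinearMap.coe_mk, AddHom.coe_mk, Fintype.sum_sum_type, Sum.elim_inl,
          Sum.elim_inr, hz0, zero_mul, Finset.sum_const_zero, add_zero] at h ⊢
        exact h)
    refine ⟨Quot.lift γ ?_, ?_⟩
    · rintro _ _ ⟨x, c, s, rfl, rfl⟩
      exact zmod2_add_eq_zero.1 (h2 x s c).symm
    · ext (u | C)
      · exact (h1 u).symm
      · exact (hz0 C).symm)
    (fun _ => 1) (fun h => one_ne_zero (congrFun h (Classical.arbitrary V)))
    (by
      ext (u | h)
      · exact zmod2_add_self 1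
      · exact zmod2_add_self 1)
    (fun _ => 1) (fun h => one_ne_zero (congrFun h (R.cls (Classical.arbitrary R.Φ))))
    (by
      ext (u | h)
      · exact zmod2_add_self 1
      · rfl)
  rw [Module.finrank_fintype_fun_eq_card, Module.finrank_fintype_fun_eq_card, Fintype.card_sum,
    Fintype.card_subtype] at h
  have h2 := Finset.card_filter_add_card_filter_not (s := (Finset.univ : Finset R.Cls))
    (fun C => R.chS C = 0)
  rw [Finset.card_univ] at h2
  unfold posN
  simp only [ne_eq]
  omega

/-- Total charge by Euler's formula. -/
theorem sum_ch_le [Fintype V] [Nonempty V] (hP : P.Nonempty) :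
    ∑ C, R.chS C + 2 * Fintype.card R.U + 4 * Fintype.card R.X + 12 ≤ 6 * Fintype.card V := by
  have h := R.euler
  have h1 : ∑ f, (2 * R.eN f + 4 * R.bN f + 3 * R.kN f) = ∑ f, (R.ch f + 6) :=
    Finset.sum_congr rfl fun f _ => R.ch_spec hP f
  simp only [Finset.sum_add_distrib, ← Finset.mul_sum, R.sum_eN, R.sum_bN, R.sum_kN,
    Finset.sum_const, Finset.card_univ, smul_eq_mul] at h1
  rw [R.sum_chS]
  omega

/-- Charges of classes are even, so a charged class has (doubled) charge at least two. -/
theorem two_mul_posN_le (hP : P.Nonempty) : 2 * R.posN ≤ ∑ C, R.chS C := by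
  classical
  unfold posN
  rw [mul_comm, ← smul_eq_mul, ← Finset.sum_const, Finset.sum_filter]
  refine Finset.sum_le_sum fun C _ => ?_
  have h := R.even_chS hP C
  split_ifs with hC
  · obtain ⟨r, hr⟩ := h
    omega
  · exact Nat.zero_le _

theorem two_mul_posN_add_ch_le (hP : P.Nonempty) (q : R.Φ) :
    2 * R.posN + R.ch q ≤ ∑ C, R.chS C + 2 := by
  classical
  have h0 : ∑ C, (if R.chS C ≠ 0 then 2 else 0) = 2 * R.posN := by
    unfold posN
    rw [← Finset.sum_filter, Finset.sum_const, smul_eq_mul, mul_comm]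
  rw [← h0, ← Finset.sum_erase_add _ _ (Finset.mem_univ (R.cls q)),
    ← Finset.sum_erase_add (a := R.cls q) _ R.chS (Finset.mem_univ (R.cls q))]
  have h1 : ∑ C ∈ Finset.univ.erase (R.cls q), (if R.chS C ≠ 0 then 2 else 0) ≤
      ∑ C ∈ Finset.univ.erase (R.cls q), R.chS C := by
    refine Finset.sum_le_sum fun C _ => ?_
    have h := R.even_chS hP C
    split_ifs with hC
    · obtain ⟨r, hr⟩ := h
      omega
    · exact Nat.zero_le _
  have h2 := R.ch_le_chS q
  split_ifs <;> omega

end Rep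

end BAP

/-! ### Degrees -/

namespace BAP

section
variable {A B : Type} [Fintype A] [DecidableEq B] (g : A → B) (F : A → ZMod 2)

theorem sum_single_zero {f : B} (h : cnt g f = 0) :
    ∑ a', (Pi.single f 1 : B → ZMod 2) (g a') * F a' = 0 := by
  rw [cnt_eq_zero] at h
  refine Finset.sum_eq_zero fun a _ => ?_
  rw [Pi.single_eq_of_ne (h a), zero_mul]

theorem sum_single_one {f : B} {a : A} (h : ∀ a', g a' = f ↔ a' = a) :
    ∑ a', (Pi.single f 1 : B → ZMod 2) (g a') * F a' = F a := by
  rw [Finset.sum_eq_single a]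
  · rw [(h a).2 rfl, Pi.single_eq_same, one_mul]
  · intro b _ hb
    rw [Pi.single_eq_of_ne (fun e => hb ((h b).1 e)), zero_mul]
  · simp

theorem sum_single_two {f : B} {a b : A} (hab : a ≠ b) (h : ∀ a', g a' = f ↔ a' = a ∨ a' = b) :
    ∑ a', (Pi.single f 1 : B → ZMod 2) (g a') * F a' = F a + F b := by
  classical
  rw [← Finset.add_sum_erase _ _ (Finset.mem_univ a), Finset.sum_eq_single b]
  · rw [(h a).2 (Or.inl rfl), (h b).2 (Or.inr rfl), Pi.single_eq_same, one_mul, one_mul]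
  · intro c hc hb
    rw [Pi.single_eq_of_ne (fun e => ((h c).1 e).elim (Finset.ne_of_mem_erase hc) hb), zero_mul]
  · intro hb
    exact (hb (Finset.mem_erase.2 ⟨hab.symm, Finset.mem_univ b⟩)).elim

end

theorem eq_of_single {V : Type} {a b : V} (h : ∀ y : V → ZMod 2, y a + y b = 0) : a = b := by
  classical
  by_contra hne
  have := h (Pi.single a 1)
  rw [Pi.single_eq_same, Pi.single_eq_of_ne (Ne.symm hne), add_zero] at this
  exact one_ne_zero this

variable {V : Type} {col : V → Bool} {P : Set (V × V)}

/-- The pairs of `P` at a vertex. -/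
def starAt (P : Set (V × V)) (v : V) : Set (V × V) := {p ∈ P | p.1 = v ∨ p.2 = v}

namespace Rep

variable (R : Rep col P)

/-- `Rep.cyc` with the sums taken over sides of edges and corners of faces. -/
theorem cyc' (y : V → ZMod 2) (γ : R.Φ → ZMod 2) :
    ∑ w : R.U × Bool, γ (R.us w.1 w.2) * (y (R.uv w.1 false) + y (R.uv w.1 true)) +
      (∑ w : R.X × Bool, γ (R.gi w.1 w.2) * (y (R.hv w.1 w.2 false) + y (R.hv w.1 w.2 true)) +
      ∑ w : R.X × Bool, γ (R.mono w.1 w.2) * (y (R.hv w.1 false w.2) + y (R.hv w.1 true w.2)))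
        = 0 := by
  rw [← R.cyc y γ, ← Finset.sum_add_distrib]
  simp only [Fintype.sum_prod_type, Fintype.sum_bool]
  congr 1
  · exact Finset.sum_congr rfl fun u _ => by ring
  · exact Finset.sum_congr rfl fun u _ => by ring

/-- `Rep.cyc` with the sums taken over the ends of edges and half-edges. -/
theorem cyc'' (y : V → ZMod 2) (γ : R.Φ → ZMod 2) :
    ∑ w : R.U × Bool, y (R.uv w.1 w.2) * (γ (R.us w.1 false) + γ (R.us w.1 true)) +
      ∑ w : R.X × Bool × Bool, y (R.hv w.1 w.2.1 w.2.2) *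
        (γ (R.mono w.1 w.2.2) + γ (R.gi w.1 w.2.1)) = 0 := by
  rw [← R.cyc y γ]
  simp only [Fintype.sum_prod_type, Fintype.sum_bool]
  congr 1
  · exact Finset.sum_congr rfl fun u _ => by ring
  · exact Finset.sum_congr rfl fun u _ => by ring

/-- The edge of a triangle joins the ends of the two half-edges of the triangle. -/
theorem exists_edge {x : R.X} {s : Bool} (h : R.TriFace (R.gi x s)) :
    ∃ u i, R.us u i = R.gi x s ∧ R.us u (!i) ≠ R.gi x s ∧ ∀ c, R.uv u c = R.hv x s c := by
  classical
  obtain ⟨he, hb, hk⟩ := h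
  obtain ⟨⟨u, i⟩, hu⟩ := (cnt_eq_one _).1 he
  obtain ⟨w, hw⟩ := (cnt_eq_one _).1 hb
  obtain rfl := (hw (x, s)).1 rfl
  have hui : R.us u i = R.gi x s := (hu (u, i)).2 rfl
  refine ⟨u, i, hui, fun h => ?_, fun c => ?_⟩
  · exact Bool.not_ne_self i (congrArg Prod.snd ((hu (u, !i)).1 h))
  · have h1 : ∀ y : V → ZMod 2, (y (R.uv u false) + y (R.uv u true)) +
        (y (R.hv x s false) + y (R.hv x s true)) = 0 := by
      intro y
      have h := R.cyc' y (Pi.single (R.gi x s) 1)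
      rw [sum_single_one (fun w : R.U × Bool => R.us w.1 w.2) _ hu,
        sum_single_one (fun w : R.X × Bool => R.gi w.1 w.2) _ hw,
        sum_single_zero (fun w : R.X × Bool => R.mono w.1 w.2) _ hk, add_zero] at h
      exact h
    refine eq_of_single fun y => ?_
    have h2 := h1 (fun v => if col v = c then y v else 0)
    simp only [R.col_uv, R.col_hv] at h2
    cases c <;> simpa using h2

/-- The number of uncrossed edges at `v`. -/
noncomputable def dU (v : V) : ℕ := cnt (fun w : R.U × Bool => R.uv w.1 w.2) v

/-- The number of half-edges at `v`. -/
noncomputable def dX (v : V) : ℕ := cnt (fun w : R.X × Bool × Bool => R.hv w.1 w.2.1 w.2.2) v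

theorem cnt_eq_ncard {A B : Type} [Fintype A] (g : A → B) (f : B) :
    cnt g f = {a | g a = f}.ncard := by
  classical
  rw [cnt_eq_card, ← ncard_coe_finset]
  congr
  ext a
  simp

/-- Every half-edge lies in a triangle with an uncrossed edge at the same vertex, and an
uncrossed edge has only two sides. -/
theorem dX_le (hT : R.Tri) (v : V) : R.dX v ≤ 2 * R.dU v := by
  have h1 := fun w : R.X × Bool => R.exists_edge (hT w.1 w.2)
  choose u i h1 _ h3 using h1
  have h2 : {w : R.X × Bool × Bool | R.hv w.1 w.2.1 w.2.2 = v}.ncard ≤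
      ({w : R.U × Bool | R.uv w.1 w.2 = v} ×ˢ (univ : Set Bool)).ncard := by
    refine ncard_le_ncard_of_injOn (fun w => ((u (w.1, w.2.1), w.2.2), i (w.1, w.2.1))) ?_ ?_
      (toFinite _)
    · rintro ⟨x, s, c⟩ h
      exact ⟨(h3 (x, s) c).trans h, mem_univ _⟩
    · rintro ⟨x, s, c⟩ - ⟨x', s', c'⟩ - h
      simp only [Prod.mk.injEq] at h
      obtain ⟨w, hw⟩ := (cnt_eq_one _).1 (hT x s).2.1
      have e : R.gi x' s' = R.gi x s := by
        have e1 := h1 (x, s)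
        have e2 := h1 (x', s')
        rw [h.1.1, h.2] at e1
        exact e2.symm.trans e1
      have := ((hw (x', s')).1 e).trans ((hw (x, s)).1 rfl).symm
      simp only [Prod.mk.injEq] at this ⊢
      exact ⟨this.1.symm, this.2.symm, h.1.2⟩
  rw [ncard_prod, ncard_univ, Nat.card_eq_fintype_card, Fintype.card_bool] at h2
  unfold dX dU
  rw [cnt_eq_ncard, cnt_eq_ncard]
  omega

theorem star_le (v : V) : (starAt P v).ncard ≤ R.dU v + R.dX v := by
  let E : (R.U × Bool) ⊕ (R.X × Bool × Bool) → V × V :=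
    Sum.elim (fun w => (R.uv w.1 false, R.uv w.1 true))
      fun w => if w.2.2 then (R.hv w.1 (!w.2.1) false, R.hv w.1 w.2.1 true) else
        (R.hv w.1 w.2.1 false, R.hv w.1 (!w.2.1) true)
  have h1 : starAt P v ⊆ E '' (Sum.inl '' {w : R.U × Bool | R.uv w.1 w.2 = v} ∪
      Sum.inr '' {w : R.X × Bool × Bool | R.hv w.1 w.2.1 w.2.2 = v}) := by
    rintro p ⟨hp, hv⟩
    rcases R.cover p hp with ⟨u, rfl⟩ | ⟨x, s, rfl⟩
    · rcases hv with hv | hv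
      · exact ⟨_, Or.inl ⟨(u, false), hv, rfl⟩, rfl⟩
      · exact ⟨_, Or.inl ⟨(u, true), hv, rfl⟩, rfl⟩
    · rcases hv with hv | hv
      · exact ⟨_, Or.inr ⟨(x, s, false), hv, rfl⟩, rfl⟩
      · refine ⟨_, Or.inr ⟨(x, !s, true), hv, rfl⟩, ?_⟩
        simp [E]
  refine (ncard_le_ncard h1 (toFinite _)).trans ((ncard_image_le (toFinite _)).trans
    ((ncard_union_le _ _).trans ?_))
  rw [ncard_image_of_injective _ Sum.inl_injective, ncard_image_of_injective _ Sum.inr_injective]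
  unfold dX dU
  rw [cnt_eq_ncard, cnt_eq_ncard]

theorem sum_dU [Fintype V] : ∑ v, R.dU v = 2 * Fintype.card R.U := by
  unfold dU
  rw [sum_cnt]
  simp [mul_comm]

theorem sum_dU_col [Fintype V] (c : Bool) :
    ∑ v, (if col v = c then R.dU v else 0) = Fintype.card R.U := by
  have h := sum_mul_cnt (M := ℕ) (fun w : R.U × Bool => R.uv w.1 w.2)
    (fun v => if col v = c then 1 else 0)
  simp only [R.col_uv, Fintype.sum_prod_type, Fintype.sum_bool, Nat.cast_id] at h
  unfold dU
  simp only [ite_mul, one_mul, zero_mul] at h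
  rw [h]
  cases c <;> simp

theorem ncard_le [Fintype V] : P.ncard ≤ Fintype.card R.U + 2 * Fintype.card R.X := by
  have h1 : P ⊆ range (fun u => (R.uv u false, R.uv u true)) ∪
      range (fun w : R.X × Bool => (R.hv w.1 w.2 false, R.hv w.1 (!w.2) true)) := by
    intro p hp
    rcases R.cover p hp with ⟨u, rfl⟩ | ⟨x, s, rfl⟩
    · exact Or.inl ⟨u, rfl⟩
    · exact Or.inr ⟨(x, s), rfl⟩
  refine (ncard_le_ncard h1 (toFinite _)).trans ((ncard_union_le _ _).trans ?_)
  refine add_le_add ?_ ?_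
  · rw [← image_univ]
    refine (ncard_image_le (toFinite _)).trans ?_
    rw [ncard_univ, Nat.card_eq_fintype_card]
  · rw [← image_univ]
    refine (ncard_image_le (toFinite _)).trans ?_
    rw [ncard_univ, Nat.card_eq_fintype_card, Fintype.card_prod, Fintype.card_bool, mul_comm]

/-- At a vertex with one uncrossed edge `e` and two half-edges, both half-edges form triangles with
`e`, one on each side, so they also share their other face. That face is charged, for otherwise it
would be bounded by the four half-edges alone, and the half-edges opposite to the two at `v` would
belong to two different crossed edges with the same ends. -/
theorem exists_charged (hT : R.Tri) (hP : P.Nonempty) (v : V) (h1 : R.dU v = 1) (h2 : R.dX v = 2) :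
    ∃ q, 3 ≤ R.ch q := by
  classical
  obtain ⟨⟨u, c⟩, hu⟩ := (cnt_eq_one _).1 h1
  obtain ⟨⟨x, s, c₁⟩, ⟨x', s', c₂⟩, hne, hx⟩ := (cnt_eq_two _).1 h2
  have hv : R.uv u c = v := (hu (u, c)).2 rfl
  have hxv : R.hv x s c₁ = v := (hx (x, s, c₁)).2 (Or.inl rfl)
  have hxv' : R.hv x' s' c₂ = v := (hx (x', s', c₂)).2 (Or.inr rfl)
  have hcv : col v = c := by rw [← hv, R.col_uv]
  obtain rfl : c₁ = c := by rw [← hcv, ← hxv, R.col_hv]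
  obtain rfl : c₂ = c₁ := by rw [← hcv, ← hxv', R.col_hv]
  have hxx : x ≠ x' := by
    rintro rfl
    have hss : s ≠ s' := fun h => hne (by rw [h])
    have := R.hv_ne x c₂
    revert hss
    cases s <;> cases s' <;> simp_all
  obtain ⟨u₁, i, hi, -, hiv⟩ := R.exists_edge (hT x s)
  obtain ⟨u₂, i', hi', -, hiv'⟩ := R.exists_edge (hT x' s')
  obtain rfl : u₁ = u := congrArg Prod.fst ((hu (u₁, c₂)).1 ((hiv c₂).trans hxv))
  obtain rfl : u₂ = u₁ := congrArg Prod.fst ((hu (u₂, c₂)).1 ((hiv' c₂).trans hxv'))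
  have hii : i' = !i := by
    by_contra h
    obtain rfl : i' = i := by
      revert h
      cases i <;> cases i' <;> simp
    obtain ⟨w, hw⟩ := (cnt_eq_one _).1 (hT x s).2.1
    have := ((hw (x, s)).1 rfl).trans ((hw (x', s')).1 (hi'.symm.trans hi)).symm
    exact hxx (congrArg Prod.fst this)
  have hq : R.mono x c₂ = R.mono x' c₂ := by
    refine eq_of_single fun γ => ?_
    have h := R.cyc'' (Pi.single v 1) γ
    rw [sum_single_one (fun w : R.U × Bool => R.uv w.1 w.2) _ hu,
      sum_single_two (fun w : R.X × Bool × Bool => R.hv w.1 w.2.1 w.2.2) _ hne hx] at h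
    simp only [← hi, ← hi', hii] at h
    generalize γ (R.mono x c₂) = a at h ⊢
    generalize γ (R.mono x' c₂) = b at h ⊢
    cases i
    · simp only [Bool.not_false] at h
      generalize γ (R.us u₂ false) = p at h
      generalize γ (R.us u₂ true) = r at h
      revert a b p r
      decide
    · simp only [Bool.not_true] at h
      generalize γ (R.us u₂ false) = p at h
      generalize γ (R.us u₂ true) = r at h
      revert a b p r
      decide
  have hk : 2 ≤ R.kN (R.mono x c₂) := by
    unfold kN
    rw [cnt_eq_ncard, ← ncard_pair (show (x, c₂) ≠ (x', c₂) from fun h => hxx (Prod.mk.inj h).1)]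
    refine ncard_le_ncard ?_ (toFinite _)
    rintro w (rfl | rfl)
    · rfl
    · exact hq.symm
  refine ⟨R.mono x c₂, ?_⟩
  have hc := R.face_cases hP (R.mono x c₂)
  have hs := R.ch_spec hP (R.mono x c₂)
  have hev := R.even_eN_add_bN (R.mono x c₂)
  by_cases h0 : R.eN (R.mono x c₂) = 0 ∧ R.bN (R.mono x c₂) = 0 ∧ R.kN (R.mono x c₂) = 2
  swap
  · obtain ⟨r, hr⟩ := hev
    omega
  exfalso
  obtain ⟨w, w', hww, hw⟩ := (cnt_eq_two _).1 h0.2.2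
  have hwx : ∀ a, R.mono a.1 a.2 = R.mono x c₂ ↔ a = (x, c₂) ∨ a = (x', c₂) := by
    intro a
    rw [hw]
    have e1 := (hw (x, c₂)).1 rfl
    have e2 := (hw (x', c₂)).1 hq.symm
    have e3 : (x, c₂) ≠ (x', c₂) := fun h => hxx (Prod.mk.inj h).1
    rcases e1 with rfl | rfl
    · rcases e2 with e2 | rfl
      · exact (e3 e2.symm).elim
      · rfl
    · rcases e2 with rfl | e2
      · exact or_comm
      · exact (e3 e2.symm).elim
  have hopp : R.hv x (!s) c₂ = R.hv x' (!s') c₂ := by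
    refine eq_of_single fun y => ?_
    have h := R.cyc' y (Pi.single (R.mono x c₂) 1)
    rw [sum_single_zero (fun w : R.U × Bool => R.us w.1 w.2) _ h0.1,
      sum_single_zero (fun w : R.X × Bool => R.gi w.1 w.2) _ h0.2.1,
      sum_single_two (fun w : R.X × Bool => R.mono w.1 w.2) _
        (fun h => hxx (Prod.mk.inj h).1) hwx, zero_add, zero_add] at h
    have hy : y (R.hv x s c₂) = y (R.hv x' s' c₂) := by rw [hxv, hxv']
    have hy2 := zmod2_add_self (y (R.hv x' s' c₂))
    cases s <;> cases s' <;> simp only [Bool.not_false, Bool.not_true] at * <;>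
      linear_combination h - hy - hy2
  have hb : R.hv x s (!c₂) = R.hv x' s' (!c₂) := (hiv _).symm.trans (hiv' _)
  cases c₂
  · exact hxx (congrArg Prod.fst (@R.inj (x, !s) (x', !s')
      (by simp only [Bool.not_not]; exact Prod.ext hopp hb)))
  · exact hxx (congrArg Prod.fst (@R.inj (x, s) (x', s') (Prod.ext hb hopp)))

end Rep

end BAP

/-! ### Edge bounds by induction -/

namespace BAP

variable {V : Type} {P : Set (V × V)}

theorem ncard_delete [Finite V] (P : Set (V × V)) (v : V) :
    P.ncard ≤ {p : {w : V // w ≠ v} × {w : V // w ≠ v} | (p.1.1, p.2.1) ∈ P}.ncard +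
      (starAt P v).ncard := by
  have h : P ⊆ (fun p : {w : V // w ≠ v} × {w : V // w ≠ v} => (p.1.1, p.2.1)) ''
      {p : {w : V // w ≠ v} × {w : V // w ≠ v} | (p.1.1, p.2.1) ∈ P} ∪ starAt P v := by
    rintro ⟨a, b⟩ hp
    by_cases ha : a = v
    · exact Or.inr ⟨hp, Or.inl ha⟩
    by_cases hb : b = v
    · exact Or.inr ⟨hp, Or.inr hb⟩
    exact Or.inl ⟨(⟨a, ha⟩, ⟨b, hb⟩), hp, rfl⟩
  refine (ncard_le_ncard h (toFinite _)).trans ((ncard_union_le _ _).trans ?_)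
  exact Nat.add_le_add_right (ncard_image_le (toFinite _)) _

theorem star_delete [Finite V] (P : Set (V × V)) (v : V) (w : {w : V // w ≠ v}) :
    (starAt {p : {w : V // w ≠ v} × {w : V // w ≠ v} | (p.1.1, p.2.1) ∈ P} w).ncard ≤
      (starAt P w.1).ncard := by
  refine ncard_le_ncard_of_injOn (fun p => (p.1.1, p.2.1)) ?_ ?_ (toFinite _)
  · rintro p ⟨hp, h⟩
    exact ⟨hp, h.imp (congrArg Subtype.val) (congrArg Subtype.val)⟩
  · intro p _ q _ h
    simp only [Prod.mk.injEq] at h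
    exact Prod.ext (Subtype.ext h.1) (Subtype.ext h.2)

theorem ncard_le_mul [Fintype V] {col : V → Bool} (hP : ∀ p ∈ P, col p.1 = false ∧ col p.2 = true) :
    ∃ a b, a + b = Fintype.card V ∧ P.ncard ≤ a * b := by
  classical
  refine ⟨_, _, Finset.card_filter_add_card_filter_not (s := Finset.univ) (fun v => col v = false),
    ?_⟩
  rw [← Finset.card_product, ← ncard_coe_finset]
  refine ncard_le_ncard ?_ (toFinite _)
  intro p hp
  have := hP p hp
  simp [this.1, this.2]

/-- If the vertices have degree at least two and at most two on average, then all
degrees are two, and both colour classes have the same size. -/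
theorem even_of_dU [Fintype V] {col : V → Bool} (R : Rep col P) (h2 : ∀ v, 2 ≤ R.dU v)
    (hU : Fintype.card R.U ≤ Fintype.card V) : Even (Fintype.card V) := by
  have h : ∀ c, 2 * ∑ v, (if col v = c then 1 else 0) ≤ Fintype.card R.U := by
    intro c
    rw [← R.sum_dU_col c, Finset.mul_sum]
    refine Finset.sum_le_sum fun v _ => ?_
    split_ifs
    · exact h2 v
    · rfl
  have hs : ∑ v, (if col v = false then 1 else 0) + ∑ v, (if col v = true then 1 else 0) =
      Fintype.card V := by
    rw [← Finset.sum_add_distrib, ← Finset.card_univ, Finset.card_eq_sum_ones]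
    refine Finset.sum_congr rfl fun v _ => ?_
    cases col v <;> simp
  have h0 := h false
  have h1 := h true
  exact ⟨∑ v, (if col v = false then 1 else 0), by omega⟩

/-- The bounds for drawings, by induction on the number of vertices. A counterexample has large
degrees, as removing vertices of small degree gives a smaller one, and too few uncrossed edges for
that. -/
theorem edge_bound (n : ℕ) : ∀ (V : Type) [Fintype V] (col : V → Bool) (P : Set (V × V)),
    ODrawing V P → (∀ p ∈ P, col p.1 = false ∧ col p.2 = true) → Fintype.card V = n →
    (4 ≤ n → P.ncard + 8 ≤ 3 * n) ∧ (Odd n → 5 ≤ n → P.ncard + 9 ≤ 3 * n) := by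
  induction n using Nat.strong_induction_on with
  | _ n ih =>
  intro V _ col P D hP hn
  classical
  by_cases hn7 : n ≤ 7
  · obtain ⟨a, b, hab, hm⟩ := ncard_le_mul hP
    rw [hn] at hab
    have ha : a ≤ 7 := by omega
    have hb : b ≤ 7 := by omega
    refine ⟨fun h4 => ?_, fun ho h5 => ?_⟩
    · interval_cases a <;> interval_cases b <;> omega
    · obtain ⟨r, hr⟩ := ho
      interval_cases a <;> interval_cases b <;> omega
  have hcard : ∀ v : V, Fintype.card {w : V // w ≠ v} = n - 1 := fun v => by
    rw [Fintype.card_subtype_compl, Fintype.card_subtype_eq, hn]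
  have hdel := fun v : V => ih (n - 1) (by omega) {w : V // w ≠ v} (fun w => col w.1)
    {p | (p.1.1, p.2.1) ∈ P} (D.delete v) (fun p hp => hP _ hp) (hcard v)
  have hV : Nonempty V := Fintype.card_pos_iff.1 (by omega)
  -- a drawing with at least `3n - 8` edges has few charged classes and few uncrossed edges
  have hrep : 3 * n ≤ P.ncard + 8 → ∃ R : Rep col P, R.Tri ∧ P.Nonempty ∧
      R.posN + P.ncard + 6 ≤ 3 * n ∧ Fintype.card R.U + 2 ≤ n + R.posN ∧
      (∀ q, 2 * R.posN + R.ch q + 2 * P.ncard + 10 ≤ 6 * n) ∧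
      ∀ v, (starAt P v).ncard ≤ R.dU v + R.dX v ∧ R.dX v ≤ 2 * R.dU v := by
    intro hm
    obtain ⟨R₀⟩ := D.exists_genRep hP
    obtain ⟨R₁⟩ := R₀.exists_rep (by omega)
    obtain ⟨R, hT⟩ := R₁.exists_tri
    have hne : P.Nonempty := nonempty_of_ncard_ne_zero (by omega)
    have h1 := R.ncard_le
    have h2 := R.card_U_le hne
    have h3 := R.sum_ch_le hne
    have h4 := R.two_mul_posN_le hne
    refine ⟨R, hT, hne, by omega, by omega, fun q => ?_, fun v => ⟨R.star_le v, R.dX_le hT v⟩⟩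
    have h5 := R.two_mul_posN_add_ch_le hne q
    omega
  have key : (Odd n → P.ncard + 9 ≤ 3 * n) ∧ (Even n → P.ncard + 8 ≤ 3 * n) := by
    constructor
    · intro ho
      by_contra hcon
      obtain ⟨R, hT, hne, hN, hU, hq, hd⟩ := hrep (by omega)
      have hdeg : ∀ v, 3 ≤ (starAt P v).ncard := fun v => by
        have h1 := (hdel v).1 (by omega)
        have h2 := ncard_delete P v
        omega
      have htwo : ∀ v w, (starAt P v).ncard ≤ 3 → (starAt P w).ncard ≤ 3 → v = w := by
        intro v w hv hw
        by_contra hvw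
        have h1 := ncard_delete P v
        have h2 := ncard_delete {p : {w : V // w ≠ v} × {w : V // w ≠ v} | (p.1.1, p.2.1) ∈ P}
          ⟨w, Ne.symm hvw⟩
        have h3 := star_delete P v ⟨w, Ne.symm hvw⟩
        have h4 := (ih (n - 2) (by omega) {x : {w : V // w ≠ v} // x ≠ ⟨w, Ne.symm hvw⟩}
          (fun x => col x.1.1) _ ((D.delete v).delete ⟨w, Ne.symm hvw⟩) (fun p hp => hP _ hp) (by
            rw [Fintype.card_subtype_compl, Fintype.card_subtype_eq, hcard]
            omega)).2 (by
              obtain ⟨r, hr⟩ := ho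
              exact ⟨r - 1, by omega⟩) (by omega)
        simp only at h3
        omega
      have hd1 : ∀ v, 1 ≤ R.dU v := fun v => by
        have := hd v
        have := hdeg v
        omega
      have hd3 : ∀ v, R.dU v ≤ 1 → (starAt P v).ncard ≤ 3 := fun v hv => by
        have := hd v
        omega
      have hsum := R.sum_dU
      by_cases hall : ∀ v, 2 ≤ R.dU v
      · -- then there are `n` uncrossed edges at most, because `posN ≤ 2`
        have := even_of_dU R hall (by omega)
        rw [hn] at this
        exact (Nat.not_even_iff_odd.2 ho) this
      · push Not at hall
        obtain ⟨v, hv⟩ := hall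
        have hv1 : R.dU v = 1 := le_antisymm (by omega) (hd1 v)
        have hge : 2 * n ≤ ∑ v, R.dU v + 1 := by
          rw [← Finset.add_sum_erase _ _ (Finset.mem_univ v), hv1]
          have : ∑ w ∈ Finset.univ.erase v, 2 ≤ ∑ w ∈ Finset.univ.erase v, R.dU w := by
            refine Finset.sum_le_sum fun w hw => ?_
            by_contra hw2
            exact Finset.ne_of_mem_erase hw (htwo w v (hd3 w (by omega)) (hd3 v (by omega)))
          rw [Finset.sum_const, Finset.card_erase_of_mem (Finset.mem_univ v), Finset.card_univ, hn,
            smul_eq_mul] at this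
          omega
        obtain ⟨q, hq3⟩ := R.exists_charged hT hne v hv1 (by
          have := hd v
          have := hdeg v
          omega)
        have := hq q
        omega
    · intro he
      by_contra hcon
      obtain ⟨R, hT, hne, hN, hU, hq, hd⟩ := hrep (by omega)
      have hd2 : ∀ v, 2 ≤ R.dU v := fun v => by
        have h1 := (hdel v).2 (by
          obtain ⟨r, hr⟩ := he
          exact ⟨r - 1, by omega⟩) (by omega)
        have h2 := ncard_delete P v
        have := hd v
        omega
      have hsum := R.sum_dU
      have : ∑ v : V, 2 ≤ ∑ v, R.dU v := Finset.sum_le_sum fun v _ => hd2 v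
      rw [Finset.sum_const, Finset.card_univ, hn, smul_eq_mul] at this
      omega
  refine ⟨fun _ => ?_, fun ho _ => key.1 ho⟩
  rcases Nat.even_or_odd n with he | ho
  · exact key.2 he
  · have := key.1 ho
    omega

end BAP

/-! ### Bipartite graphs with an almost planar drawing -/

namespace BAP

/-- A curve transported to the complex plane, and reversed if necessary. -/
theorem exists_curve {c : ℝ → ℝ × ℝ} (hc : ContinuousOn c (Icc 0 1)) (hi : InjOn c (Icc 0 1))
    {p q a b : ℝ × ℝ} (h0 : c 0 = a) (h1 : c 1 = b) (h : (p = a ∧ q = b) ∨ (p = b ∧ q = a)) :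
    ∃ cw : ℝ → ℂ, ContinuousOn cw (Icc 0 1) ∧ InjOn cw (Icc 0 1) ∧
      cw 0 = Complex.equivRealProdCLM.symm p ∧ cw 1 = Complex.equivRealProdCLM.symm q ∧
      cw '' Icc 0 1 = Complex.equivRealProdCLM.symm '' (c '' Icc 0 1) ∧
      cw '' Ioo 0 1 = Complex.equivRealProdCLM.symm '' (c '' Ioo 0 1) := by
  have hcont := Complex.equivRealProdCLM.symm.continuous
  have hinj := Complex.equivRealProdCLM.symm.injective
  rcases h with ⟨rfl, rfl⟩ | ⟨rfl, rfl⟩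
  · exact ⟨fun t => Complex.equivRealProdCLM.symm (c t), hcont.comp_continuousOn hc,
      hinj.comp_injOn hi, congrArg _ h0, congrArg _ h1, (image_image _ _ _).symm,
      (image_image _ _ _).symm⟩
  · have hm : MapsTo (fun t : ℝ => 1 - t) (Icc 0 1) (Icc 0 1) := fun t ht =>
      ⟨by linarith [ht.2], by linarith [ht.1]⟩
    have e1 : (fun t : ℝ => 1 - t) '' Icc 0 1 = Icc 0 1 := by simp
    have e2 : (fun t : ℝ => 1 - t) '' Ioo 0 1 = Ioo 0 1 := by simp
    refine ⟨fun t => Complex.equivRealProdCLM.symm (c (1 - t)),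
      hcont.comp_continuousOn (hc.comp (by fun_prop) hm),
      hinj.comp_injOn (hi.comp (fun s _ t _ h => by simpa using h) hm), ?_, ?_, ?_, ?_⟩
    · simp [h1]
    · simp [h0]
    · rw [← e1, image_image, image_image, e1]
      simp only [sub_sub_cancel]
    · rw [← e2, image_image, image_image, e2]
      simp only [sub_sub_cancel]

/-- A bipartite graph with an almost planar drawing, transported to `Fin n` and the complex plane;
each edge is directed from the first colour to the second. -/
theorem exists_oDrawing {V : Type*} {G : SimpleGraph V} (D : Drawing G) (hD : D.IsAlmostPlanar)
    {n : ℕ} (e : Fin n ≃ V) (P : Set (Fin n × Fin n)) (hP : ∀ p ∈ P, G.Adj (e p.1) (e p.2))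
    (hP' : ∀ p ∈ P, p.swap ∉ P) : Nonempty (ODrawing (Fin n) P) := by
  let ed : P → G.edgeSet := fun p => ⟨s(e p.1.1, e p.1.2), hP _ p.2⟩
  have hed : Function.Injective ed := by
    rintro ⟨⟨a, b⟩, hp⟩ ⟨⟨a', b'⟩, hq⟩ h
    have h := congrArg Subtype.val h
    simp only [ed, Sym2.eq_iff, e.injective.eq_iff] at h
    rcases h with ⟨rfl, rfl⟩ | ⟨rfl, rfl⟩
    · rfl
    · exact (hP' _ hp hq).elim
  have hinj := Complex.equivRealProdCLM.symm.injective
  have hc : ∀ p : P, ∃ cw : ℝ → ℂ, ContinuousOn cw (Icc 0 1) ∧ InjOn cw (Icc 0 1) ∧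
      cw 0 = Complex.equivRealProdCLM.symm (D.pos (e p.1.1)) ∧
      cw 1 = Complex.equivRealProdCLM.symm (D.pos (e p.1.2)) ∧
      cw '' Icc 0 1 = Complex.equivRealProdCLM.symm '' (D.curve (ed p) '' Icc 0 1) ∧
      cw '' Ioo 0 1 = Complex.equivRealProdCLM.symm '' (D.curve (ed p) '' Ioo 0 1) := by
    intro p
    obtain ⟨a, b, hab, h0, h1⟩ := D.curve_ends (ed p)
    refine exists_curve (D.curve_cont _) (D.curve_inj _) h0 h1 ?_
    simp only [ed, Sym2.eq_iff] at hab
    rcases hab with ⟨h, h'⟩ | ⟨h, h'⟩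
    · exact Or.inl ⟨by rw [h], by rw [h']⟩
    · exact Or.inr ⟨by rw [h], by rw [h']⟩
  choose c hc hi h0 h1 hcc hoo using hc
  have hcr : ∀ p q : P, p ≠ q → (c p '' Ioo 0 1 ∩ c q '' Ioo 0 1).Nonempty →
      D.Crosses (ed p) (ed q) := by
    rintro p q hpq ⟨z, hz, hz'⟩
    rw [hoo] at hz hz'
    obtain ⟨y, hy, rfl⟩ := hz
    obtain ⟨y', hy', h⟩ := hz'
    obtain rfl := hinj h
    exact ⟨fun h => hpq (hed h), y', hy, hy'⟩
  exact ⟨{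
    pos := fun v => Complex.equivRealProdCLM.symm (D.pos (e v))
    pos_inj := hinj.comp (D.pos_inj.comp e.injective)
    cv := c
    cont := hc
    inj := hi
    start := h0
    finish := h1
    no_vertex := by
      intro p t ht v h
      have hm : c p t ∈ c p '' Ioo 0 1 := ⟨t, ht, rfl⟩
      rw [hoo] at hm
      obtain ⟨_, ⟨t', ht', rfl⟩, hy⟩ := hm
      exact D.interior_no_vertex _ t' ht' _ (hinj (hy.trans h))
    finite_meet := by
      intro p q hpq
      rw [hcc, hcc, ← image_inter hinj]
      exact (D.finite_meet _ _ fun h => hpq (hed h)).image _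
    cross := fun p q r hpq hpr hq hr => hed (hD _ _ _ (hcr p q hpq hq) (hcr p r hpr hr)) }⟩

end BAP

/-- A bipartite almost planar simple graph on an odd number `v ≥ 5` of vertices has at
most `3v - 9` edges. -/
theorem bipartite_almostPlanar_edge_bound_odd {V : Type*} [Fintype V] (G : SimpleGraph V)
    (hcard : 5 ≤ Fintype.card V) (hodd : Odd (Fintype.card V))
    (hbip : G.Colorable 2) (hap : G.AlmostPlanar) :
    G.edgeSet.ncard ≤ 3 * Fintype.card V - 9 := by
  obtain ⟨D, hD⟩ := hap
  obtain ⟨C⟩ := hbip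
  have hC : ∀ a b, G.Adj a b → (decide (C a = 1)) ≠ (decide (C b = 1)) := by
    intro a b h
    have := C.valid h
    generalize C a = p at *
    generalize C b = q at *
    revert p q
    decide
  let e := (Fintype.equivFin V).symm
  let P : Set (Fin (Fintype.card V) × Fin (Fintype.card V)) :=
    {p | G.Adj (e p.1) (e p.2) ∧ decide (C (e p.1) = 1) = false ∧ decide (C (e p.2) = 1) = true}
  obtain ⟨D'⟩ := BAP.exists_oDrawing D hD e P (fun p hp => hp.1) (fun p hp hq => by
    have h1 := hp.2.1
    rw [show decide (C (e p.1) = 1) = true from hq.2.2] at h1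
    exact Bool.noConfusion h1)
  have h := (BAP.edge_bound _ _ (fun v => decide (C (e v) = 1)) P D' (fun p hp => hp.2)
    (Fintype.card_fin _)).2 hodd hcard
  have hle : G.edgeSet.ncard ≤ P.ncard := by
    have hsub : G.edgeSet ⊆ (fun p => s(e p.1, e p.2)) '' P := by
      intro z
      induction z using Sym2.ind with
      | _ a b =>
      intro hab
      have hab : G.Adj a b := hab
      have hne := hC a b hab
      by_cases ha : decide (C a = 1) = false
      · refine ⟨(e.symm a, e.symm b), ?_, by simp⟩
        refine ⟨by simpa using hab, by simpa using ha, ?_⟩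
        rw [ha] at hne
        simp only [Equiv.apply_symm_apply]
        exact Bool.eq_true_of_not_eq_false hne.symm
      · refine ⟨(e.symm b, e.symm a), ?_, by simp [Sym2.eq_swap]⟩
        rw [Bool.not_eq_false] at ha
        refine ⟨by simpa using hab.symm, ?_, by simpa using ha⟩
        rw [ha] at hne
        simp only [Equiv.apply_symm_apply]
        exact Bool.eq_false_of_not_eq_true hne.symm
    exact (ncard_le_ncard hsub (toFinite _)).trans (ncard_image_le (toFinite _))
  omega
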